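/- Assume, in addition to the standing assumptions for existence, that r ↦ g(t,x,r) is decreasing for every t ≥ 0 and x ∈ Bd(D), and that there is a continuous function m : [0,∞) → [0,∞) with m(0) = 0 such that |f(t,x,r,p) − f(t,y,r,p)| ≤ m(|x − y|(1 + |p|)) for all t ≥ 0, x, y ∈ cl(D), r ∈ ℝ, p ∈ ℝ^d. Then the viscosity solution of the parabolic variational inequality ∂u/∂t − L_t u + ∂φ(u) ∋ f(t,x,u,(∇u σ)(t,x)) on (0,∞)×D, ∂u/∂n + ∂ψ(u) ∋ g(t,x,u) on (0,∞)×Bd(D), u(0,x) = h(x), is unique. -/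

import Mathlib

open Filter Topology Matrix

noncomputable section

/-- Euclidean dot product on `Fin d → ℝ`. -/
def dotp {d : ℕ} (v w : Fin d → ℝ) : ℝ := ∑ i, v i * w i

/-- Euclidean norm on `Fin d → ℝ`. -/
def eunorm {d : ℕ} (v : Fin d → ℝ) : ℝ := Real.sqrt (∑ i, (v i)^2)

/-- Frobenius norm of a matrix. -/
def matNorm {d : ℕ} (M : Matrix (Fin d) (Fin d) ℝ) : ℝ :=
  Real.sqrt (∑ i, ∑ j, (M i j)^2)

/-- Gradient vector of a real function on `Fin d → ℝ`. -/
def gradVec {d : ℕ} (ℓ : (Fin d → ℝ) → ℝ) (x : Fin d → ℝ) : Fin d → ℝ :=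
  fun i => fderiv ℝ ℓ x (Pi.single i 1)

/-- Subdifferential of a proper convex function `φ : ℝ → EReal`. -/
def subd (φ : ℝ → EReal) (x : ℝ) : Set ℝ :=
  {v | ∀ y : ℝ, ((v * (y - x) : ℝ) : EReal) + φ x ≤ φ y}

/-- `φ : ℝ → (−∞,+∞]` is proper, convex and lower semicontinuous. -/
def ProperConvexLsc (φ : ℝ → EReal) : Prop :=
  (∃ r : ℝ, φ r ≠ ⊤) ∧ (∀ r : ℝ, φ r ≠ ⊥) ∧ LowerSemicontinuous φ ∧
    ∀ x y a b : ℝ, 0 ≤ a → 0 ≤ b → a + b = 1 →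
      φ (a * x + b * y) ≤ (a : EReal) * φ x + (b : EReal) * φ y

/-- Left derivative of a convex `φ : ℝ → EReal` (the limit as `h ↓ 0` of the
difference quotients `(φ(y) − φ(y−h))/h`, which is their supremum). -/
def leftD (φ : ℝ → EReal) (y : ℝ) : EReal :=
  ⨆ h : Set.Ioi (0:ℝ), (((1 : ℝ)/(h : ℝ)) : EReal) * (φ y - φ (y - (h:ℝ)))

/-- Right derivative of a convex `φ : ℝ → EReal` (the limit as `h ↓ 0` of the
difference quotients `(φ(y+h) − φ(y))/h`, which is their infimum). -/
def rightD (φ : ℝ → EReal) (y : ℝ) : EReal :=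
  ⨅ h : Set.Ioi (0:ℝ), (((1 : ℝ)/(h : ℝ)) : EReal) * (φ (y + (h:ℝ)) - φ y)

/-- `(p,q,X)` belongs to the parabolic superjet `P^{2,+}u(t,x)` relative to
`[0,∞) × clD`. -/
def InSuperjet {d : ℕ} (clD : Set (Fin d → ℝ)) (u : ℝ → (Fin d → ℝ) → ℝ)
    (t : ℝ) (x : Fin d → ℝ) (p : ℝ) (q : Fin d → ℝ)
    (X : Matrix (Fin d) (Fin d) ℝ) : Prop :=
  X.IsSymm ∧
  ∃ o : ℝ → ℝ, ContinuousOn o (Set.Ici 0) ∧ o 0 = 0 ∧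
    Tendsto (fun r => o r / r) (𝓝[>] (0:ℝ)) (𝓝 0) ∧
    ∃ δ > (0:ℝ), ∀ s : ℝ, 0 ≤ s → ∀ y ∈ clD,
      |s - t| < δ → eunorm (y - x) < δ →
      u s y ≤ u t x + p * (s - t) + dotp q (y - x)
        + (1/2) * dotp (X.mulVec (y - x)) (y - x)
        + o (|s - t| + (eunorm (y - x))^2)

/-- `(p,q,X)` belongs to the parabolic subjet `P^{2,−}u(t,x)` relative to
`[0,∞) × clD`. -/
def InSubjet {d : ℕ} (clD : Set (Fin d → ℝ)) (u : ℝ → (Fin d → ℝ) → ℝ)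
    (t : ℝ) (x : Fin d → ℝ) (p : ℝ) (q : Fin d → ℝ)
    (X : Matrix (Fin d) (Fin d) ℝ) : Prop :=
  X.IsSymm ∧
  ∃ o : ℝ → ℝ, ContinuousOn o (Set.Ici 0) ∧ o 0 = 0 ∧
    Tendsto (fun r => o r / r) (𝓝[>] (0:ℝ)) (𝓝 0) ∧
    ∃ δ > (0:ℝ), ∀ s : ℝ, 0 ≤ s → ∀ y ∈ clD,
      |s - t| < δ → eunorm (y - x) < δ →
      u t x + p * (s - t) + dotp q (y - x)
        + (1/2) * dotp (X.mulVec (y - x)) (y - x)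
        + o (|s - t| + (eunorm (y - x))^2) ≤ u s y

/-- `V(t,x,p,q,X) = p − ½Tr((σσ*)(t,x)X) − ⟨b(t,x),q⟩ − f(t,x,u(t,x),qσ(t,x))`. -/
def Vop {d : ℕ} (b : ℝ → (Fin d → ℝ) → (Fin d → ℝ))
    (σ : ℝ → (Fin d → ℝ) → Matrix (Fin d) (Fin d) ℝ)
    (f : ℝ → (Fin d → ℝ) → ℝ → (Fin d → ℝ) → ℝ)
    (u : ℝ → (Fin d → ℝ) → ℝ)
    (t : ℝ) (x : Fin d → ℝ) (p : ℝ) (q : Fin d → ℝ)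
    (X : Matrix (Fin d) (Fin d) ℝ) : ℝ :=
  p - (1/2) * Matrix.trace (σ t x * (σ t x)ᵀ * X) - dotp (b t x) q
    - f t x (u t x) (Matrix.vecMul q (σ t x))

/-- Viscosity subsolution of the parabolic variational inequality. -/
def IsViscSubsolution {d : ℕ} (ℓ : (Fin d → ℝ) → ℝ)
    (b : ℝ → (Fin d → ℝ) → (Fin d → ℝ))
    (σ : ℝ → (Fin d → ℝ) → Matrix (Fin d) (Fin d) ℝ)
    (f : ℝ → (Fin d → ℝ) → ℝ → (Fin d → ℝ) → ℝ)
    (g : ℝ → (Fin d → ℝ) → ℝ → ℝ)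
    (h : (Fin d → ℝ) → ℝ)
    (φ ψ : ℝ → EReal)
    (u : ℝ → (Fin d → ℝ) → ℝ) : Prop :=
  ContinuousOn (fun tx : ℝ × (Fin d → ℝ) => u tx.1 tx.2)
      (Set.Ici 0 ×ˢ {x | ℓ x ≤ 0}) ∧
  (∀ x, ℓ x ≤ 0 → u 0 x = h x) ∧
  (∀ t > (0:ℝ), ∀ x, ℓ x ≤ 0 → φ (u t x) ≠ ⊤) ∧
  (∀ t > (0:ℝ), ∀ x, ℓ x = 0 → ψ (u t x) ≠ ⊤) ∧
  (∀ t > (0:ℝ), ∀ x, ℓ x ≤ 0 → ∀ p q X,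
    InSuperjet {x | ℓ x ≤ 0} u t x p q X →
      (ℓ x < 0 →
        ((Vop b σ f u t x p q X : ℝ) : EReal) + leftD φ (u t x) ≤ 0) ∧
      (ℓ x = 0 →
        (((Vop b σ f u t x p q X : ℝ) : EReal) + leftD φ (u t x) ≤ 0 ∨
          ((dotp (gradVec ℓ x) q - g t x (u t x) : ℝ) : EReal)
            + leftD ψ (u t x) ≤ 0)))

/-- Viscosity supersolution of the parabolic variational inequality. -/
def IsViscSupersolution {d : ℕ} (ℓ : (Fin d → ℝ) → ℝ)
    (b : ℝ → (Fin d → ℝ) → (Fin d → ℝ))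
    (σ : ℝ → (Fin d → ℝ) → Matrix (Fin d) (Fin d) ℝ)
    (f : ℝ → (Fin d → ℝ) → ℝ → (Fin d → ℝ) → ℝ)
    (g : ℝ → (Fin d → ℝ) → ℝ → ℝ)
    (h : (Fin d → ℝ) → ℝ)
    (φ ψ : ℝ → EReal)
    (u : ℝ → (Fin d → ℝ) → ℝ) : Prop :=
  ContinuousOn (fun tx : ℝ × (Fin d → ℝ) => u tx.1 tx.2)
      (Set.Ici 0 ×ˢ {x | ℓ x ≤ 0}) ∧
  (∀ x, ℓ x ≤ 0 → u 0 x = h x) ∧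
  (∀ t > (0:ℝ), ∀ x, ℓ x ≤ 0 → φ (u t x) ≠ ⊤) ∧
  (∀ t > (0:ℝ), ∀ x, ℓ x = 0 → ψ (u t x) ≠ ⊤) ∧
  (∀ t > (0:ℝ), ∀ x, ℓ x ≤ 0 → ∀ p q X,
    InSubjet {x | ℓ x ≤ 0} u t x p q X →
      (ℓ x < 0 →
        0 ≤ ((Vop b σ f u t x p q X : ℝ) : EReal) + rightD φ (u t x)) ∧
      (ℓ x = 0 →
        (0 ≤ ((Vop b σ f u t x p q X : ℝ) : EReal) + rightD φ (u t x) ∨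
          0 ≤ ((dotp (gradVec ℓ x) q - g t x (u t x) : ℝ) : EReal)
            + rightD ψ (u t x))))

/-!
Two solutions `u`, `v` are compared by doubling the space variable. The theorem on sums is obtained
by regularisation: a semiconvex and semiconcave function squeezed between the two sides of the
penalised inequality (a Lasry–Lions envelope) is `C^{1,1}`, so its gradient is Lipschitz and
Rademacher's theorem provides second-order expansions on a set of full measure, with no appeal to
Alexandrov's theorem or Jensen's lemma.

At a boundary point the penalty is tilted along `∇ℓ` with two slopes, one slightly above and one
slightly below a common value `κ` chosen between the boundary data of `u` and `v` (possible because
`g` and `-∂ψ` are decreasing); the Neumann alternative of the definition then fails on both sides,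
and only the parabolic inequalities are left to be compared. An exponential weight in time absorbs
the zeroth-order term of `f`.
-/

section QuadraticBounds

variable {H : Type*} [NormedAddCommGroup H] [NormedSpace ℝ H]

lemma hasFDerivAt_of_abs_sub_le_mul_sq {f : H → ℝ} {f' : H →L[ℝ] ℝ} {C : ℝ} {x : H}
    (h : ∀ y, |f y - f x - f' (y - x)| ≤ C * ‖y - x‖ ^ 2) : HasFDerivAt f f' x := by
  rw [hasFDerivAt_iff_isLittleO]
  have hO : (fun y => f y - f x - f' (y - x)) =O[𝓝 x] fun y => ‖y - x‖ ^ 2 :=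
    .of_bound C (.of_forall fun y => by simpa using h y)
  have ho : (fun y : H => ‖y - x‖ ^ 2) =o[𝓝 x] fun y => y - x :=
    (Asymptotics.isLittleO_norm_pow_id one_lt_two).comp_tendsto
      (tendsto_sub_nhds_zero_iff.2 tendsto_id)
  exact hO.trans_isLittleO ho

lemma lipschitzWith_of_abs_sub_le_mul_sq {f : H → ℝ} {D : H → H →L[ℝ] ℝ} {C : NNReal}
    (h : ∀ x y, |f y - f x - D x (y - x)| ≤ C * ‖y - x‖ ^ 2) : LipschitzWith (6 * C) D := by
  refine LipschitzWith.of_dist_le_mul fun x y => ?_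
  rcases eq_or_ne x y with rfl | hxy
  · simp
  have hpos : 0 < ‖x - y‖ := norm_pos_iff.2 (sub_ne_zero.2 hxy)
  -- Compare the three expansions along the triangle `x, y, y + w` with `‖w‖ ≤ ‖x - y‖`.
  have hball : ∀ w ∈ Metric.closedBall (0 : H) ‖x - y‖,
      ‖(D x - D y) w‖ ≤ 6 * C * ‖x - y‖ ^ 2 := by
    intro w hw
    rw [mem_closedBall_zero_iff] at hw
    have hxy' := h x y
    have hyw := h y (y + w)
    have hxw := h x (y + w)
    have hsub : y + w - x = (y - x) + w := by abel
    have hnorm : ‖y + w - x‖ ≤ 2 * ‖x - y‖ := by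
      have := norm_add_le (y - x) w
      rw [norm_sub_rev y x] at this
      rw [hsub]
      linarith
    have hsq : (C : ℝ) * ‖y + w - x‖ ^ 2 ≤ C * (2 * ‖x - y‖) ^ 2 := by gcongr
    have hwsq : (C : ℝ) * ‖w‖ ^ 2 ≤ C * ‖x - y‖ ^ 2 := by gcongr
    have hadd : D x (y + w - x) = D x (y - x) + D x w := by rw [hsub, map_add]
    rw [hadd] at hxw
    rw [add_sub_cancel_left] at hyw
    rw [norm_sub_rev y x] at hxy'
    rw [Real.norm_eq_abs, _root_.sub_apply]
    rw [abs_le] at *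
    constructor <;> linarith
  rw [dist_eq_norm, dist_eq_norm]
  calc ‖D x - D y‖ ≤ 6 * C * ‖x - y‖ ^ 2 / ‖x - y‖ :=
        ContinuousLinearMap.opNorm_bound_of_ball_bound hpos _ _ hball
    _ = ↑(6 * C) * ‖x - y‖ := by push_cast; field_simp

lemma eventually_abs_taylor_two_le {f : H → ℝ} {D : H → H →L[ℝ] ℝ}
    (hD : ∀ x, HasFDerivAt f (D x) x) {x : H} {A : H →L[ℝ] H →L[ℝ] ℝ} (hA : HasFDerivAt D A x)
    {κ : ℝ} (hκ : 0 < κ) :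
    ∀ᶠ h in 𝓝 (0 : H), |f (x + h) - f x - D x h - 1 / 2 * A h h| ≤ κ * ‖h‖ ^ 2 := by
  obtain ⟨δ, hδ, hsmall⟩ := Metric.eventually_nhds_iff.1
    (Asymptotics.isLittleO_iff.1 hA.isLittleO hκ)
  filter_upwards [Metric.ball_mem_nhds (0 : H) hδ] with h hh
  rw [mem_ball_zero_iff] at hh
  have hderiv : ∀ s ∈ Set.Icc (0 : ℝ) 1, HasDerivWithinAt
      (fun s : ℝ => f (x + s • h) - s * D x h - 1 / 2 * s ^ 2 * A h h)
      (D (x + s • h) h - D x h - s * A h h) (Set.Icc 0 1) s := by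
    intro s _
    have hline : HasDerivAt (fun s : ℝ => x + s • h) h s := by
      simpa using ((hasDerivAt_id s).smul_const h).const_add x
    have hlin : HasDerivAt (fun s : ℝ => s * D x h) (D x h) s := by
      simpa using (hasDerivAt_id s).mul_const (D x h)
    have hquad : HasDerivAt (fun s : ℝ => 1 / 2 * s ^ 2 * A h h) (s * A h h) s := by
      refine ((((hasDerivAt_id s).pow 2).const_mul (1 / 2)).mul_const (A h h)).congr_deriv ?_
      simp
    exact ((((hD _).comp_hasDerivAt s hline).sub hlin).sub hquad).hasDerivWithinAt
  have hbound : ∀ s ∈ Set.Ico (0 : ℝ) 1,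
      ‖D (x + s • h) h - D x h - s * A h h‖ ≤ κ * ‖h‖ ^ 2 := by
    intro s hs
    have hsh : ‖s • h‖ ≤ ‖h‖ := by
      rw [norm_smul, Real.norm_of_nonneg hs.1]
      exact mul_le_of_le_one_left (norm_nonneg _) hs.2.le
    have hA := hsmall (y := x + s • h) (by simpa using hsh.trans_lt hh)
    rw [add_sub_cancel_left] at hA
    calc ‖D (x + s • h) h - D x h - s * A h h‖ = ‖(D (x + s • h) - D x - A (s • h)) h‖ := by simp
      _ ≤ ‖D (x + s • h) - D x - A (s • h)‖ * ‖h‖ := ContinuousLinearMap.le_opNorm _ _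
      _ ≤ κ * ‖h‖ * ‖h‖ := by gcongr; exact hA.trans (by gcongr)
      _ = κ * ‖h‖ ^ 2 := by ring
  have hmvt := norm_image_sub_le_of_norm_deriv_le_segment_01' hderiv hbound
  simp only [one_smul, zero_smul, add_zero, Real.norm_eq_abs] at hmvt
  refine le_trans (le_of_eq ?_) hmvt
  congr 1; ring

lemma exists_differentiableAt_of_ball_subset_image [FiniteDimensional ℝ H]
    {F : Type*} [NormedAddCommGroup F] [NormedSpace ℝ F] [FiniteDimensional ℝ F]
    (hdim : Module.finrank ℝ F = Module.finrank ℝ H)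
    {T : H → F} {K : NNReal} (hT : LipschitzWith K T) {Z : Set H} {r : ℝ}
    (hr : 0 < r) {c : F} (hZ : Metric.ball c r ⊆ T '' Z) : ∃ z ∈ Z, DifferentiableAt ℝ T z := by
  borelize H F
  set μH := MeasureTheory.Measure.hausdorffMeasure (X := H) (Module.finrank ℝ H : ℝ)
  set μF := MeasureTheory.Measure.hausdorffMeasure (X := F) (Module.finrank ℝ H : ℝ)
  have : μH.IsAddHaarMeasure := MeasureTheory.isAddHaarMeasure_hausdorffMeasure
  have : μF.IsAddHaarMeasure := by
    simpa only [μF, ← hdim] using MeasureTheory.isAddHaarMeasure_hausdorffMeasure (E := F)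
  by_contra! hcon
  have hnull : μH Z = 0 := MeasureTheory.measure_mono_null hcon hT.ae_differentiableAt
  have himage : μF (T '' Z) = 0 := by
    have := (hT.lipschitzOnWith (s := Z)).hausdorffMeasure_image_le
      (Nat.cast_nonneg (Module.finrank ℝ H))
    rwa [show MeasureTheory.Measure.hausdorffMeasure _ Z = 0 from hnull, mul_zero,
      nonpos_iff_eq_zero] at this
  exact (Metric.measure_ball_pos μF c hr).ne' (MeasureTheory.measure_mono_null hZ himage)

end QuadraticBounds

lemma sub_le_of_convexOn_of_forall_add_le {E : Type*} [NormedAddCommGroup E] [NormedSpace ℝ E]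
    {g q : E → ℝ} {q' : E →L[ℝ] ℝ} {z : E} (hg : ConvexOn ℝ Set.univ g)
    (hq : HasFDerivAt q q' z) (hmin : ∀ y, g z + q z ≤ g y + q y) (y : E) :
    g z - q' (y - z) ≤ g y := by
  have hline : HasDerivAt (fun t : ℝ => z + t • (y - z)) (y - z) 0 := by
    simpa using ((hasDerivAt_id (0 : ℝ)).smul_const (y - z)).const_add z
  have hderiv : HasDerivAt (fun t : ℝ => q (z + t • (y - z))) (q' (y - z)) 0 :=
    HasFDerivAt.comp_hasDerivAt (0 : ℝ) (by simpa using hq) hline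
  have hslope := hderiv.tendsto_slope_zero_right
  have hle : g z - g y ≤ q' (y - z) := by
    refine ge_of_tendsto hslope ?_
    filter_upwards [Ioo_mem_nhdsGT (zero_lt_one : (0 : ℝ) < 1)] with t ht
    have hconv := hg.2 (Set.mem_univ z) (Set.mem_univ y) (sub_nonneg.2 ht.2.le) ht.1.le
      (sub_add_cancel 1 t)
    have hpt : (1 - t) • z + t • y = z + t • (y - z) := by module
    have := hmin (z + t • (y - z))
    simp only [hpt, smul_eq_mul] at hconv
    simp only [zero_add, zero_smul, add_zero, smul_eq_mul]
    rw [← div_eq_inv_mul, le_div_iff₀ ht.1]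
    linarith
  linarith

section SupConvolution

variable {E : Type*} [NormedAddCommGroup E]

/-- `S` is the sup-convolution `z ↦ max_{x ∈ K} (U x - Λ/2 * ‖x - z‖²)` of `U` over `K`; the
maximum is required to be attained. -/
def IsSupConvolution (K : Set E) (U : E → ℝ) (Λ : ℝ) (S : E → ℝ) : Prop :=
  ∀ z, IsGreatest ((fun x => U x - Λ / 2 * ‖x - z‖ ^ 2) '' K) (S z)

namespace IsSupConvolution

variable {K : Set E} {U S : E → ℝ} {Λ : ℝ}

lemma le (hS : IsSupConvolution K U Λ S) (z : E) {x : E} (hx : x ∈ K) :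
    U x - Λ / 2 * ‖x - z‖ ^ 2 ≤ S z :=
  (hS z).2 ⟨x, hx, rfl⟩

lemma exists_eq (hS : IsSupConvolution K U Λ S) (z : E) :
    ∃ x ∈ K, S z = U x - Λ / 2 * ‖x - z‖ ^ 2 := by
  obtain ⟨x, hx, h⟩ := (hS z).1
  exact ⟨x, hx, h.symm⟩

lemma le_infConvolution (hS : IsSupConvolution K U Λ S) (hΛ : 0 ≤ Λ) {x : E} (hx : x ∈ K)
    (z ξ : E) : U x - Λ * ‖x - ξ‖ ^ 2 ≤ S z + Λ * ‖z - ξ‖ ^ 2 := by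
  have htri : ‖x - z‖ ^ 2 ≤ (‖x - ξ‖ + ‖z - ξ‖) ^ 2 := by
    have := norm_sub_le (x - ξ) (z - ξ)
    rw [sub_sub_sub_cancel_right] at this
    gcongr
  nlinarith [hS.le z hx, sq_nonneg (‖x - ξ‖ - ‖z - ξ‖)]

end IsSupConvolution

lemma exists_isSupConvolution {K : Set E} (hK : IsCompact K) (hne : K.Nonempty) {U : E → ℝ}
    (hU : ContinuousOn U K) (Λ : ℝ) : ∃ S, IsSupConvolution K U Λ S :=
  ⟨fun z => sSup ((fun x => U x - Λ / 2 * ‖x - z‖ ^ 2) '' K), fun z =>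
    (hK.image_of_continuousOn (by fun_prop)).isGreatest_sSup (hne.image _)⟩

end SupConvolution

section QuadraticEnvelope

variable {E : Type*} [NormedAddCommGroup E] [InnerProductSpace ℝ E]

namespace IsSupConvolution

variable {K : Set E} {U S : E → ℝ} {Λ : ℝ}

lemma convexOn_add_sq (hS : IsSupConvolution K U Λ S) :
    ConvexOn ℝ Set.univ fun z => S z + Λ / 2 * ‖z‖ ^ 2 := by
  -- It is a supremum of the affine functions `z ↦ U x - Λ/2 * ‖x‖² + Λ * ⟪x, z⟫`.
  have affine (x z : E) : U x - Λ / 2 * ‖x - z‖ ^ 2 + Λ / 2 * ‖z‖ ^ 2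
      = U x - Λ / 2 * ‖x‖ ^ 2 + Λ * inner ℝ x z := by
    rw [norm_sub_sq_real]; ring
  refine ⟨convex_univ, fun z _ z' _ a b ha hb hab => ?_⟩
  obtain ⟨x, hx, hxS⟩ := hS.exists_eq (a • z + b • z')
  have hz := mul_le_mul_of_nonneg_left (hS.le z hx) ha
  have hz' := mul_le_mul_of_nonneg_left (hS.le z' hx) hb
  have hza := congrArg (a * ·) (affine x z)
  have hzb := congrArg (b * ·) (affine x z')
  simp only [smul_eq_mul]
  rw [hxS, affine, inner_add_right, inner_smul_right, inner_smul_right]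
  obtain rfl : b = 1 - a := by linarith
  linarith

lemma continuous [FiniteDimensional ℝ E] (hS : IsSupConvolution K U Λ S) : Continuous S := by
  have hconv := continuousOn_univ.1 (hS.convexOn_add_sq.continuousOn isOpen_univ)
  have hsq : Continuous fun z : E => Λ / 2 * ‖z‖ ^ 2 := by fun_prop
  exact (hconv.sub hsq).congr fun z => by simp

lemma exists_forall_add_sq_le [FiniteDimensional ℝ E] (hS : IsSupConvolution K U Λ S)
    (hΛ : 0 < Λ) (ξ : E) : ∃ z, ∀ z', S z + Λ * ‖z - ξ‖ ^ 2 ≤ S z' + Λ * ‖z' - ξ‖ ^ 2 := by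
  have hcont := hS.continuous
  obtain ⟨x, hx, -⟩ := hS.exists_eq ξ
  refine (by fun_prop : Continuous fun z => S z + Λ * ‖z - ξ‖ ^ 2).exists_forall_le ?_
  -- `S z ≥ U x - Λ/2 * ‖x - z‖²` and `‖x - z‖² ≤ 3 * ‖x - ξ‖² + 3/2 * ‖z - ξ‖²`.
  refine tendsto_atTop_mono (f := fun z => U x - 3 / 2 * Λ * ‖x - ξ‖ ^ 2 + Λ / 4 * ‖z - ξ‖ ^ 2)
    (fun z => ?_) (tendsto_atTop_add_const_left _ _
      (((tendsto_pow_atTop two_ne_zero).comp ?_).const_mul_atTop (by positivity)))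
  · have htri : ‖x - z‖ ^ 2 ≤ (‖x - ξ‖ + ‖z - ξ‖) ^ 2 := by
      have := norm_sub_le (x - ξ) (z - ξ)
      rw [sub_sub_sub_cancel_right] at this
      gcongr
    nlinarith [hS.le z hx, sq_nonneg (2 * ‖x - ξ‖ - ‖z - ξ‖)]
  · simpa [dist_eq_norm] using tendsto_dist_right_cocompact_atTop ξ

end IsSupConvolution

/-- `F` is a `C^{1,1}` function with gradient `D` lying between the sup-convolution
`ξ ↦ max_{x ∈ K} (U x - Λ * ‖x - ξ‖²)` of `U` and the lower envelope of the paraboloids of opening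
`Λ` above that sup-convolution. The Lasry–Lions inf-sup-convolution provides such an `F`. -/
structure IsQuadraticEnvelope (K : Set E) (U : E → ℝ) (Λ : ℝ) (F : E → ℝ)
    (D : E → E →L[ℝ] ℝ) : Prop where
  abs_sub_le : ∀ x y, |F y - F x - D x (y - x)| ≤ Λ * ‖y - x‖ ^ 2
  le : ∀ x ∈ K, ∀ ξ, U x - Λ * ‖x - ξ‖ ^ 2 ≤ F ξ
  le_of_paraboloid : ∀ ξ r, ∀ p : E →L[ℝ] ℝ,
    (∀ x ∈ K, ∀ ξ', U x - Λ * ‖x - ξ'‖ ^ 2 ≤ r + p (ξ' - ξ) + Λ * ‖ξ' - ξ‖ ^ 2) → F ξ ≤ r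

namespace IsSupConvolution

variable {K : Set E} {U S : E → ℝ} {Λ : ℝ}

lemma le_of_isMin (hS : IsSupConvolution K U Λ S) {ξ z : E}
    (hz : ∀ z', S z + Λ * ‖z - ξ‖ ^ 2 ≤ S z' + Λ * ‖z' - ξ‖ ^ 2) (z' : E) :
    S z + 2 * Λ * inner ℝ (ξ - z) (z' - z) - Λ / 2 * ‖z' - z‖ ^ 2 ≤ S z' := by
  have hq : HasFDerivAt (fun z : E => Λ * ‖z - ξ‖ ^ 2 - Λ / 2 * ‖z‖ ^ 2)
      (Λ • (2 : ℝ) • innerSL ℝ (z - ξ) - (Λ / 2) • (2 : ℝ) • innerSL ℝ z) z := by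
    refine ((((hasFDerivAt_id z).sub_const ξ).norm_sq.const_mul Λ).sub
      ((hasFDerivAt_id z).norm_sq.const_mul (Λ / 2))).congr_fderiv ?_
    ext
    simp
  have := sub_le_of_convexOn_of_forall_add_le hS.convexOn_add_sq hq
    (fun y => by linarith [hz y]) z'
  have hexp : ‖z'‖ ^ 2 = ‖z‖ ^ 2 + 2 * inner ℝ z (z' - z) + ‖z' - z‖ ^ 2 := by
    rw [← norm_add_sq_real, add_sub_cancel]
  simp only [_root_.sub_apply, _root_.smul_apply, innerSL_apply_apply, smul_eq_mul,
    inner_sub_left z ξ] at this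
  rw [inner_sub_left ξ z]
  linarith [hexp, congrArg (Λ / 2 * ·) hexp]

lemma abs_infConvolution_sub_le (hS : IsSupConvolution K U Λ S) (hΛ : 0 ≤ Λ) {Z : E → E}
    (hZ : ∀ ξ z, S (Z ξ) + Λ * ‖Z ξ - ξ‖ ^ 2 ≤ S z + Λ * ‖z - ξ‖ ^ 2) (ξ ξ' : E) :
    |S (Z ξ') + Λ * ‖Z ξ' - ξ'‖ ^ 2 - (S (Z ξ) + Λ * ‖Z ξ - ξ‖ ^ 2)
      - ((2 * Λ) • innerSL ℝ (ξ - Z ξ)) (ξ' - ξ)| ≤ Λ * ‖ξ' - ξ‖ ^ 2 := by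
  have hupper := hZ ξ' (Z ξ)
  have hlower := hS.le_of_isMin (hZ ξ) (Z ξ')
  simp only [_root_.smul_apply, innerSL_apply_apply, smul_eq_mul]
  rw [norm_sub_rev (Z ξ) ξ]
  set d := ξ - Z ξ
  set e := ξ' - ξ
  set w := Z ξ' - Z ξ
  have hde : Z ξ - ξ' = -(d + e) := by simp only [d, e]; abel
  have hwde : Z ξ' - ξ' = w - (d + e) := by simp only [d, e, w]; abel
  rw [hde, norm_neg, norm_add_sq_real] at hupper
  rw [hwde, norm_sub_sq_real, norm_add_sq_real, inner_add_right, real_inner_comm d w] at hupper ⊢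
  have hsq : 0 ≤ Λ * ‖w - (2 : ℝ) • e‖ ^ 2 := by positivity
  rw [norm_sub_sq_real, inner_smul_right, norm_smul, Real.norm_ofNat] at hsq
  rw [abs_le]
  constructor <;> linarith

lemma infConvolution_le_of_paraboloid [CompleteSpace E] (hS : IsSupConvolution K U Λ S)
    (hΛ : 0 < Λ) {ξ z : E} (hz : ∀ z', S z + Λ * ‖z - ξ‖ ^ 2 ≤ S z' + Λ * ‖z' - ξ‖ ^ 2) {r : ℝ}
    {p : E →L[ℝ] ℝ} (hp : ∀ x ∈ K, ∀ ξ', U x - Λ * ‖x - ξ'‖ ^ 2 ≤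
      r + p (ξ' - ξ) + Λ * ‖ξ' - ξ‖ ^ 2) : S z + Λ * ‖z - ξ‖ ^ 2 ≤ r := by
  -- Test the minimum at the vertex `ξ - w` of the paraboloid, whose value there is attained at
  -- some `x`, and evaluate the paraboloid bound half-way between `x` and the vertex.
  obtain ⟨w, rfl⟩ : ∃ w : E, p = (2 * Λ) • innerSL ℝ w :=
    ⟨(2 * Λ)⁻¹ • (InnerProductSpace.toDual ℝ E).symm p, by
      ext v
      simp [InnerProductSpace.toDual_symm_apply]
      field_simp⟩
  obtain ⟨x, hx, hxS⟩ := hS.exists_eq (ξ - w)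
  refine (hz (ξ - w)).trans ?_
  obtain ⟨y, rfl⟩ : ∃ y, x = ξ - w + (2 : ℝ) • y := ⟨(1 / 2 : ℝ) • (x - (ξ - w)), by module⟩
  have hmid := hp _ hx (ξ - w + y)
  have hxmid : ξ - w + (2 : ℝ) • y - (ξ - w + y) = y := by module
  have hmidξ : ξ - w + y - ξ = y - w := by abel
  rw [hxmid, hmidξ, norm_sub_sq_real, _root_.smul_apply, innerSL_apply_apply, inner_sub_right,
    real_inner_self_eq_norm_sq, smul_eq_mul, real_inner_comm w y] at hmid
  rw [hxS, add_sub_cancel_left, norm_smul, sub_sub_cancel_left, norm_neg, Real.norm_ofNat]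
  linarith

end IsSupConvolution

lemma exists_isQuadraticEnvelope [FiniteDimensional ℝ E] {K : Set E} (hK : IsCompact K)
    (hne : K.Nonempty) {U : E → ℝ} (hU : ContinuousOn U K) {Λ : ℝ} (hΛ : 0 < Λ) :
    ∃ F D, IsQuadraticEnvelope K U Λ F D := by
  obtain ⟨S, hS⟩ := exists_isSupConvolution hK hne hU Λ
  choose Z hZ using hS.exists_forall_add_sq_le hΛ
  exact ⟨fun ξ => S (Z ξ) + Λ * ‖Z ξ - ξ‖ ^ 2, fun ξ => (2 * Λ) • innerSL ℝ (ξ - Z ξ),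
    hS.abs_infConvolution_sub_le hΛ.le hZ, fun x hx ξ => hS.le_infConvolution hΛ.le hx _ ξ,
    fun ξ _ _ hp => hS.infConvolution_le_of_paraboloid hΛ (hZ ξ) hp⟩

end QuadraticEnvelope

section SqForm

variable {E F : Type*} [NormedAddCommGroup E] [NormedSpace ℝ E] [NormedAddCommGroup F]
  [InnerProductSpace ℝ F]

/-- The bilinear form whose quadratic form is `v ↦ ‖L v‖²`; the quadratic test functions of the
comparison proof are combinations of such forms. -/
def sqForm (L : E →L[ℝ] F) : E →L[ℝ] E →L[ℝ] ℝ := (innerSL ℝ : F →L[ℝ] F →L[ℝ] ℝ).bilinearComp L L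

lemma sqForm_self (L : E →L[ℝ] F) (v : E) : sqForm L v v = ‖L v‖ ^ 2 :=
  real_inner_self_eq_norm_sq _

end SqForm

section Superjets

variable {E : Type*} [NormedAddCommGroup E] [NormedSpace ℝ E]

/-- `(p, A)` is a second order superjet of `U` at `x` relative to `K`, as in the definition of the
limiting second order superjets in the theory of viscosity solutions. The quadratic form of the
superjet is `v ↦ A v v`, and `A` need not be symmetric. -/
def HasSuperjetWithinAt (U : E → ℝ) (p : E →L[ℝ] ℝ) (A : E →L[ℝ] E →L[ℝ] ℝ) (K : Set E)
    (x : E) : Prop :=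
  ∀ κ > 0, ∀ᶠ y in 𝓝[K] x,
    U y ≤ U x + p (y - x) + 1 / 2 * A (y - x) (y - x) + κ * ‖y - x‖ ^ 2

lemma HasSuperjetWithinAt.of_translate {U : E → ℝ} {P p : E →L[ℝ] ℝ} {A : E →L[ℝ] E →L[ℝ] ℝ}
    {K : Set E} {a x : E}
    (h : HasSuperjetWithinAt (fun v => U (a + v) - U a - P v) p A ((a + ·) ⁻¹' K) x) :
    HasSuperjetWithinAt U (P + p) A K (a + x) := by
  intro κ hκ
  have htend : Tendsto (fun y => y - a) (𝓝[K] (a + x)) (𝓝[(a + ·) ⁻¹' K] x) := by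
    refine tendsto_nhdsWithin_iff.2 ⟨?_, ?_⟩
    · exact tendsto_nhdsWithin_of_tendsto_nhds
        (by simpa using (continuous_sub_right a).tendsto (a + x))
    · filter_upwards [self_mem_nhdsWithin] with y hy
      simpa using hy
  filter_upwards [htend.eventually (h κ hκ)] with y hy
  rw [add_sub_cancel, sub_sub y a x] at hy
  have hP : P (y - a) = P x + P (y - (a + x)) := by rw [← map_add]; congr 1; abel
  rw [_root_.add_apply]
  linarith

lemma exists_bilin_self_le (R : E →L[ℝ] E →L[ℝ] ℝ) : ∃ β, 0 ≤ β ∧ ∀ z, R z z ≤ β * ‖z‖ ^ 2 :=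
  ⟨‖R‖, norm_nonneg R, fun z => by
    simpa only [sq, mul_assoc] using (le_abs_self _).trans (R.le_opNorm₂ z z)⟩

lemma hasFDerivAt_bilin_self (Q : E →L[ℝ] E →L[ℝ] ℝ) (z : E) :
    HasFDerivAt (fun z => Q z z) (Q z + Q.flip z) z := by
  refine ((Q.hasFDerivAt (x := z)).clm_apply (hasFDerivAt_id z)).congr_fderiv ?_
  ext
  simp

lemma hasFDerivAt_comp_slice {X : Type*} [NormedAddCommGroup X] [NormedSpace ℝ X]
    {T : X → X →L[ℝ] ℝ} {A : X →L[ℝ] X →L[ℝ] ℝ} {z : X} (hA : HasFDerivAt T A z) (L : E →L[ℝ] X)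
    (x : E) : HasFDerivAt (fun y => (T (z + L (y - x))).comp L) (A.bilinearComp L L) x := by
  have hline : HasFDerivAt (fun y => z + L (y - x)) L x :=
    (L.hasFDerivAt.comp x ((hasFDerivAt_id x).sub_const x)).const_add z
  have hAx : HasFDerivAt T A (z + L (x - x)) := by simpa using hA
  refine ((hAx.comp x hline).clm_comp (hasFDerivAt_const L x)).congr_fderiv ?_
  ext
  simp

lemma half_bilin_le_of_forall_le {W : E → ℝ} {D : E → E →L[ℝ] ℝ} {A Q : E →L[ℝ] E →L[ℝ] ℝ}
    {z : E} (hD : ∀ x, HasFDerivAt W (D x) x) (hA : HasFDerivAt D A z)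
    (hle : ∀ y, W y ≤ W z + D z (y - z) + Q (y - z) (y - z)) (v : E) :
    1 / 2 * A v v ≤ Q v v := by
  refine le_of_forall_pos_le_add fun κ hκ => ?_
  have hκ' : 0 < κ / (‖v‖ ^ 2 + 1) := by positivity
  have htend : Tendsto (fun t : ℝ => t • v) (𝓝[>] 0) (𝓝 0) :=
    tendsto_nhdsWithin_of_tendsto_nhds
      (by simpa using (continuous_id.smul continuous_const).tendsto (0 : ℝ) (f := (· • v)))
  obtain ⟨t, htaylor, ht⟩ := ((htend.eventually
    (eventually_abs_taylor_two_le hD hA hκ')).and self_mem_nhdsWithin).exists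
  have hmax := hle (z + t • v)
  rw [add_sub_cancel_left] at hmax
  have hlow := (abs_le.1 htaylor).1
  rw [norm_smul, mul_pow, Real.norm_eq_abs, sq_abs] at hlow
  simp only [map_smul, _root_.smul_apply, smul_eq_mul] at hmax hlow
  have hscaled : t ^ 2 * (1 / 2 * A v v) ≤ t ^ 2 * (Q v v + κ / (‖v‖ ^ 2 + 1) * ‖v‖ ^ 2) := by
    nlinarith
  have hsmall : κ / (‖v‖ ^ 2 + 1) * ‖v‖ ^ 2 ≤ κ := by
    rw [div_mul_eq_mul_div, div_le_iff₀ (by positivity)]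
    nlinarith
  linarith [le_of_mul_le_mul_left hscaled (pow_pos ht 2)]

end Superjets

section ContactPoints

variable {E : Type*} [NormedAddCommGroup E] [InnerProductSpace ℝ E]

lemma exists_forall_penalized_le [FiniteDimensional ℝ E] {K : Set E} (hK : IsCompact K)
    (h0 : 0 ∈ K) {u : E → ℝ} (hu : ContinuousOn u K) (hu0 : u 0 = 0)
    {R : E →L[ℝ] E →L[ℝ] ℝ} (hR : ∀ z, 0 ≤ R z z) {β : ℝ} (hβ : ∀ z, R z z ≤ β * ‖z‖ ^ 2)
    (hle : ∀ x ∈ K, u x ≤ R x x) {ρ s : ℝ} (hρ : 0 < ρ) (hρ1 : ρ ≤ 1) (hs : 0 < s)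
    {P : E →L[ℝ] ℝ} (hP : ‖P‖ < ρ * s) :
    ∃ ζ : E, ∃ x ∈ K, ‖ζ‖ ≤ s ∧ ‖x - ζ‖ ≤ s ∧ ∀ x' ∈ K, ∀ ζ',
      u x' - (2 * β + 1) * ‖x' - ζ'‖ ^ 2 - (2 * R ζ' ζ' + ρ * ‖ζ'‖ ^ 2) - P ζ' ≤
        u x - (2 * β + 1) * ‖x - ζ‖ ^ 2 - (2 * R ζ ζ + ρ * ‖ζ‖ ^ 2) - P ζ := by
  set Φ : E → E → ℝ := fun x ζ =>
    u x - (2 * β + 1) * ‖x - ζ‖ ^ 2 - (2 * R ζ ζ + ρ * ‖ζ‖ ^ 2) - P ζ with hΦ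
  -- `R (ζ + e) (ζ + e) ≤ 2 * R ζ ζ + 2 * R e e` with `e = x - ζ`, because `R ≥ 0`.
  have hbound : ∀ x ∈ K, ∀ ζ, Φ x ζ ≤ -‖x - ζ‖ ^ 2 - ρ * ‖ζ‖ ^ 2 + ‖P‖ * ‖ζ‖ := by
    intro x hx ζ
    have hux := hle x hx
    obtain ⟨e, rfl⟩ : ∃ e, x = ζ + e := ⟨x - ζ, by abel⟩
    have hpar := hR (ζ - e)
    have hPζ := neg_le_of_abs_le (P.le_opNorm ζ)
    simp only [map_add, map_sub, _root_.add_apply, _root_.sub_apply] at hux hpar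
    simp only [hΦ, add_sub_cancel_left]
    linarith [hβ e]
  have hcont : ContinuousOn (fun q : E × E => Φ q.1 q.2) (K ×ˢ Metric.closedBall 0 s) := by
    have hu₁ : ContinuousOn (fun q : E × E => u q.1) (K ×ˢ Metric.closedBall 0 s) :=
      hu.comp continuousOn_fst fun q hq => hq.1
    exact ((hu₁.sub (by fun_prop)).sub (by fun_prop)).sub (by fun_prop)
  obtain ⟨⟨x, ζ⟩, ⟨hx, hζ⟩, hmax⟩ := (hK.prod (isCompact_closedBall _ _)).exists_isMaxOn
    ⟨(0, 0), h0, by simp [hs.le]⟩ hcont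
  rw [mem_closedBall_zero_iff] at hζ
  have hpos : 0 ≤ Φ x ζ := by
    simpa [hΦ, hu0] using hmax (show ((0 : E), (0 : E)) ∈ _ from ⟨h0, by simp [hs.le]⟩)
  refine ⟨ζ, x, hx, hζ, ?_, fun x' hx' ζ' => ?_⟩
  · refine (abs_le_of_sq_le_sq' ?_ hs.le).2
    have hPs : ‖P‖ ≤ s := hP.le.trans (mul_le_of_le_one_left hs.le hρ1)
    nlinarith [hbound x hx ζ, hPs, norm_nonneg P, norm_nonneg ζ, sq_nonneg ‖ζ‖]
  · rcases le_or_gt ‖ζ'‖ s with hζ' | hζ'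
    · exact hmax (show (x', ζ') ∈ _ from ⟨hx', by simpa using hζ'⟩)
    · refine le_trans ?_ hpos
      have hPρ : ‖P‖ ≤ ρ * ‖ζ'‖ := hP.le.trans (by gcongr)
      nlinarith [hbound x' hx' ζ', norm_nonneg ζ', sq_nonneg ‖x' - ζ'‖]

namespace IsQuadraticEnvelope

variable {K : Set E} {U W : E → ℝ} {Λ : ℝ} {D : E → E →L[ℝ] ℝ}

lemma hasFDerivAt (hW : IsQuadraticEnvelope K U Λ W D) (ξ : E) : HasFDerivAt W (D ξ) ξ :=
  hasFDerivAt_of_abs_sub_le_mul_sq (hW.abs_sub_le ξ)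

lemma fderiv_eq_of_contact (hW : IsQuadraticEnvelope K U Λ W D) {x ξ : E} (hx : x ∈ K)
    (hcontact : W ξ = U x - Λ * ‖x - ξ‖ ^ 2) : D ξ = (2 * Λ) • innerSL ℝ (x - ξ) := by
  have hparab : HasFDerivAt (fun ξ' => U x - Λ * ‖x - ξ'‖ ^ 2) ((2 * Λ) • innerSL ℝ (x - ξ)) ξ := by
    refine ((((hasFDerivAt_id ξ).const_sub x).norm_sq.const_mul Λ).const_sub (U x)).congr_fderiv ?_
    ext
    simp
    ring
  have hmin : IsLocalMin (W - fun ξ' => U x - Λ * ‖x - ξ'‖ ^ 2) ξ :=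
    Eventually.of_forall fun ξ' => by simpa [hcontact] using hW.le x hx ξ'
  exact sub_eq_zero.1 (hmin.hasFDerivAt_eq_zero ((hW.hasFDerivAt ξ).sub hparab))

lemma norm_fderiv_lt_of_contact (hW : IsQuadraticEnvelope K U Λ W D) (hΛ : 0 < Λ) {x ξ : E}
    (hx : x ∈ K) (hcontact : W ξ = U x - Λ * ‖x - ξ‖ ^ 2) {ρ : ℝ} (hρ : 0 < ρ)
    (hxξ : ‖x - ξ‖ ≤ ρ / (4 * Λ)) : ‖D ξ‖ < ρ := by
  rw [hW.fderiv_eq_of_contact hx hcontact, norm_smul, innerSL_apply_norm, Real.norm_eq_abs,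
    abs_of_pos (by positivity)]
  calc 2 * Λ * ‖x - ξ‖ ≤ 2 * Λ * (ρ / (4 * Λ)) := by gcongr
    _ = ρ / 2 := by field_simp; norm_num
    _ < ρ := half_lt_self hρ

lemma hasSuperjetWithinAt_of_contact (hW : IsQuadraticEnvelope K U Λ W D) {x ξ : E}
    (hcontact : W ξ = U x - Λ * ‖x - ξ‖ ^ 2) {A : E →L[ℝ] E →L[ℝ] ℝ} (hA : HasFDerivAt D A ξ) :
    HasSuperjetWithinAt U (D ξ) A K x := by
  intro κ hκ
  have htend : Tendsto (fun y => y - x) (𝓝[K] x) (𝓝 0) :=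
    tendsto_nhdsWithin_of_tendsto_nhds (tendsto_sub_nhds_zero_iff.2 tendsto_id)
  filter_upwards [htend.eventually (eventually_abs_taylor_two_le hW.hasFDerivAt hA hκ),
    self_mem_nhdsWithin] with y htaylor hy
  have hle := hW.le y hy (ξ + (y - x))
  rw [show y - (ξ + (y - x)) = x - ξ by abel] at hle
  linarith [(abs_le.1 htaylor).2]

lemma le_quadratic (hW : IsQuadraticEnvelope K U Λ W D) {Q : E →L[ℝ] E →L[ℝ] ℝ}
    (hQ : ∀ z, Q z z ≤ Λ * ‖z‖ ^ 2) {P : E →L[ℝ] ℝ} {M : ℝ}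
    (hM : ∀ x ∈ K, ∀ ξ, U x - Λ * ‖x - ξ‖ ^ 2 - Q ξ ξ - P ξ ≤ M) (ξ : E) :
    W ξ - Q ξ ξ - P ξ ≤ M := by
  suffices W ξ ≤ M + Q ξ ξ + P ξ by linarith
  refine hW.le_of_paraboloid ξ _ (Q ξ + Q.flip ξ + P) fun x hx ξ' => ?_
  have hlin := hM x hx ξ'
  obtain ⟨e, rfl⟩ : ∃ e, ξ' = ξ + e := ⟨ξ' - ξ, by abel⟩
  have hQe := hQ e
  simp only [map_add, _root_.add_apply, ContinuousLinearMap.flip_apply, add_sub_cancel_left]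
    at hlin ⊢
  linarith

lemma exists_contact [FiniteDimensional ℝ E] {β : ℝ}
    (hW : IsQuadraticEnvelope K U (2 * β + 1) W D) (hK : IsCompact K)
    (h0 : 0 ∈ K) (hU : ContinuousOn U K) (hU0 : U 0 = 0) {R : E →L[ℝ] E →L[ℝ] ℝ}
    (hR : ∀ z, 0 ≤ R z z) (hβ : ∀ z, R z z ≤ β * ‖z‖ ^ 2) (hle : ∀ x ∈ K, U x ≤ R x x)
    {ρ s : ℝ} (hρ : 0 < ρ) (hρ1 : ρ ≤ 1) (hs : 0 < s) {P : E →L[ℝ] ℝ} (hP : ‖P‖ < ρ * s)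
    {Q : E →L[ℝ] E →L[ℝ] ℝ} (hQ : ∀ z, Q z z = 2 * R z z + ρ * ‖z‖ ^ 2) :
    ∃ ζ : E, ∃ x ∈ K, ‖ζ‖ ≤ s ∧ ‖x - ζ‖ ≤ s ∧ W ζ = U x - (2 * β + 1) * ‖x - ζ‖ ^ 2 ∧
      (∀ z, W z ≤ W ζ + D ζ (z - ζ) + Q (z - ζ) (z - ζ)) ∧ D ζ - (Q ζ + Q.flip ζ) = P := by
  obtain ⟨ζ, x, hx, hζ, hxζ, hmax⟩ :=
    exists_forall_penalized_le hK h0 hU hU0 hR hβ hle hρ hρ1 hs hP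
  simp only [← hQ] at hmax
  have hQle (z) : Q z z ≤ (2 * β + 1) * ‖z‖ ^ 2 := by
    have hρz : ρ * ‖z‖ ^ 2 ≤ 1 * ‖z‖ ^ 2 := by gcongr
    rw [hQ]
    linarith [hβ z]
  have hWle := hW.le_quadratic hQle hmax
  have hcontact : W ζ = U x - (2 * β + 1) * ‖x - ζ‖ ^ 2 :=
    le_antisymm (by linarith [hWle ζ]) (hW.le x hx ζ)
  have hgrad : D ζ - (Q ζ + Q.flip ζ) = P := by
    have hlocal : IsLocalMax ((W - fun z => Q z z) - ⇑P) ζ :=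
      Eventually.of_forall fun z => by simpa [hcontact] using hWle z
    exact sub_eq_zero.1 (hlocal.hasFDerivAt_eq_zero
      (((hW.hasFDerivAt ζ).sub (hasFDerivAt_bilin_self Q ζ)).sub P.hasFDerivAt))
  refine ⟨ζ, x, hx, hζ, hxζ, hcontact, fun z => ?_, hgrad⟩
  have hz := hWle z
  obtain ⟨e, rfl⟩ : ∃ e, z = ζ + e := ⟨z - ζ, by abel⟩
  rw [← hcontact] at hz
  rw [sub_eq_iff_eq_add'] at hgrad
  simp only [hgrad, map_add, _root_.add_apply, ContinuousLinearMap.flip_apply,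
    add_sub_cancel_left] at hz ⊢
  linarith

lemma exists_contact_differentiable [FiniteDimensional ℝ E] {β : ℝ}
    (hW : IsQuadraticEnvelope K U (2 * β + 1) W D) (hΛ : 0 ≤ 2 * β + 1) (hK : IsCompact K)
    (h0 : 0 ∈ K) (hU : ContinuousOn U K) (hU0 : U 0 = 0) {R : E →L[ℝ] E →L[ℝ] ℝ}
    (hR : ∀ z, 0 ≤ R z z) (hβ : ∀ z, R z z ≤ β * ‖z‖ ^ 2) (hle : ∀ x ∈ K, U x ≤ R x x)
    {ρ s : ℝ} (hρ : 0 < ρ) (hρ1 : ρ ≤ 1) (hs : 0 < s) :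
    ∃ ζ : E, ∃ x ∈ K, ‖ζ‖ ≤ s ∧ ‖x - ζ‖ ≤ s ∧ W ζ = U x - (2 * β + 1) * ‖x - ζ‖ ^ 2 ∧
      ∃ A : E →L[ℝ] E →L[ℝ] ℝ, HasFDerivAt D A ζ ∧
        ∀ v, 1 / 2 * A v v ≤ 2 * R v v + ρ * ‖v‖ ^ 2 := by
  set Q : E →L[ℝ] E →L[ℝ] ℝ := (2 : ℝ) • R + ρ • sqForm (.id ℝ E)
  have hQ (z : E) : Q z z = 2 * R z z + ρ * ‖z‖ ^ 2 := by simp [Q, sqForm_self]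
  have hLip : LipschitzWith _ fun ζ => D ζ - (Q + Q.flip) ζ :=
    (lipschitzWith_of_abs_sub_le_mul_sq (C := ⟨2 * β + 1, hΛ⟩) hW.abs_sub_le).sub
      (Q + Q.flip).lipschitz
  set Z := {ζ | ∃ x ∈ K, ‖ζ‖ ≤ s ∧ ‖x - ζ‖ ≤ s ∧ W ζ = U x - (2 * β + 1) * ‖x - ζ‖ ^ 2 ∧
    ∀ z, W z ≤ W ζ + D ζ (z - ζ) + Q (z - ζ) (z - ζ)}
  have hcover : Metric.ball 0 (ρ * s) ⊆ (fun ζ => D ζ - (Q + Q.flip) ζ) '' Z := by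
    intro P hP
    obtain ⟨ζ, x, hx, hζ, hxζ, hcontact, htouch, hgrad⟩ := hW.exists_contact hK h0 hU hU0 hR hβ hle
      hρ hρ1 hs (mem_ball_zero_iff.1 hP) hQ
    exact ⟨ζ, ⟨x, hx, hζ, hxζ, hcontact, htouch⟩, hgrad⟩
  obtain ⟨ζ, ⟨x, hx, hζ, hxζ, hcontact, htouch⟩, hdiff⟩ :=
    exists_differentiableAt_of_ball_subset_image
      (InnerProductSpace.toDual ℝ E).toLinearEquiv.finrank_eq.symm hLip (mul_pos hρ hs) hcover
  have hD : DifferentiableAt ℝ D ζ := by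
    simpa using hdiff.add (Q + Q.flip).differentiableAt
  refine ⟨ζ, x, hx, hζ, hxζ, hcontact, fderiv ℝ D ζ, hD.hasFDerivAt, fun v => ?_⟩
  rw [← hQ]
  exact half_bilin_le_of_forall_le hW.hasFDerivAt hD.hasFDerivAt htouch v

end IsQuadraticEnvelope

end ContactPoints

section TheoremOnSums

variable {E F : Type*} [NormedAddCommGroup E] [InnerProductSpace ℝ E] [NormedAddCommGroup F]
  [InnerProductSpace ℝ F]

/-- The continuous linear map `v ↦ (v, 0)` into the Hilbert sum of `E` and `F`. -/
def inlL2 (E F : Type*) [NormedAddCommGroup E] [NormedSpace ℝ E] [NormedAddCommGroup F]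
    [NormedSpace ℝ F] : E →L[ℝ] WithLp 2 (E × F) :=
  (WithLp.prodContinuousLinearEquiv 2 ℝ E F).symm.toContinuousLinearMap.comp (.inl ℝ E F)

/-- The continuous linear map `v ↦ (0, v)` into the Hilbert sum of `E` and `F`. -/
def inrL2 (E F : Type*) [NormedAddCommGroup E] [NormedSpace ℝ E] [NormedAddCommGroup F]
    [NormedSpace ℝ F] : F →L[ℝ] WithLp 2 (E × F) :=
  (WithLp.prodContinuousLinearEquiv 2 ℝ E F).symm.toContinuousLinearMap.comp (.inr ℝ E F)

lemma inlL2_apply (v : E) : inlL2 E F v = WithLp.toLp 2 (v, 0) := rfl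

lemma inrL2_apply (v : F) : inrL2 E F v = WithLp.toLp 2 (0, v) := rfl

lemma apply_sub_eq_add (p : WithLp 2 (E × F) →L[ℝ] ℝ) (x ξ : WithLp 2 (E × F)) :
    p (ξ - x) = p.comp (inlL2 E F) (ξ.fst - x.fst) + p.comp (inrL2 E F) (ξ.snd - x.snd) := by
  simp only [ContinuousLinearMap.comp_apply, ← map_add]
  congr 1
  apply WithLp.ofLp_injective
  ext <;> simp [inlL2_apply, inrL2_apply]

lemma IsQuadraticEnvelope.prod {K : Set E} {L : Set F} {U W : E → ℝ} {V Y : F → ℝ} {Λ : ℝ}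
    {D : E → E →L[ℝ] ℝ} {G : F → F →L[ℝ] ℝ} (hW : IsQuadraticEnvelope K U Λ W D)
    (hY : IsQuadraticEnvelope L V Λ Y G) :
    IsQuadraticEnvelope {z : WithLp 2 (E × F) | z.fst ∈ K ∧ z.snd ∈ L}
      (fun z => U z.fst + V z.snd) Λ (fun z => W z.fst + Y z.snd)
      (fun z => (D z.fst).comp (WithLp.fstL 2 ℝ E F) + (G z.snd).comp (WithLp.sndL 2 ℝ E F)) where
  abs_sub_le x y := by
    have hfst := abs_le.1 (hW.abs_sub_le x.fst y.fst)
    have hsnd := abs_le.1 (hY.abs_sub_le x.snd y.snd)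
    rw [WithLp.prod_norm_sq_eq_of_L2, abs_le]
    simp only [_root_.add_apply, ContinuousLinearMap.comp_apply, WithLp.fstL_apply,
      WithLp.sndL_apply, WithLp.sub_fst, WithLp.sub_snd]
    constructor <;> linarith
  le x hx ξ := by
    have hfst := hW.le x.fst hx.1 ξ.fst
    have hsnd := hY.le x.snd hx.2 ξ.snd
    rw [WithLp.prod_norm_sq_eq_of_L2, WithLp.sub_fst, WithLp.sub_snd]
    linarith
  le_of_paraboloid ξ r p hp := by
    suffices Y ξ.snd ≤ r - W ξ.fst by linarith
    refine hY.le_of_paraboloid _ _ (p.comp (inrL2 E F)) fun y hy η => ?_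
    suffices W ξ.fst ≤ r + p.comp (inrL2 E F) (η - ξ.snd) + Λ * ‖η - ξ.snd‖ ^ 2 -
      (V y - Λ * ‖y - η‖ ^ 2) by linarith
    refine hW.le_of_paraboloid _ _ (p.comp (inlL2 E F)) fun x hx ξ' => ?_
    have := hp (WithLp.toLp 2 (x, y)) ⟨hx, hy⟩ (WithLp.toLp 2 (ξ', η))
    rw [apply_sub_eq_add, WithLp.prod_norm_sq_eq_of_L2, WithLp.prod_norm_sq_eq_of_L2] at this
    simp only [WithLp.sub_fst, WithLp.sub_snd, WithLp.toLp_fst, WithLp.toLp_snd] at this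
    linarith

lemma hasFDerivAt_of_hasFDerivAt_prod {D : E → E →L[ℝ] ℝ} {G : F → F →L[ℝ] ℝ}
    {z : WithLp 2 (E × F)} {A : WithLp 2 (E × F) →L[ℝ] WithLp 2 (E × F) →L[ℝ] ℝ}
    (hA : HasFDerivAt (fun z => (D z.fst).comp (WithLp.fstL 2 ℝ E F) +
      (G z.snd).comp (WithLp.sndL 2 ℝ E F)) A z) :
    HasFDerivAt D (A.bilinearComp (inlL2 E F) (inlL2 E F)) z.fst ∧
      HasFDerivAt G (A.bilinearComp (inrL2 E F) (inrL2 E F)) z.snd ∧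
      ∀ v, A v v =
        A (inlL2 E F v.fst) (inlL2 E F v.fst) + A (inrL2 E F v.snd) (inrL2 E F v.snd) := by
  have hD : HasFDerivAt D (A.bilinearComp (inlL2 E F) (inlL2 E F)) z.fst := by
    refine (hasFDerivAt_comp_slice hA (inlL2 E F) z.fst).congr_of_eventuallyEq
      (.of_forall fun x => ?_)
    ext
    simp [inlL2_apply]
  have hG : HasFDerivAt G (A.bilinearComp (inrL2 E F) (inrL2 E F)) z.snd := by
    refine (hasFDerivAt_comp_slice hA (inrL2 E F) z.snd).congr_of_eventuallyEq
      (.of_forall fun y => ?_)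
    ext
    simp [inrL2_apply]
  refine ⟨hD, hG, fun v => ?_⟩
  have hsum := ((hD.comp z (WithLp.fstL 2 ℝ E F).hasFDerivAt).clm_comp
    (hasFDerivAt_const (WithLp.fstL 2 ℝ E F) z)).add
      ((hG.comp z (WithLp.sndL 2 ℝ E F).hasFDerivAt).clm_comp
        (hasFDerivAt_const (WithLp.sndL 2 ℝ E F) z))
  simpa [inlL2_apply, inrL2_apply] using congrArg (fun B => B v v) (hA.unique hsum)

variable [FiniteDimensional ℝ E] [FiniteDimensional ℝ F] {K : Set E} {L : Set F} {U : E → ℝ}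
  {V : F → ℝ} {R : WithLp 2 (E × F) →L[ℝ] WithLp 2 (E × F) →L[ℝ] ℝ}

lemma IsQuadraticEnvelope.exists_contact_prod {W : E → ℝ} {Y : F → ℝ} {D : E → E →L[ℝ] ℝ}
    {G : F → F →L[ℝ] ℝ} {β : ℝ} (hW : IsQuadraticEnvelope K U (2 * β + 1) W D)
    (hY : IsQuadraticEnvelope L V (2 * β + 1) Y G) (hΛ : 0 ≤ 2 * β + 1) (hK : IsCompact K)
    (hL : IsCompact L) (h0K : 0 ∈ K) (h0L : 0 ∈ L) (hU : ContinuousOn U K) (hV : ContinuousOn V L)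
    (hU0 : U 0 = 0) (hV0 : V 0 = 0) (hR : ∀ z, 0 ≤ R z z) (hβ : ∀ z, R z z ≤ β * ‖z‖ ^ 2)
    (hle : ∀ x ∈ K, ∀ y ∈ L, U x + V y ≤ R (WithLp.toLp 2 (x, y)) (WithLp.toLp 2 (x, y)))
    {ρ s : ℝ} (hρ : 0 < ρ) (hρ1 : ρ ≤ 1) (hs : 0 < s) :
    ∃ ζ z : WithLp 2 (E × F), z.fst ∈ K ∧ z.snd ∈ L ∧ ‖ζ‖ ≤ s ∧ ‖z - ζ‖ ≤ s ∧
      W ζ.fst = U z.fst - (2 * β + 1) * ‖z.fst - ζ.fst‖ ^ 2 ∧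
      Y ζ.snd = V z.snd - (2 * β + 1) * ‖z.snd - ζ.snd‖ ^ 2 ∧
      ∃ (A₁ : E →L[ℝ] E →L[ℝ] ℝ) (A₂ : F →L[ℝ] F →L[ℝ] ℝ),
        HasFDerivAt D A₁ ζ.fst ∧ HasFDerivAt G A₂ ζ.snd ∧
        ∀ h k, 1 / 2 * A₁ h h + 1 / 2 * A₂ k k ≤
          2 * R (WithLp.toLp 2 (h, k)) (WithLp.toLp 2 (h, k)) + ρ * (‖h‖ ^ 2 + ‖k‖ ^ 2) := by
  have hKL : IsCompact {z : WithLp 2 (E × F) | z.fst ∈ K ∧ z.snd ∈ L} :=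
    (WithLp.homeomorphProd 2 E F).isCompact_preimage.2 (hK.prod hL)
  have hUV : ContinuousOn (fun z : WithLp 2 (E × F) => U z.fst + V z.snd)
      {z | z.fst ∈ K ∧ z.snd ∈ L} :=
    (hU.comp (WithLp.fstL 2 ℝ E F).continuous.continuousOn fun _ hz => hz.1).add
      (hV.comp (WithLp.sndL 2 ℝ E F).continuous.continuousOn fun _ hz => hz.2)
  obtain ⟨ζ, z, ⟨hx, hy⟩, hζ, hzζ, hcontact, A, hA, hAle⟩ :=
    (hW.prod hY).exists_contact_differentiable hΛ hKL ⟨h0K, h0L⟩ hUV (by simp [hU0, hV0]) hR hβ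
      (fun z hz => hle _ hz.1 _ hz.2) hρ hρ1 hs
  rw [WithLp.prod_norm_sq_eq_of_L2, WithLp.sub_fst, WithLp.sub_snd] at hcontact
  obtain ⟨hD, hG, hsplit⟩ := hasFDerivAt_of_hasFDerivAt_prod hA
  refine ⟨ζ, z, hx, hy, hζ, hzζ, ?_, ?_, _, _, hD, hG, fun h k => ?_⟩
  · linarith [hW.le _ hx ζ.fst, hY.le _ hy ζ.snd]
  · linarith [hW.le _ hx ζ.fst, hY.le _ hy ζ.snd]
  · have hAhk := hAle (WithLp.toLp 2 (h, k))
    rw [hsplit, WithLp.prod_norm_sq_eq_of_L2] at hAhk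
    simp only [ContinuousLinearMap.bilinearComp_apply]
    simp only [WithLp.toLp_fst, WithLp.toLp_snd] at hAhk
    linarith

lemma exists_superjets_of_add_le_bilin (hK : IsCompact K) (hL : IsCompact L) (h0K : 0 ∈ K)
    (h0L : 0 ∈ L) (hU : ContinuousOn U K) (hV : ContinuousOn V L) (hU0 : U 0 = 0) (hV0 : V 0 = 0)
    (hR : ∀ z, 0 ≤ R z z)
    (hle : ∀ x ∈ K, ∀ y ∈ L, U x + V y ≤ R (WithLp.toLp 2 (x, y)) (WithLp.toLp 2 (x, y)))
    {ρ : ℝ} (hρ : 0 < ρ) :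
    ∃ x ∈ K, ∃ y ∈ L, ‖x‖ < ρ ∧ ‖y‖ < ρ ∧ ∃ p₁ p₂ A₁ A₂, ‖p₁‖ < ρ ∧ ‖p₂‖ < ρ ∧
      HasSuperjetWithinAt U p₁ A₁ K x ∧ HasSuperjetWithinAt V p₂ A₂ L y ∧
      ∀ h k, 1 / 2 * A₁ h h + 1 / 2 * A₂ k k ≤
        2 * R (WithLp.toLp 2 (h, k)) (WithLp.toLp 2 (h, k)) + ρ * (‖h‖ ^ 2 + ‖k‖ ^ 2) := by
  obtain ⟨β, hβ0, hβ⟩ := exists_bilin_self_le R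
  have hΛ : 0 < 2 * β + 1 := by positivity
  obtain ⟨W, D, hW⟩ := exists_isQuadraticEnvelope hK ⟨0, h0K⟩ hU hΛ
  obtain ⟨Y, G, hY⟩ := exists_isQuadraticEnvelope hL ⟨0, h0L⟩ hV hΛ
  have hs : 0 < ρ / (4 * (2 * β + 1)) := by positivity
  obtain ⟨ζ, z, hx, hy, hζ, hzζ, hcW, hcY, A₁, A₂, hA₁, hA₂, hA⟩ :=
    hW.exists_contact_prod hY hΛ.le hK hL h0K h0L hU hV hU0 hV0 hR hβ hle (lt_min hρ one_pos)
      (min_le_right ρ 1) hs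
  have hnear : ‖z‖ < ρ := by
    have hsρ : ρ / (4 * (2 * β + 1)) + ρ / (4 * (2 * β + 1)) < ρ := by
      rw [← add_div, div_lt_iff₀ (by positivity)]
      nlinarith
    linarith [norm_le_norm_add_norm_sub' z ζ]
  refine ⟨z.fst, hx, z.snd, hy, (WithLp.norm_fst_le _ z).trans_lt hnear,
    (WithLp.norm_snd_le _ z).trans_lt hnear, D ζ.fst, G ζ.snd, A₁, A₂,
    hW.norm_fderiv_lt_of_contact hΛ hx hcW hρ ((WithLp.norm_fst_le _ (z - ζ)).trans hzζ),
    hY.norm_fderiv_lt_of_contact hΛ hy hcY hρ ((WithLp.norm_snd_le _ (z - ζ)).trans hzζ),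
    hW.hasSuperjetWithinAt_of_contact hcW hA₁, hY.hasSuperjetWithinAt_of_contact hcY hA₂,
    fun h k => (hA h k).trans ?_⟩
  gcongr
  exact min_le_left ρ 1

theorem exists_superjets_of_add_le (hK : IsCompact K) (hL : IsCompact L) {a : E} {b : F}
    (ha : a ∈ K) (hb : b ∈ L) (hU : ContinuousOn U K) (hV : ContinuousOn V L)
    (hR : ∀ z, 0 ≤ R z z) {P₁ : E →L[ℝ] ℝ} {P₂ : F →L[ℝ] ℝ}
    (hle : ∀ x ∈ K, ∀ y ∈ L, U x + V y ≤ U a + V b + P₁ (x - a) + P₂ (y - b) +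
      R (WithLp.toLp 2 (x - a, y - b)) (WithLp.toLp 2 (x - a, y - b))) {ρ : ℝ} (hρ : 0 < ρ) :
    ∃ x ∈ K, ∃ y ∈ L, ‖x - a‖ < ρ ∧ ‖y - b‖ < ρ ∧ ∃ p₁ p₂ A₁ A₂, ‖p₁ - P₁‖ < ρ ∧
      ‖p₂ - P₂‖ < ρ ∧ HasSuperjetWithinAt U p₁ A₁ K x ∧ HasSuperjetWithinAt V p₂ A₂ L y ∧
      ∀ h k, 1 / 2 * A₁ h h + 1 / 2 * A₂ k k ≤
        2 * R (WithLp.toLp 2 (h, k)) (WithLp.toLp 2 (h, k)) + ρ * (‖h‖ ^ 2 + ‖k‖ ^ 2) := by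
  have hUa : ContinuousOn (fun v => U (a + v) - U a - P₁ v) ((a + ·) ⁻¹' K) :=
    ((hU.comp (by fun_prop) (Set.mapsTo_preimage _ _)).sub continuousOn_const).sub
      P₁.continuous.continuousOn
  have hVb : ContinuousOn (fun v => V (b + v) - V b - P₂ v) ((b + ·) ⁻¹' L) :=
    ((hV.comp (by fun_prop) (Set.mapsTo_preimage _ _)).sub continuousOn_const).sub
      P₂.continuous.continuousOn
  obtain ⟨x, hx, y, hy, hxρ, hyρ, p₁, p₂, A₁, A₂, hp₁, hp₂, hjetU, hjetV, hA⟩ :=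
    exists_superjets_of_add_le_bilin ((Homeomorph.addLeft a).isCompact_preimage.2 hK)
      ((Homeomorph.addLeft b).isCompact_preimage.2 hL) (by simpa) (by simpa) hUa hVb
      (by simp) (by simp) hR (fun x hx y hy => by
        have := hle (a + x) hx (b + y) hy
        simp only [add_sub_cancel_left] at this
        linarith) hρ
  exact ⟨a + x, hx, b + y, hy, by simpa, by simpa, P₁ + p₁, P₂ + p₂, A₁, A₂, by simpa, by simpa,
    hjetU.of_translate, hjetV.of_translate, hA⟩

end TheoremOnSums

section ParabolicTheoremOnSums

variable {H : Type*} [NormedAddCommGroup H] [InnerProductSpace ℝ H]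

/-- `(p, q, A)` is a parabolic superjet of `w` at `(t, x)` relative to `I × K`. The error term is
quadratic in time and absent in space, which is slightly more than a parabolic superjet requires. -/
def HasParabolicSuperjet (w : ℝ → H → ℝ) (p : ℝ) (q : H) (A : H →L[ℝ] H →L[ℝ] ℝ) (I : Set ℝ)
    (K : Set H) (t : ℝ) (x : H) : Prop :=
  ∃ C, ∀ᶠ z in 𝓝[I ×ˢ K] (t, x),
    w z.1 z.2 ≤ w t x + p * (z.1 - t) + inner ℝ q (z.2 - x) + 1 / 2 * A (z.2 - x) (z.2 - x) +
      C * (z.1 - t) ^ 2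

lemma exists_abs_bilin_le {E : Type*} [NormedAddCommGroup E] [NormedSpace ℝ E]
    (A : E →L[ℝ] E →L[ℝ] ℝ) : ∃ β, ∀ v w, |A v w| ≤ β * ‖v‖ * ‖w‖ :=
  ⟨‖A‖, A.le_opNorm₂⟩

lemma exists_forall_half_bilin_le_add_sq (A : WithLp 2 (ℝ × H) →L[ℝ] WithLp 2 (ℝ × H) →L[ℝ] ℝ)
    {κ : ℝ} (hκ : 0 < κ) :
    ∃ C, ∀ z : WithLp 2 (ℝ × H), 1 / 2 * A z z + κ * ‖z‖ ^ 2 ≤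
      1 / 2 * (A.bilinearComp (inrL2 ℝ H) (inrL2 ℝ H) + (4 * κ) • sqForm (.id ℝ H)) z.snd z.snd +
        C * z.fst ^ 2 := by
  obtain ⟨β, hA⟩ := exists_abs_bilin_le A
  refine ⟨β / 2 + κ + β ^ 2 / (4 * κ), fun z => ?_⟩
  set T := inlL2 ℝ H z.fst
  set X := inrL2 ℝ H z.snd
  have hz : z = T + X := by
    apply WithLp.ofLp_injective
    ext <;> simp [T, X, inlL2_apply, inrL2_apply]
  have hT : ‖T‖ = |z.fst| := WithLp.norm_toLp_fst 2 ℝ H z.fst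
  have hX : ‖X‖ = ‖z.snd‖ := WithLp.norm_toLp_snd 2 ℝ H z.snd
  have hTT := (le_abs_self _).trans (hA T T)
  have hTX := (le_abs_self _).trans (hA T X)
  have hXT := (le_abs_self _).trans (hA X T)
  have hexp : A z z = A T T + A T X + A X T + A X X := by
    rw [hz]
    simp only [map_add, _root_.add_apply]
    ring
  have hyoung : β * |z.fst| * ‖z.snd‖ ≤ κ * ‖z.snd‖ ^ 2 + β ^ 2 / (4 * κ) * |z.fst| ^ 2 := by
    have hsq := mul_nonneg hκ.le (sq_nonneg (‖z.snd‖ - β / (2 * κ) * |z.fst|))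
    have hid : κ * (‖z.snd‖ - β / (2 * κ) * |z.fst|) ^ 2 =
        κ * ‖z.snd‖ ^ 2 + β ^ 2 / (4 * κ) * |z.fst| ^ 2 - β * |z.fst| * ‖z.snd‖ := by
      field_simp
      ring
    linarith
  rw [hT, hX] at hTX
  rw [hX, hT] at hXT
  rw [hT] at hTT
  rw [hexp, WithLp.prod_norm_sq_eq_of_L2, Real.norm_eq_abs]
  simp only [_root_.add_apply, _root_.smul_apply, smul_eq_mul, sqForm_self,
    ContinuousLinearMap.bilinearComp_apply, ContinuousLinearMap.id_apply]
  rw [← sq_abs z.fst]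
  linarith

lemma HasSuperjetWithinAt.hasParabolicSuperjet {w : ℝ → H → ℝ} {I : Set ℝ} {K : Set H}
    {r : WithLp 2 (ℝ × H) →L[ℝ] ℝ} {A : WithLp 2 (ℝ × H) →L[ℝ] WithLp 2 (ℝ × H) →L[ℝ] ℝ}
    {z : WithLp 2 (ℝ × H)}
    (h : HasSuperjetWithinAt (fun z => w z.fst z.snd) r A {z | z.fst ∈ I ∧ z.snd ∈ K} z) {p : ℝ}
    {q : H} (hr : ∀ z, r z = p * z.fst + inner ℝ q z.snd) {κ : ℝ} (hκ : 0 < κ) :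
    HasParabolicSuperjet w p q
      (A.bilinearComp (inrL2 ℝ H) (inrL2 ℝ H) + (4 * κ) • sqForm (.id ℝ H)) I K z.fst z.snd := by
  obtain ⟨C, hC⟩ := exists_forall_half_bilin_le_add_sq A hκ
  have htend : Tendsto (WithLp.toLp 2) (𝓝[I ×ˢ K] (z.fst, z.snd))
      (𝓝[{z | z.fst ∈ I ∧ z.snd ∈ K}] z) :=
    tendsto_nhdsWithin_iff.2 ⟨tendsto_nhdsWithin_of_tendsto_nhds
      ((WithLp.prod_continuous_toLp 2 ℝ H).tendsto _), eventually_mem_nhdsWithin⟩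
  refine ⟨C, ?_⟩
  filter_upwards [htend.eventually (h κ hκ)] with y hy
  have hCy := hC (WithLp.toLp 2 y - z)
  rw [hr] at hy
  simp only [WithLp.sub_fst, WithLp.sub_snd, WithLp.toLp_fst, WithLp.toLp_snd] at hy hCy
  linarith

lemma exists_forall_eq_mul_fst_add_inner_snd [CompleteSpace H] (r : WithLp 2 (ℝ × H) →L[ℝ] ℝ)
    (p₀ : ℝ) (q₀ : H) : ∃ p q,
      |p - p₀| ≤ ‖r - (p₀ • WithLp.fstL 2 ℝ ℝ H + (innerSL ℝ q₀).comp (WithLp.sndL 2 ℝ ℝ H))‖ ∧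
      ‖q - q₀‖ ≤ ‖r - (p₀ • WithLp.fstL 2 ℝ ℝ H + (innerSL ℝ q₀).comp (WithLp.sndL 2 ℝ ℝ H))‖ ∧
      ∀ z, r z = p * z.fst + inner ℝ q z.snd := by
  set r' := r - (p₀ • WithLp.fstL 2 ℝ ℝ H + (innerSL ℝ q₀).comp (WithLp.sndL 2 ℝ ℝ H)) with hr'
  refine ⟨r (inlL2 ℝ H 1), (InnerProductSpace.toDual ℝ H).symm (r.comp (inrL2 ℝ H)), ?_, ?_,
    fun z => ?_⟩
  · simpa [hr', inlL2_apply] using r'.le_opNorm (inlL2 ℝ H 1)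
  · rw [← LinearIsometryEquiv.norm_map (InnerProductSpace.toDual ℝ H)]
    refine ContinuousLinearMap.opNorm_le_bound _ (norm_nonneg r') fun v => ?_
    simpa [hr', inrL2_apply] using r'.le_opNorm (inrL2 ℝ H v)
  · have hz : z = z.fst • inlL2 ℝ H 1 + inrL2 ℝ H z.snd := by
      apply WithLp.ofLp_injective
      ext <;> simp [inlL2_apply, inrL2_apply]
    rw [InnerProductSpace.toDual_symm_apply, ContinuousLinearMap.comp_apply]
    nth_rw 1 [hz]
    rw [map_add, map_smul, smul_eq_mul, mul_comm]

/-- The quadratic part of the test functions on pairs of space-time points: its quadratic form is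
`a ‖x - y‖² + b (t - s)² + e (‖x‖² + ‖y‖²) + N t²`, where `t`, `s`, `x`, `y` are linear functions
on an arbitrary space. -/
def penaltyForm {E : Type*} [NormedAddCommGroup E] [NormedSpace ℝ E] (a b e N : ℝ)
    (t s : E →L[ℝ] ℝ) (x y : E →L[ℝ] H) : E →L[ℝ] E →L[ℝ] ℝ :=
  a • sqForm (x - y) + b • sqForm (t - s) + e • (sqForm x + sqForm y) + N • sqForm t

lemma penaltyForm_self {E : Type*} [NormedAddCommGroup E] [NormedSpace ℝ E] (a b e N : ℝ)
    (t s : E →L[ℝ] ℝ) (x y : E →L[ℝ] H) (z : E) :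
    penaltyForm a b e N t s x y z z =
      a * ‖x z - y z‖ ^ 2 + b * (t z - s z) ^ 2 + e * (‖x z‖ ^ 2 + ‖y z‖ ^ 2) + N * t z ^ 2 := by
  simp [penaltyForm, sqForm_self, mul_add]

lemma exists_bilin_self_eq_penalty (H : Type*) [NormedAddCommGroup H] [InnerProductSpace ℝ H]
    (a b e N : ℝ) : ∃ R : WithLp 2 (WithLp 2 (ℝ × H) × WithLp 2 (ℝ × H)) →L[ℝ]
      WithLp 2 (WithLp 2 (ℝ × H) × WithLp 2 (ℝ × H)) →L[ℝ] ℝ,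
      ∀ z w, R (WithLp.toLp 2 (z, w)) (WithLp.toLp 2 (z, w)) =
        a * ‖z.snd - w.snd‖ ^ 2 + b * (z.fst - w.fst) ^ 2 + e * (‖z.snd‖ ^ 2 + ‖w.snd‖ ^ 2) +
          N * z.fst ^ 2 := by
  let fst := WithLp.fstL 2 ℝ (WithLp 2 (ℝ × H)) (WithLp 2 (ℝ × H))
  let snd := WithLp.sndL 2 ℝ (WithLp 2 (ℝ × H)) (WithLp 2 (ℝ × H))
  let time := WithLp.fstL 2 ℝ ℝ H
  let space := WithLp.sndL 2 ℝ ℝ H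
  exact ⟨penaltyForm a b e N (time.comp fst) (time.comp snd) (space.comp fst) (space.comp snd),
    fun z w => penaltyForm_self ..⟩

theorem exists_parabolicSuperjets_of_add_le [FiniteDimensional ℝ H] {I : Set ℝ} {K : Set H}
    (hI : IsCompact I) (hK : IsCompact K) {u w : ℝ → H → ℝ}
    (hu : ContinuousOn (fun z : ℝ × H => u z.1 z.2) (I ×ˢ K))
    (hw : ContinuousOn (fun z : ℝ × H => w z.1 z.2) (I ×ˢ K)) {t₀ s₀ : ℝ} {x₀ y₀ : H}
    (ht₀ : t₀ ∈ I) (hs₀ : s₀ ∈ I) (hx₀ : x₀ ∈ K) (hy₀ : y₀ ∈ K) {a b e N : ℝ} (ha : 0 ≤ a)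
    (hb : 0 ≤ b) (he : 0 ≤ e) (hN : 0 ≤ N) {p₀ p₀' : ℝ} {q₀ q₀' : H}
    (hle : ∀ t ∈ I, ∀ x ∈ K, ∀ s ∈ I, ∀ y ∈ K, u t x + w s y ≤ u t₀ x₀ + w s₀ y₀ +
      (p₀ * (t - t₀) + inner ℝ q₀ (x - x₀)) + (p₀' * (s - s₀) + inner ℝ q₀' (y - y₀)) +
      (a * ‖(x - x₀) - (y - y₀)‖ ^ 2 + b * ((t - t₀) - (s - s₀)) ^ 2 +
        e * (‖x - x₀‖ ^ 2 + ‖y - y₀‖ ^ 2) + N * (t - t₀) ^ 2)) {ρ : ℝ} (hρ : 0 < ρ) :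
    ∃ t ∈ I, ∃ s ∈ I, ∃ x ∈ K, ∃ y ∈ K, ∃ p q A p' q' A', |t - t₀| < ρ ∧ |s - s₀| < ρ ∧
      ‖x - x₀‖ < ρ ∧ ‖y - y₀‖ < ρ ∧ |p - p₀| < ρ ∧ |p' - p₀'| < ρ ∧ ‖q - q₀‖ < ρ ∧
      ‖q' - q₀'‖ < ρ ∧ HasParabolicSuperjet u p q A I K t x ∧
      HasParabolicSuperjet w p' q' A' I K s y ∧ ∀ h k, 1 / 2 * A h h + 1 / 2 * A' k k ≤
        2 * a * ‖h - k‖ ^ 2 + (2 * e + ρ) * (‖h‖ ^ 2 + ‖k‖ ^ 2) := by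
  have hIK : IsCompact {z : WithLp 2 (ℝ × H) | z.fst ∈ I ∧ z.snd ∈ K} :=
    (WithLp.homeomorphProd 2 ℝ H).isCompact_preimage.2 (hI.prod hK)
  have hcont {v : ℝ → H → ℝ} (hv : ContinuousOn (fun z : ℝ × H => v z.1 z.2) (I ×ˢ K)) :
      ContinuousOn (fun z : WithLp 2 (ℝ × H) => v z.fst z.snd) {z | z.fst ∈ I ∧ z.snd ∈ K} :=
    hv.comp (WithLp.prod_continuous_ofLp 2 ℝ H).continuousOn fun z hz => hz
  obtain ⟨R, hR⟩ := exists_bilin_self_eq_penalty H a b e N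
  have hρ₃ : 0 < ρ / 3 := by positivity
  have hlt {v : ℝ} (hv : v < ρ / 3) : v < ρ := hv.trans (div_lt_self hρ (by norm_num))
  obtain ⟨z, ⟨htI, hxK⟩, z', ⟨hsI, hyK⟩, hz, hz', r, r', A, A', hr, hr', hjet, hjet', hA⟩ :=
    exists_superjets_of_add_le (R := R)
      (P₁ := p₀ • WithLp.fstL 2 ℝ ℝ H + (innerSL ℝ q₀).comp (WithLp.sndL 2 ℝ ℝ H))
      (P₂ := p₀' • WithLp.fstL 2 ℝ ℝ H + (innerSL ℝ q₀').comp (WithLp.sndL 2 ℝ ℝ H))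
      hIK hIK (a := WithLp.toLp 2 (t₀, x₀)) (b := WithLp.toLp 2 (s₀, y₀)) ⟨ht₀, hx₀⟩ ⟨hs₀, hy₀⟩
      (hcont hu) (hcont hw) (fun z => (hR z.fst z.snd).ge.trans' (by positivity))
      (fun z hz z' hz' => by
        rw [hR]
        simpa using hle _ hz.1 _ hz.2 _ hz'.1 _ hz'.2) hρ₃
  obtain ⟨p, q, hp, hq, hpq⟩ := exists_forall_eq_mul_fst_add_inner_snd r p₀ q₀
  obtain ⟨p', q', hp', hq', hpq'⟩ := exists_forall_eq_mul_fst_add_inner_snd r' p₀' q₀'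
  refine ⟨z.fst, htI, z'.fst, hsI, z.snd, hxK, z'.snd, hyK, p, q, _, p', q', _,
    hlt ((WithLp.norm_fst_le _ (z - _)).trans_lt hz),
    hlt ((WithLp.norm_fst_le _ (z' - _)).trans_lt hz'),
    hlt ((WithLp.norm_snd_le _ (z - _)).trans_lt hz),
    hlt ((WithLp.norm_snd_le _ (z' - _)).trans_lt hz'), hlt (hp.trans_lt hr),
    hlt (hp'.trans_lt hr'), hlt (hq.trans_lt hr), hlt (hq'.trans_lt hr'),
    hjet.hasParabolicSuperjet hpq hρ₃, hjet'.hasParabolicSuperjet hpq' hρ₃, fun h k => ?_⟩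
  have hAhk := hA (inrL2 ℝ H h) (inrL2 ℝ H k)
  rw [hR] at hAhk
  simp only [inrL2_apply, WithLp.norm_toLp_snd, WithLp.toLp_fst, WithLp.toLp_snd] at hAhk
  simp only [_root_.add_apply, _root_.smul_apply, smul_eq_mul, sqForm_self,
    ContinuousLinearMap.bilinearComp_apply, ContinuousLinearMap.id_apply, inrL2_apply]
  linarith

end ParabolicTheoremOnSums

section Penalization

variable {Z : Type*} [TopologicalSpace Z] {Ω : Set Z} {F D : Z → ℝ} {ω₀ : Z}

lemma exists_forall_le_sub_mul_imp (hΩ : IsCompact Ω) (hF : ContinuousOn F Ω)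
    (hD : ContinuousOn D Ω) (hD0 : ∀ ω ∈ Ω, 0 ≤ D ω)
    (hlt : ∀ ω ∈ Ω, D ω = 0 → ω ≠ ω₀ → F ω < F ω₀) {p : Z → Prop} (hp : ∀ᶠ ω in 𝓝[Ω] ω₀, p ω) :
    ∃ a : ℝ, ∀ ω ∈ Ω, F ω₀ ≤ F ω - a * D ω → p ω := by
  obtain ⟨O, hO, hω₀, hOp⟩ := mem_nhdsWithin.1 hp
  suffices h : ∃ a : ℝ, ∀ ω ∈ Ω \ O ∩ Ω, F ω - a * D ω < F ω₀ by
    obtain ⟨a, ha⟩ := h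
    exact ⟨a, fun ω hω hle => hOp ⟨by_contra fun hωO => hle.not_gt (ha ω ⟨⟨hω, hωO⟩, hω⟩), hω⟩⟩
  refine (hΩ.diff hO).induction_on (p := fun S => ∃ a : ℝ, ∀ ω ∈ S ∩ Ω, F ω - a * D ω < F ω₀)
    ⟨0, by simp⟩ (fun S T hST ⟨a, ha⟩ => ⟨a, fun ω hω => ha ω ⟨hST hω.1, hω.2⟩⟩) ?_ ?_
  · rintro S T ⟨a, ha⟩ ⟨a', ha'⟩
    refine ⟨max a a', fun ω ⟨hω, hωΩ⟩ => ?_⟩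
    have hmono := mul_le_mul_of_nonneg_right (le_max_left a a') (hD0 ω hωΩ)
    have hmono' := mul_le_mul_of_nonneg_right (le_max_right a a') (hD0 ω hωΩ)
    rcases hω with hω | hω
    · linarith [ha ω ⟨hω, hωΩ⟩]
    · linarith [ha' ω ⟨hω, hωΩ⟩]
  · rintro ω ⟨hω, hωO⟩
    obtain ⟨a, ha⟩ : ∃ a : ℝ, F ω - a * D ω < F ω₀ := by
      rcases (hD0 ω hω).eq_or_lt with h | h
      · exact ⟨0, by simpa using hlt ω hω h.symm fun h => hωO (h ▸ hω₀)⟩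
      · obtain ⟨a, ha⟩ := exists_gt ((F ω - F ω₀) / D ω)
        rw [div_lt_iff₀ h] at ha
        exact ⟨a, by linarith⟩
    have hcont : ContinuousWithinAt (fun ω => F ω - a * D ω) Ω ω :=
      (hF ω hω).sub (continuousWithinAt_const.mul (hD ω hω))
    exact ⟨_, nhdsWithin_mono ω Set.sdiff_subset (hcont.eventually (gt_mem_nhds ha)),
      a, fun ω' h => h.1⟩

lemma exists_forall_exists_isMaxOn_sub_penalty (hΩ : IsCompact Ω) (hF : ContinuousOn F Ω)
    (hD : ContinuousOn D Ω) (hD0 : ∀ ω ∈ Ω, 0 ≤ D ω) (hω₀ : ω₀ ∈ Ω)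
    (hlt : ∀ ω ∈ Ω, D ω = 0 → ω ≠ ω₀ → F ω < F ω₀) {p : Z → Prop} (hp : ∀ᶠ ω in 𝓝[Ω] ω₀, p ω)
    {η : ℝ} (hη : 0 < η) :
    ∃ a : ℝ, ∀ P : Z → ℝ, ContinuousOn P Ω → P ω₀ = 0 → (∀ ω ∈ Ω, a * D ω ≤ P ω) →
      ∃ ω ∈ Ω, p ω ∧ P ω < η ∧ ∀ ω' ∈ Ω, F ω' - P ω' ≤ F ω - P ω := by
  have hFη : ∀ᶠ ω in 𝓝[Ω] ω₀, F ω < F ω₀ + η :=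
    (hF ω₀ hω₀).eventually (gt_mem_nhds (lt_add_of_pos_right _ hη))
  obtain ⟨a, ha⟩ := exists_forall_le_sub_mul_imp hΩ hF hD hD0 hlt (hp.and hFη)
  refine ⟨a, fun P hP hP0 hle => ?_⟩
  obtain ⟨ω, hω, hmax⟩ := hΩ.exists_isMaxOn ⟨ω₀, hω₀⟩ (hF.sub hP)
  have hω₀ω : F ω₀ - P ω₀ ≤ F ω - P ω := hmax hω₀
  obtain ⟨hpω, hFω⟩ := ha ω hω (by linarith [hle ω hω])
  exact ⟨ω, hω, hpω, by linarith, fun ω' hω' => hmax hω'⟩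

end Penalization

section Doubling

variable {H : Type*} [NormedAddCommGroup H] [InnerProductSpace ℝ H]

/-- The penalty localising the doubled variables near `(τ, ξ)`. -/
def localPenalty (A N e : ℝ) (ν ν' : H) (τ : ℝ) (ξ : H) (t : ℝ) (x y : H) : ℝ :=
  A * (t - τ) + (N + 1) * (t - τ) ^ 2 + inner ℝ ν (x - ξ) + inner ℝ ν' (y - ξ) +
    e * (‖x - ξ‖ ^ 2 + ‖y - ξ‖ ^ 2)

lemma norm_sq_eq_add_two_mul_inner_add (v v' : H) :
    ‖v'‖ ^ 2 = ‖v‖ ^ 2 + 2 * inner ℝ v (v' - v) + ‖v' - v‖ ^ 2 := by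
  simpa using norm_add_sq_real v (v' - v)

lemma localPenalty_add_coupling_eq (A N e a b : ℝ) (ν ν' : H) (τ : ℝ) (ξ : H) (t t' s s' : ℝ)
    (x x' y y' : H) :
    localPenalty A N e ν ν' τ ξ t' x' y' + (a * ‖x' - y'‖ ^ 2 + b * (t' - s') ^ 2) =
      localPenalty A N e ν ν' τ ξ t x y + (a * ‖x - y‖ ^ 2 + b * (t - s) ^ 2) +
        ((A + 2 * (N + 1) * (t - τ) + 2 * b * (t - s)) * (t' - t) +
          inner ℝ (ν + (2 * e) • (x - ξ) + (2 * a) • (x - y)) (x' - x)) +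
        (-(2 * b * (t - s)) * (s' - s) +
          inner ℝ (ν' + (2 * e) • (y - ξ) + (2 * a) • (y - x)) (y' - y)) +
        (a * ‖(x' - x) - (y' - y)‖ ^ 2 + b * ((t' - t) - (s' - s)) ^ 2 +
          e * (‖x' - x‖ ^ 2 + ‖y' - y‖ ^ 2) + (N + 1) * (t' - t) ^ 2) := by
  have hx := norm_sq_eq_add_two_mul_inner_add (x - ξ) (x' - ξ)
  have hy := norm_sq_eq_add_two_mul_inner_add (y - ξ) (y' - ξ)
  have hxy := norm_sq_eq_add_two_mul_inner_add (x - y) (x' - y')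
  rw [sub_sub_sub_cancel_right] at hx hy
  rw [sub_sub_sub_comm x' y' x y, inner_sub_right] at hxy
  rw [localPenalty, localPenalty, hx, hy, hxy]
  simp only [inner_add_left, inner_sub_left, inner_smul_left, inner_sub_right, conj_trivial]
  ring

lemma localPenalty_self_pos {A N e : ℝ} {ν ν' : H} {τ : ℝ} {ξ : H} (he : 0 < e) {t : ℝ} {x : H}
    (hne : (t, x) ≠ (τ, ξ)) :
    A * (t - τ) + N * (t - τ) ^ 2 + inner ℝ (ν + ν') (x - ξ) + e * ‖x - ξ‖ ^ 2 <
      localPenalty A N e ν ν' τ ξ t x x := by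
  have hpos : 0 < (t - τ) ^ 2 + e * ‖x - ξ‖ ^ 2 := by
    rcases eq_or_ne t τ with rfl | ht
    · have hx : 0 < ‖x - ξ‖ := norm_pos_iff.2 (sub_ne_zero.2 fun h => hne (by rw [h]))
      positivity
    · have := sub_ne_zero.2 ht
      positivity
  rw [localPenalty, inner_add_left]
  linarith

variable {t₀ t₁ : ℝ} {K : Set H} {u w : ℝ → H → ℝ} {τ : ℝ} {ξ : H} {A N e : ℝ} {ν ν' : H}

lemma exists_forall_exists_doubled_max (hK : IsCompact K)
    (hu : ContinuousOn (fun z : ℝ × H => u z.1 z.2) (Set.Icc t₀ t₁ ×ˢ K))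
    (hw : ContinuousOn (fun z : ℝ × H => w z.1 z.2) (Set.Icc t₀ t₁ ×ˢ K))
    (hτ : τ ∈ Set.Icc t₀ t₁) (hξ : ξ ∈ K) (he : 0 < e)
    (hmax : ∀ t ∈ Set.Icc t₀ t₁, ∀ x ∈ K, u t x + w t x ≤ u τ ξ + w τ ξ + (A * (t - τ) +
      N * (t - τ) ^ 2 + inner ℝ (ν + ν') (x - ξ) + e * ‖x - ξ‖ ^ 2)) {δ : ℝ} (hδ : 0 < δ) :
    ∃ a₀, ∀ a ≥ a₀, ∀ b ≥ a₀,
      ∃ t ∈ Set.Icc t₀ t₁, ∃ s ∈ Set.Icc t₀ t₁, ∃ x ∈ K, ∃ y ∈ K,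
        |t - τ| < δ ∧ |s - τ| < δ ∧ ‖x - ξ‖ < δ ∧ ‖y - ξ‖ < δ ∧
        a * ‖x - y‖ ^ 2 + b * (t - s) ^ 2 < δ ∧
        ∀ t' ∈ Set.Icc t₀ t₁, ∀ x' ∈ K, ∀ s' ∈ Set.Icc t₀ t₁, ∀ y' ∈ K,
          u t' x' + w s' y' - localPenalty A N e ν ν' τ ξ t' x' y' -
              (a * ‖x' - y'‖ ^ 2 + b * (t' - s') ^ 2) ≤
            u t x + w s y - localPenalty A N e ν ν' τ ξ t x y -
              (a * ‖x - y‖ ^ 2 + b * (t - s) ^ 2) := by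
  set Ω : Set ((ℝ × H) × (ℝ × H)) := (Set.Icc t₀ t₁ ×ˢ K) ×ˢ (Set.Icc t₀ t₁ ×ˢ K)
  have hΩ : IsCompact Ω := (isCompact_Icc.prod hK).prod (isCompact_Icc.prod hK)
  let F (ω : (ℝ × H) × (ℝ × H)) := u ω.1.1 ω.1.2 + w ω.2.1 ω.2.2 -
    localPenalty A N e ν ν' τ ξ ω.1.1 ω.1.2 ω.2.2
  have hF : ContinuousOn F Ω :=
    ((hu.comp continuousOn_fst fun _ h => h.1).add (hw.comp continuousOn_snd fun _ h => h.2)).sub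
      (by unfold localPenalty; fun_prop)
  have hlt : ∀ ω ∈ Ω, ‖ω.1.2 - ω.2.2‖ ^ 2 + (ω.1.1 - ω.2.1) ^ 2 = 0 → ω ≠ ((τ, ξ), (τ, ξ)) →
      F ω < F ((τ, ξ), (τ, ξ)) := by
    rintro ⟨⟨t, x⟩, s, y⟩ ⟨ht, -⟩ hD hne
    obtain ⟨hxy, hts⟩ := (add_eq_zero_iff_of_nonneg (by positivity) (by positivity)).1 hD
    obtain rfl : x = y := by simpa [sub_eq_zero] using hxy
    obtain rfl : t = s := by simpa [sub_eq_zero] using hts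
    have hpos := localPenalty_self_pos (A := A) (N := N) (ν := ν) (ν' := ν') he
      (fun h => hne (by rw [h]) : (t, x) ≠ (τ, ξ))
    have hzero : localPenalty A N e ν ν' τ ξ τ ξ ξ = 0 := by simp [localPenalty]
    simp only [F, hzero]
    linarith [hmax t ht.1 x ht.2]
  obtain ⟨a₀, ha₀⟩ := exists_forall_exists_isMaxOn_sub_penalty hΩ hF (by fun_prop)
    (fun _ _ => by positivity) ⟨⟨hτ, hξ⟩, hτ, hξ⟩ hlt
    (p := (· ∈ Metric.ball ((τ, ξ), (τ, ξ)) δ))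
    (mem_nhdsWithin_of_mem_nhds (Metric.ball_mem_nhds _ hδ)) hδ
  refine ⟨a₀, fun a ha b hb => ?_⟩
  obtain ⟨⟨⟨t, x⟩, s, y⟩, ⟨⟨ht, hx⟩, hs, hy⟩, hnear, hpen, hmaxω⟩ := ha₀
    (fun ω => a * ‖ω.1.2 - ω.2.2‖ ^ 2 + b * (ω.1.1 - ω.2.1) ^ 2) (by fun_prop) (by simp)
    (fun ω _ => by rw [mul_add]; gcongr)
  simp only [Metric.mem_ball, Prod.dist_eq, max_lt_iff] at hnear
  simp only [dist_eq_norm, Real.norm_eq_abs] at hnear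
  exact ⟨t, ht, s, hs, x, hx, y, hy, hnear.1.1, hnear.2.1, hnear.1.2, hnear.2.2, hpen,
    fun t' ht' x' hx' s' hs' y' hy' => hmaxω ((t', x'), s', y') ⟨⟨ht', hx'⟩, hs', hy'⟩⟩

lemma exists_forall_exists_doubled_max_expansion (hK : IsCompact K)
    (hu : ContinuousOn (fun z : ℝ × H => u z.1 z.2) (Set.Icc t₀ t₁ ×ˢ K))
    (hw : ContinuousOn (fun z : ℝ × H => w z.1 z.2) (Set.Icc t₀ t₁ ×ˢ K))
    (hτ : τ ∈ Set.Icc t₀ t₁) (hξ : ξ ∈ K) (he : 0 < e)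
    (hmax : ∀ t ∈ Set.Icc t₀ t₁, ∀ x ∈ K, u t x + w t x ≤ u τ ξ + w τ ξ + (A * (t - τ) +
      N * (t - τ) ^ 2 + inner ℝ (ν + ν') (x - ξ) + e * ‖x - ξ‖ ^ 2)) {δ : ℝ} (hδ : 0 < δ) :
    ∃ a, δ⁻¹ ≤ a ∧ ∀ δ' > 0, ∃ b ≥ 0, ∃ t ∈ Set.Icc t₀ t₁, ∃ s ∈ Set.Icc t₀ t₁, ∃ x ∈ K, ∃ y ∈ K,
      |t - τ| < δ ∧ |s - τ| < δ ∧ ‖x - ξ‖ < δ ∧ ‖y - ξ‖ < δ ∧ a * ‖x - y‖ ^ 2 < δ ∧ |t - s| < δ' ∧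
      ∀ t' ∈ Set.Icc t₀ t₁, ∀ x' ∈ K, ∀ s' ∈ Set.Icc t₀ t₁, ∀ y' ∈ K, u t' x' + w s' y' ≤
        u t x + w s y +
          ((A + 2 * (N + 1) * (t - τ) + 2 * b * (t - s)) * (t' - t) +
            inner ℝ (ν + (2 * e) • (x - ξ) + (2 * a) • (x - y)) (x' - x)) +
          (-(2 * b * (t - s)) * (s' - s) +
            inner ℝ (ν' + (2 * e) • (y - ξ) + (2 * a) • (y - x)) (y' - y)) +
          (a * ‖(x' - x) - (y' - y)‖ ^ 2 + b * ((t' - t) - (s' - s)) ^ 2 +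
            e * (‖x' - x‖ ^ 2 + ‖y' - y‖ ^ 2) + (N + 1) * (t' - t) ^ 2) := by
  obtain ⟨a₀, ha₀⟩ := exists_forall_exists_doubled_max hK hu hw hτ hξ he hmax hδ
  refine ⟨max a₀ δ⁻¹, le_max_right .., fun δ' hδ' => ?_⟩
  set a := max a₀ δ⁻¹
  have ha : 0 < a := (inv_pos.2 hδ).trans_le (le_max_right ..)
  set b := max a₀ (δ / δ' ^ 2)
  have hb : 0 < b := (by positivity : 0 < δ / δ' ^ 2).trans_le (le_max_right ..)
  obtain ⟨t, ht, s, hs, x, hx, y, hy, htτ, hsτ, hxξ, hyξ, hpen, hmax'⟩ :=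
    ha₀ a (le_max_left ..) b (le_max_left ..)
  have hax : 0 ≤ a * ‖x - y‖ ^ 2 := mul_nonneg ha.le (sq_nonneg _)
  have hbt : 0 ≤ b * (t - s) ^ 2 := mul_nonneg hb.le (sq_nonneg _)
  refine ⟨b, hb.le, t, ht, s, hs, x, hx, y, hy, htτ, hsτ, hxξ, hyξ, by linarith, ?_,
    fun t' ht' x' hx' s' hs' y' hy' => ?_⟩
  · refine abs_lt_of_sq_lt_sq ?_ hδ'.le
    have hle : δ / δ' ^ 2 * (t - s) ^ 2 ≤ b * (t - s) ^ 2 := by gcongr; exact le_max_right ..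
    have hlt : δ / δ' ^ 2 * (t - s) ^ 2 < δ := by linarith
    rwa [div_mul_eq_mul_div, div_lt_iff₀ (by positivity), mul_lt_mul_iff_right₀ hδ] at hlt
  · linarith [hmax' t' ht' x' hx' s' hs' y' hy',
      localPenalty_add_coupling_eq A N e a b ν ν' τ ξ t t' s s' x x' y y']

end Doubling

section DoubledSuperjets

variable {H : Type*} [NormedAddCommGroup H] [InnerProductSpace ℝ H]

lemma norm_add_two_smul_sub_lt {ρ δ' δ e a : ℝ} {q ν z₀ w w₀ : H} (he : 0 < e) (ha : 0 ≤ a)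
    (hz : ‖z₀‖ < δ') (hw : ‖w₀ - w‖ ≤ 2 * ρ) (hq : ‖q - (ν + (2 * e) • z₀ + (2 * a) • w₀)‖ < ρ)
    (hlt : ρ + 2 * e * δ' + 4 * a * ρ < δ) : ‖q - (ν + (2 * a) • w)‖ < δ := by
  have hsplit : q - (ν + (2 * a) • w) = (q - (ν + (2 * e) • z₀ + (2 * a) • w₀)) +
      ((2 * e) • z₀ + (2 * a) • (w₀ - w)) := by
    rw [smul_sub]
    abel
  calc ‖q - (ν + (2 * a) • w)‖
      ≤ ‖q - (ν + (2 * e) • z₀ + (2 * a) • w₀)‖ +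
          (‖(2 * e) • z₀‖ + ‖(2 * a) • (w₀ - w)‖) := by
        rw [hsplit]
        exact (norm_add_le _ _).trans (by gcongr; exact norm_add_le _ _)
    _ ≤ ρ + (2 * e * δ' + 2 * a * (2 * ρ)) := by
        rw [norm_smul, norm_smul, Real.norm_of_nonneg (by positivity),
          Real.norm_of_nonneg (by positivity)]
        gcongr
    _ < δ := by linarith

lemma exists_doubling_parameters (e N δ : ℝ) (hδ : 0 < δ) :
    ∃ δ₁ > 0, δ₁ < δ ∧ ∀ a δ' θ θ', a * θ ^ 2 < δ₁ → θ' < δ' →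
      ∃ ρ > 0, δ₁ + ρ < δ ∧ ρ + 2 * e * δ₁ + 4 * a * ρ < δ ∧ 2 * (N + 1) * δ₁ + 2 * ρ < δ ∧
        a * (θ + 2 * ρ) ^ 2 < δ ∧ θ' + 2 * ρ < δ' := by
  have heventually {c : ℝ} (f : ℝ → ℝ) (hf : Continuous f) (h0 : f 0 < c) :
      ∀ᶠ ρ in 𝓝[>] 0, f ρ < c :=
    (hf.tendsto 0).mono_left nhdsWithin_le_nhds |>.eventually (gt_mem_nhds h0)
  obtain ⟨δ₁, ⟨hlt, he, hN⟩, hδ₁⟩ := (((heventually (c := δ) id (by fun_prop) hδ).and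
    ((heventually (c := δ) (2 * e * ·) (by fun_prop) (by simpa)).and
      (heventually (c := δ) (2 * (N + 1) * ·) (by fun_prop) (by simpa)))).and
        self_mem_nhdsWithin).exists
  refine ⟨δ₁, hδ₁, hlt, fun a δ' θ θ' ha hθ' => ?_⟩
  obtain ⟨ρ, ⟨h₁, h₂, h₃, h₄, h₅⟩, hρ⟩ :=
    (((heventually (c := δ) (δ₁ + ·) (by fun_prop) (by simpa)).and
      ((heventually (c := δ) (fun ρ => ρ + 2 * e * δ₁ + 4 * a * ρ) (by fun_prop) (by simpa)).and
        ((heventually (c := δ) (fun ρ => 2 * (N + 1) * δ₁ + 2 * ρ) (by fun_prop) (by simpa)).and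
          ((heventually (c := δ) (fun ρ => a * (θ + 2 * ρ) ^ 2) (by fun_prop)
            (by simpa using ha.trans hlt)).and
              (heventually (c := δ') (θ' + 2 * ·) (by fun_prop) (by simpa)))))).and
                self_mem_nhdsWithin).exists
  exact ⟨ρ, hρ, h₁, h₂, h₃, h₄, h₅⟩

variable [FiniteDimensional ℝ H] {t₀ t₁ : ℝ} {K : Set H} {u w : ℝ → H → ℝ} {τ : ℝ} {ξ : H}
  {A N e : ℝ} {ν ν' : H}

lemma exists_forall_exists_doubled_superjets (hK : IsCompact K)
    (hu : ContinuousOn (fun z : ℝ × H => u z.1 z.2) (Set.Icc t₀ t₁ ×ˢ K))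
    (hw : ContinuousOn (fun z : ℝ × H => w z.1 z.2) (Set.Icc t₀ t₁ ×ˢ K))
    (hτ : τ ∈ Set.Icc t₀ t₁) (hξ : ξ ∈ K) (hN : 0 ≤ N) (he : 0 < e)
    (hmax : ∀ t ∈ Set.Icc t₀ t₁, ∀ x ∈ K, u t x + w t x ≤ u τ ξ + w τ ξ + (A * (t - τ) +
      N * (t - τ) ^ 2 + inner ℝ (ν + ν') (x - ξ) + e * ‖x - ξ‖ ^ 2)) {δ : ℝ} (hδ : 0 < δ) :
    ∃ a, δ⁻¹ ≤ a ∧ ∀ δ' > 0, ∃ t ∈ Set.Icc t₀ t₁, ∃ s ∈ Set.Icc t₀ t₁, ∃ x ∈ K, ∃ y ∈ K,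
      ∃ p q X p' q' Y, |t - τ| < δ ∧ |s - τ| < δ ∧ ‖x - ξ‖ < δ ∧ ‖y - ξ‖ < δ ∧
      a * ‖x - y‖ ^ 2 < δ ∧ |t - s| < δ' ∧ A - δ < p + p' ∧
      ‖q - (ν + (2 * a) • (x - y))‖ < δ ∧ ‖q' - (ν' + (2 * a) • (y - x))‖ < δ ∧
      HasParabolicSuperjet u p q X (Set.Icc t₀ t₁) K t x ∧
      HasParabolicSuperjet w p' q' Y (Set.Icc t₀ t₁) K s y ∧
      ∀ h k, 1 / 2 * X h h + 1 / 2 * Y k k ≤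
        2 * a * ‖h - k‖ ^ 2 + (2 * e + δ) * (‖h‖ ^ 2 + ‖k‖ ^ 2) := by
  obtain ⟨δ₁, hδ₁, hδ₁δ, hpar⟩ := exists_doubling_parameters e N δ hδ
  obtain ⟨a, ha, hdbl⟩ := exists_forall_exists_doubled_max_expansion hK hu hw hτ hξ he hmax hδ₁
  have ha0 : 0 < a := (inv_pos.2 hδ₁).trans_le ha
  refine ⟨a, (inv_anti₀ hδ₁ hδ₁δ.le).trans ha, fun δ' hδ' => ?_⟩
  obtain ⟨b, hb, t₂, ht₂, s₂, hs₂, x₂, hx₂, y₂, hy₂, ht₂τ, hs₂τ, hx₂ξ, hy₂ξ, hxy₂, hts₂, hle⟩ :=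
    hdbl δ' hδ'
  obtain ⟨ρ, hρ, hρ₁, hρ₂, hρ₃, hρ₄, hρ₅⟩ := hpar a δ' ‖x₂ - y₂‖ |t₂ - s₂| hxy₂ hts₂
  obtain ⟨t, ht, s, hs, x, hx, y, hy, p, q, X, p', q', Y, htt₂, hss₂, hxx₂, hyy₂, hp, hp', hq, hq',
    hX, hY, hXY⟩ := exists_parabolicSuperjets_of_add_le isCompact_Icc hK hu hw ht₂ hs₂ hx₂ hy₂
      ha0.le hb he.le (by linarith) hle hρ
  have hxy : ‖x₂ - y₂ - (x - y)‖ ≤ 2 * ρ := by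
    rw [sub_sub_sub_comm, two_mul]
    exact (norm_sub_le _ _).trans (add_le_add (norm_sub_rev x₂ x ▸ hxx₂.le)
      (norm_sub_rev y₂ y ▸ hyy₂.le))
  have hyx : ‖y₂ - x₂ - (y - x)‖ ≤ 2 * ρ := by
    rwa [← norm_neg, show -(y₂ - x₂ - (y - x)) = x₂ - y₂ - (x - y) by abel]
  refine ⟨t, ht, s, hs, x, hx, y, hy, p, q, X, p', q', Y, ?_, ?_, ?_, ?_, ?_, ?_, ?_,
    norm_add_two_smul_sub_lt he ha0.le hx₂ξ hxy hq hρ₂,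
    norm_add_two_smul_sub_lt he ha0.le hy₂ξ hyx hq' hρ₂, hX, hY, fun h k => ?_⟩
  · linarith [abs_sub_le t t₂ τ]
  · linarith [abs_sub_le s s₂ τ]
  · linarith [norm_sub_le_norm_sub_add_norm_sub x x₂ ξ]
  · linarith [norm_sub_le_norm_sub_add_norm_sub y y₂ ξ]
  · refine lt_of_le_of_lt ?_ hρ₄
    gcongr
    linarith [norm_sub_norm_le (x - y) (x₂ - y₂), norm_sub_rev (x - y) (x₂ - y₂)]
  · linarith [abs_sub_le t t₂ s, abs_sub_le t₂ s₂ s, abs_sub_comm s₂ s]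
  · have hmul := mul_le_mul_of_nonneg_left ht₂τ.le (by linarith : 0 ≤ 2 * (N + 1))
    have hmul' := mul_le_mul_of_nonneg_left (neg_abs_le (t₂ - τ)) (by linarith : 0 ≤ 2 * (N + 1))
    linarith [(abs_lt.1 hp).1, (abs_lt.1 hp').1]
  · refine (hXY h k).trans ?_
    gcongr
    linarith

end DoubledSuperjets

section EuclideanCoordinates

variable {d : ℕ}

lemma eunorm_eq_norm_toLp (v : Fin d → ℝ) : eunorm v = ‖WithLp.toLp 2 v‖ := by
  simp [eunorm, EuclideanSpace.norm_eq]

lemma dotp_eq_inner_toLp (v w : Fin d → ℝ) :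
    dotp v w = inner ℝ (WithLp.toLp 2 v) (WithLp.toLp 2 w) := by
  simp [dotp, PiLp.inner_apply, mul_comm]

lemma eunorm_nonneg (v : Fin d → ℝ) : 0 ≤ eunorm v := Real.sqrt_nonneg _

lemma eunorm_sq (v : Fin d → ℝ) : eunorm v ^ 2 = ∑ i, v i ^ 2 :=
  Real.sq_sqrt (by positivity)

lemma eunorm_add_le (v w : Fin d → ℝ) : eunorm (v + w) ≤ eunorm v + eunorm w := by
  simpa only [eunorm_eq_norm_toLp, WithLp.toLp_add] using norm_add_le _ _

lemma eunorm_neg (v : Fin d → ℝ) : eunorm (-v) = eunorm v := by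
  simp [eunorm]

lemma eunorm_zero : eunorm (0 : Fin d → ℝ) = 0 := by
  simp [eunorm]

lemma eunorm_smul (c : ℝ) (v : Fin d → ℝ) : eunorm (c • v) = |c| * eunorm v := by
  simp only [eunorm_eq_norm_toLp, WithLp.toLp_smul, norm_smul, Real.norm_eq_abs]

lemma abs_dotp_le (v w : Fin d → ℝ) : |dotp v w| ≤ eunorm v * eunorm w := by
  simpa only [dotp_eq_inner_toLp, eunorm_eq_norm_toLp] using abs_real_inner_le_norm _ _

lemma dotp_sub_left (u v w : Fin d → ℝ) : dotp (u - v) w = dotp u w - dotp v w :=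
  sub_dotProduct u v w

lemma dotp_sub_right (u v w : Fin d → ℝ) : dotp u (v - w) = dotp u v - dotp u w :=
  dotProduct_sub u v w

lemma dotp_neg_left (v w : Fin d → ℝ) : dotp (-v) w = -dotp v w :=
  neg_dotProduct v w

lemma dotp_smul_left (c : ℝ) (v w : Fin d → ℝ) : dotp (c • v) w = c * dotp v w :=
  smul_dotProduct c v w

lemma dotp_smul_right (c : ℝ) (v w : Fin d → ℝ) : dotp v (c • w) = c * dotp v w :=
  dotProduct_smul c v w

lemma dotp_self (v : Fin d → ℝ) : dotp v v = eunorm v ^ 2 := by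
  rw [dotp_eq_inner_toLp, eunorm_eq_norm_toLp, real_inner_self_eq_norm_sq]

@[fun_prop]
lemma continuous_eunorm : Continuous (eunorm : (Fin d → ℝ) → ℝ) := by
  unfold eunorm
  fun_prop

@[fun_prop]
lemma continuous_dotp : Continuous fun p : (Fin d → ℝ) × (Fin d → ℝ) => dotp p.1 p.2 := by
  unfold dotp
  fun_prop

@[fun_prop]
lemma continuous_matNorm : Continuous (matNorm : Matrix (Fin d) (Fin d) ℝ → ℝ) := by
  unfold matNorm
  fun_prop

lemma norm_le_eunorm (v : Fin d → ℝ) : ‖v‖ ≤ eunorm v :=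
  (pi_norm_le_iff_of_nonneg (eunorm_nonneg v)).2 fun i => by
    simpa only [eunorm_eq_norm_toLp] using PiLp.norm_apply_le (WithLp.toLp 2 v) i

lemma matNorm_nonneg (M : Matrix (Fin d) (Fin d) ℝ) : 0 ≤ matNorm M := Real.sqrt_nonneg _

lemma matNorm_zero : matNorm (0 : Matrix (Fin d) (Fin d) ℝ) = 0 := by
  simp [matNorm]

lemma matNorm_sq (M : Matrix (Fin d) (Fin d) ℝ) :
    matNorm M ^ 2 = ∑ j, eunorm (fun i => M i j) ^ 2 := by
  simp_rw [eunorm_sq]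
  rw [Finset.sum_comm]
  exact Real.sq_sqrt (by positivity)

attribute [local instance] Matrix.frobeniusNormedAddCommGroup in
lemma matNorm_add_le (M N : Matrix (Fin d) (Fin d) ℝ) :
    matNorm (M + N) ≤ matNorm M + matNorm N := by
  have hnorm (M : Matrix (Fin d) (Fin d) ℝ) : matNorm M = ‖M‖ := by
    simp [matNorm, Matrix.frobenius_norm_def, Real.sqrt_eq_rpow]
  simpa only [hnorm] using norm_add_le M N

lemma eunorm_vecMul_le (q : Fin d → ℝ) (M : Matrix (Fin d) (Fin d) ℝ) :
    eunorm (vecMul q M) ≤ eunorm q * matNorm M := by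
  refine abs_le_of_sq_le_sq' ?_ (mul_nonneg (eunorm_nonneg _) (matNorm_nonneg _)) |>.2
  rw [mul_pow, matNorm_sq, eunorm_sq (vecMul q M), Finset.mul_sum]
  refine Finset.sum_le_sum fun j _ => ?_
  rw [← mul_pow, ← sq_abs]
  exact pow_le_pow_left₀ (abs_nonneg _) (abs_dotp_le q fun i => M i j) 2

lemma trace_mul_transpose_mul (S X : Matrix (Fin d) (Fin d) ℝ) :
    trace (S * Sᵀ * X) = ∑ j, dotp (X *ᵥ fun i => S i j) fun i => S i j := by
  rw [Matrix.mul_assoc, trace_mul_comm, Matrix.mul_assoc, trace]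
  exact Finset.sum_congr rfl fun j _ =>
    (dotProduct_comm _ _ : (fun i => S i j) ⬝ᵥ (X *ᵥ fun i => S i j) = _)

lemma half_trace_sub_half_trace_le {S S' X Y : Matrix (Fin d) (Fin d) ℝ} {a e : ℝ}
    (hXY : ∀ h k, 1 / 2 * dotp (X *ᵥ h) h - 1 / 2 * dotp (Y *ᵥ k) k ≤
      2 * a * eunorm (h - k) ^ 2 + e * (eunorm h ^ 2 + eunorm k ^ 2)) :
    1 / 2 * trace (S * Sᵀ * X) - 1 / 2 * trace (S' * S'ᵀ * Y) ≤
      2 * a * matNorm (S - S') ^ 2 + e * (matNorm S ^ 2 + matNorm S' ^ 2) := by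
  simp only [trace_mul_transpose_mul, matNorm_sq, Finset.mul_sum, ← Finset.sum_sub_distrib,
    ← Finset.sum_add_distrib]
  exact Finset.sum_le_sum fun j _ => hXY _ _

end EuclideanCoordinates

section Jets

variable {d : ℕ}

/-- The symmetrised Gram matrix of the bilinear form `A` on the family `b`. -/
def symmGram {H : Type*} [NormedAddCommGroup H] [NormedSpace ℝ H] (A : H →L[ℝ] H →L[ℝ] ℝ)
    (b : Fin d → H) : Matrix (Fin d) (Fin d) ℝ :=
  of fun i j => 1 / 2 * (A (b i) (b j) + A (b j) (b i))

lemma isSymm_symmGram {H : Type*} [NormedAddCommGroup H] [NormedSpace ℝ H]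
    (A : H →L[ℝ] H →L[ℝ] ℝ) (b : Fin d → H) : (symmGram A b).IsSymm := by
  ext i j
  simp [symmGram, add_comm]

lemma dotp_symmGram_mulVec_self {H : Type*} [NormedAddCommGroup H] [NormedSpace ℝ H]
    (A : H →L[ℝ] H →L[ℝ] ℝ) (b : Fin d → H) (v : Fin d → ℝ) :
    dotp (symmGram A b *ᵥ v) v = A (∑ i, v i • b i) (∑ i, v i • b i) := by
  have hexp : A (∑ i, v i • b i) (∑ i, v i • b i) = ∑ i, ∑ j, v i * v j * A (b i) (b j) := by
    simp only [map_sum, map_smul, _root_.sum_apply, _root_.smul_apply, smul_eq_mul,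
      Finset.mul_sum]
    rw [Finset.sum_comm]
    simp only [mul_left_comm, mul_assoc]
  have hcomm := hexp.trans Finset.sum_comm
  rw [← mul_one (A _ _), ← add_halves (1 : ℝ), mul_add]
  nth_rw 1 [hexp]
  rw [hcomm]
  simp only [dotp, mulVec, dotProduct, symmGram, of_apply, Finset.sum_mul,
    ← Finset.sum_add_distrib]
  exact Finset.sum_congr rfl fun i _ => Finset.sum_congr rfl fun j _ => by ring

lemma InSuperjet.inSubjet_of_neg {K : Set (Fin d → ℝ)} {v : ℝ → (Fin d → ℝ) → ℝ} {t p : ℝ}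
    {x q : Fin d → ℝ} {X : Matrix (Fin d) (Fin d) ℝ}
    (h : InSuperjet K (fun t x => -v t x) t x p q X) : InSubjet K v t x (-p) (-q) (-X) := by
  obtain ⟨hX, o, ho, ho0, hlim, δ, hδ, hle⟩ := h
  refine ⟨hX.neg, fun r => -o r, ho.neg, by simp [ho0], by simpa [neg_div] using hlim.neg, δ, hδ,
    fun s hs y hy hst hyx => ?_⟩
  have hneg := hle s hs y hy hst hyx
  simp only [dotp, neg_mulVec, Pi.neg_apply, neg_mul, Finset.sum_neg_distrib] at hneg ⊢
  linarith

lemma sum_smul_single_one_eq_toLp (v : Fin d → ℝ) :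
    ∑ i, v i • EuclideanSpace.single i (1 : ℝ) = WithLp.toLp 2 v := by
  ext j
  simp [Pi.single_apply]

lemma HasParabolicSuperjet.inSuperjet {K : Set (Fin d → ℝ)} {u : ℝ → (Fin d → ℝ) → ℝ} {T t p : ℝ}
    {x q : EuclideanSpace ℝ (Fin d)}
    {A : EuclideanSpace ℝ (Fin d) →L[ℝ] EuclideanSpace ℝ (Fin d) →L[ℝ] ℝ}
    (h : HasParabolicSuperjet (fun t z => u t z.ofLp) p q A (Set.Icc 0 T) {z | z.ofLp ∈ K} t x)
    (ht : t < T) :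
    InSuperjet K u t x.ofLp p q.ofLp (symmGram A fun i => EuclideanSpace.single i 1) := by
  obtain ⟨C, hC⟩ := h
  obtain ⟨δ, hδ, hle⟩ := Metric.mem_nhdsWithin_iff.1 hC
  refine ⟨isSymm_symmGram _ _, fun r => |C| * r ^ 2, by fun_prop, by simp, ?_,
    min δ (T - t), lt_min hδ (sub_pos.2 ht), fun s hs y hy hst hyx => ?_⟩
  · have hlim : Tendsto (fun r : ℝ => |C| * r) (𝓝[>] 0) (𝓝 0) :=
      ((continuous_const_mul |C|).tendsto' 0 0 (mul_zero _)).mono_left nhdsWithin_le_nhds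
    refine hlim.congr' ?_
    filter_upwards [self_mem_nhdsWithin] with r hr
    rw [sq, ← mul_assoc, mul_div_cancel_right₀ _ (ne_of_gt hr)]
  · rw [lt_min_iff] at hst hyx
    rw [eunorm_eq_norm_toLp] at hyx
    have hnear : ((s, WithLp.toLp 2 y) : ℝ × EuclideanSpace ℝ (Fin d)) ∈
        Metric.ball (t, x) δ ∩ Set.Icc 0 T ×ˢ {z | z.ofLp ∈ K} := by
      refine ⟨max_lt hst.1 ?_, ⟨hs, by linarith [le_abs_self (s - t)]⟩, hy⟩
      simpa [dist_eq_norm] using hyx.1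
    have hexp : u s y ≤ u t x.ofLp + p * (s - t) + inner ℝ q (WithLp.toLp 2 y - x) +
        1 / 2 * A (WithLp.toLp 2 y - x) (WithLp.toLp 2 y - x) + C * (s - t) ^ 2 := hle hnear
    have herr : C * (s - t) ^ 2 ≤ |C| * (|s - t| + eunorm (y - x.ofLp) ^ 2) ^ 2 := by
      rw [← sq_abs (s - t)]
      gcongr
      · exact le_abs_self C
      · exact le_add_of_nonneg_right (sq_nonneg _)
    rw [dotp_symmGram_mulVec_self, sum_smul_single_one_eq_toLp, dotp_eq_inner_toLp]
    exact hexp.trans (add_le_add_right herr _)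

end Jets

section DoublingJetPairs

variable {d : ℕ}

/-- Candidate jets `(p, q, X)` at `(t, x)` and `(p', q', Y)` at `(s, y)` obtained by doubling the
variables with spatial penalty `scale * |x - y|²`; `err` is the tolerance of the construction. -/
structure JetPair (d : ℕ) where
  (scale err t s p p' : ℝ)
  (x y q q' : Fin d → ℝ)
  (X Y : Matrix (Fin d) (Fin d) ℝ)

/-- `J` consists of a superjet of `u` and a subjet of `v` near the point `(τ, ξ)`, where `u - v` has
superjet `(A, ν - ν', 2 * e)`, up to `J.err`. The modulus `ω` prescribes how small the time gap is
compared to the spatial scale. -/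
structure IsDoublingJetPair (K : Set (Fin d → ℝ)) (T : ℝ) (u v : ℝ → (Fin d → ℝ) → ℝ) (τ : ℝ)
    (ξ : Fin d → ℝ) (A : ℝ) (ν ν' : Fin d → ℝ) (e : ℝ) (ω : ℝ → ℝ) (J : JetPair d) : Prop where
  t_mem : J.t ∈ Set.Icc 0 T
  s_mem : J.s ∈ Set.Icc 0 T
  x_mem : J.x ∈ K
  y_mem : J.y ∈ K
  superjet : InSuperjet K u J.t J.x J.p J.q J.X
  subjet : InSubjet K v J.s J.y J.p' J.q' J.Y
  abs_t_sub_lt : |J.t - τ| < J.err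
  abs_s_sub_lt : |J.s - τ| < J.err
  eunorm_x_sub_lt : eunorm (J.x - ξ) < J.err
  eunorm_y_sub_lt : eunorm (J.y - ξ) < J.err
  inv_err_le : J.err⁻¹ ≤ J.scale
  scale_mul_lt : J.scale * eunorm (J.x - J.y) ^ 2 < J.err
  abs_t_sub_s_lt : |J.t - J.s| < ω J.scale
  lt_p_sub : A - J.err < J.p - J.p'
  eunorm_q_sub_lt : eunorm (J.q - (ν + (2 * J.scale) • (J.x - J.y))) < J.err
  eunorm_q'_sub_lt : eunorm (J.q' - (ν' + (2 * J.scale) • (J.x - J.y))) < J.err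
  half_sub_half_le : ∀ h k, 1 / 2 * dotp (J.X *ᵥ h) h - 1 / 2 * dotp (J.Y *ᵥ k) k ≤
    2 * J.scale * eunorm (h - k) ^ 2 + (2 * e + J.err) * (eunorm h ^ 2 + eunorm k ^ 2)

variable {K : Set (Fin d → ℝ)} {T : ℝ} {u v : ℝ → (Fin d → ℝ) → ℝ} {τ : ℝ}
  {ξ : Fin d → ℝ} {A N e : ℝ} {ν ν' : Fin d → ℝ} {ω : ℝ → ℝ}

lemma continuousOn_uncurry_comp_ofLp {u : ℝ → (Fin d → ℝ) → ℝ}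
    (hu : ContinuousOn (fun z : ℝ × (Fin d → ℝ) => u z.1 z.2) (Set.Icc 0 T ×ˢ K)) :
    ContinuousOn (fun z : ℝ × EuclideanSpace ℝ (Fin d) => u z.1 z.2.ofLp)
      (Set.Icc 0 T ×ˢ {z | z.ofLp ∈ K}) :=
  hu.comp (f := fun z : ℝ × EuclideanSpace ℝ (Fin d) => (z.1, z.2.ofLp)) (by fun_prop)
    fun _ hz => hz

lemma exists_isDoublingJetPair (hK : IsCompact K)
    (hu : ContinuousOn (fun z : ℝ × (Fin d → ℝ) => u z.1 z.2) (Set.Icc 0 T ×ˢ K))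
    (hv : ContinuousOn (fun z : ℝ × (Fin d → ℝ) => v z.1 z.2) (Set.Icc 0 T ×ˢ K))
    (hτ : τ ∈ Set.Ico 0 T) (hξ : ξ ∈ K) (hN : 0 ≤ N) (he : 0 < e)
    (hmax : ∀ t ∈ Set.Icc 0 T, ∀ x ∈ K, u t x - v t x ≤ u τ ξ - v τ ξ + (A * (t - τ) +
      N * (t - τ) ^ 2 + dotp (ν - ν') (x - ξ) + e * eunorm (x - ξ) ^ 2)) (hω : ∀ a, 0 < ω a)
    {δ : ℝ} (hδ : 0 < δ) (hδT : δ ≤ T - τ) :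
    ∃ J, J.err = δ ∧ IsDoublingJetPair K T u v τ ξ A ν ν' e ω J := by
  have hK' : IsCompact {z : EuclideanSpace ℝ (Fin d) | z.ofLp ∈ K} :=
    (PiLp.homeomorph 2 _).isCompact_preimage.2 hK
  obtain ⟨a, ha, hpair⟩ := exists_forall_exists_doubled_superjets hK'
    (u := fun t z => u t z.ofLp) (w := fun t z => -v t z.ofLp)
    (continuousOn_uncurry_comp_ofLp hu) (continuousOn_uncurry_comp_ofLp hv).neg
    (Set.Ico_subset_Icc_self hτ) (ξ := WithLp.toLp 2 ξ) hξ hN he (A := A)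
    (ν := WithLp.toLp 2 ν) (ν' := WithLp.toLp 2 (-ν')) (fun t ht x hx => by
      have hle := hmax t ht x.ofLp hx
      rw [dotp_eq_inner_toLp, eunorm_eq_norm_toLp, sub_eq_add_neg ν] at hle
      exact hle) hδ
  obtain ⟨t, ht, s, hs, x, hx, y, hy, p, q, X, p', q', Y, htτ, hsτ, hxξ, hyξ, hxy, hts, hp, hq,
    hq', hX, hY, hXY⟩ := hpair (ω a) (hω a)
  have htT : t < T := by linarith [(abs_lt.1 htτ).2]
  have hsT : s < T := by linarith [(abs_lt.1 hsτ).2]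
  refine ⟨⟨a, δ, t, s, p, -p', x, y, q, -q'.ofLp, symmGram X fun i => EuclideanSpace.single i 1,
    -symmGram Y fun i => EuclideanSpace.single i 1⟩, rfl, ht, hs, hx, hy, hX.inSuperjet htT,
    (hY.inSuperjet hsT).inSubjet_of_neg, htτ, hsτ, ?_, ?_, ha, ?_, hts, ?_, ?_, ?_, fun h k => ?_⟩
  · simpa [eunorm_eq_norm_toLp] using hxξ
  · simpa [eunorm_eq_norm_toLp] using hyξ
  · simpa [eunorm_eq_norm_toLp] using hxy
  · simpa using hp
  · simpa [eunorm_eq_norm_toLp] using hq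
  · rw [← eunorm_neg, eunorm_eq_norm_toLp]
    refine (congrArg norm ?_).trans_lt hq'
    ext i
    simp
    ring
  · have hle := hXY (WithLp.toLp 2 h) (WithLp.toLp 2 k)
    simp only [neg_mulVec, dotp_neg_left, dotp_symmGram_mulVec_self, sum_smul_single_one_eq_toLp,
      eunorm_eq_norm_toLp, WithLp.toLp_sub]
    linarith

end DoublingJetPairs

section DoublingLimits

variable {d : ℕ} {K : Set (Fin d → ℝ)} {T τ A e : ℝ} {u v : ℝ → (Fin d → ℝ) → ℝ}
  {ξ ν ν' : Fin d → ℝ} {ω : ℝ → ℝ} {ι : Type*} {l : Filter ι} {J : ι → JetPair d}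

lemma tendsto_of_tendsto_eunorm_sub {w : ι → Fin d → ℝ} {w₀ : Fin d → ℝ}
    (h : Tendsto (fun k => eunorm (w k - w₀)) l (𝓝 0)) : Tendsto w l (𝓝 w₀) :=
  tendsto_iff_norm_sub_tendsto_zero.2 <|
    squeeze_zero (fun _ => norm_nonneg _) (fun _ => norm_le_eunorm _) h

namespace IsDoublingJetPair

lemma err_pos {J : JetPair d} (hJ : IsDoublingJetPair K T u v τ ξ A ν ν' e ω J) : 0 < J.err :=
  (abs_nonneg _).trans_lt hJ.abs_t_sub_lt

lemma scale_pos {J : JetPair d} (hJ : IsDoublingJetPair K T u v τ ξ A ν ν' e ω J) : 0 < J.scale :=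
  (inv_pos.2 hJ.err_pos).trans_le hJ.inv_err_le

lemma inv_scale_le {J : JetPair d} (hJ : IsDoublingJetPair K T u v τ ξ A ν ν' e ω J) :
    J.scale⁻¹ ≤ J.err :=
  inv_le_of_inv_le₀ hJ.err_pos hJ.inv_err_le

variable (hJ : ∀ k, IsDoublingJetPair K T u v τ ξ A ν ν' e ω (J k))
  (herr : Tendsto (fun k => (J k).err) l (𝓝 0))

include hJ herr

lemma tendsto_inv_scale : Tendsto (fun k => (J k).scale⁻¹) l (𝓝 0) :=
  squeeze_zero (fun k => (inv_pos.2 (hJ k).scale_pos).le) (fun k => (hJ k).inv_scale_le) herr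

lemma tendsto_t : Tendsto (fun k => (J k).t) l (𝓝 τ) :=
  tendsto_iff_norm_sub_tendsto_zero.2 <|
    squeeze_zero (fun _ => norm_nonneg _) (fun k => (hJ k).abs_t_sub_lt.le) herr

lemma tendsto_s : Tendsto (fun k => (J k).s) l (𝓝 τ) :=
  tendsto_iff_norm_sub_tendsto_zero.2 <|
    squeeze_zero (fun _ => norm_nonneg _) (fun k => (hJ k).abs_s_sub_lt.le) herr

lemma tendsto_x : Tendsto (fun k => (J k).x) l (𝓝 ξ) :=
  tendsto_of_tendsto_eunorm_sub <|
    squeeze_zero (fun _ => eunorm_nonneg _) (fun k => (hJ k).eunorm_x_sub_lt.le) herr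

lemma tendsto_y : Tendsto (fun k => (J k).y) l (𝓝 ξ) :=
  tendsto_of_tendsto_eunorm_sub <|
    squeeze_zero (fun _ => eunorm_nonneg _) (fun k => (hJ k).eunorm_y_sub_lt.le) herr

lemma tendsto_t_x : Tendsto (fun k => ((J k).t, (J k).x)) l (𝓝[Set.Icc 0 T ×ˢ K] (τ, ξ)) :=
  tendsto_nhdsWithin_iff.2 ⟨(tendsto_t hJ herr).prodMk_nhds (tendsto_x hJ herr),
    .of_forall fun k => ⟨(hJ k).t_mem, (hJ k).x_mem⟩⟩

lemma tendsto_s_y : Tendsto (fun k => ((J k).s, (J k).y)) l (𝓝[Set.Icc 0 T ×ˢ K] (τ, ξ)) :=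
  tendsto_nhdsWithin_iff.2 ⟨(tendsto_s hJ herr).prodMk_nhds (tendsto_y hJ herr),
    .of_forall fun k => ⟨(hJ k).s_mem, (hJ k).y_mem⟩⟩

lemma tendsto_eunorm_x_sub_y : Tendsto (fun k => eunorm ((J k).x - (J k).y)) l (𝓝 0) := by
  have h := (tendsto_x hJ herr).sub (tendsto_y hJ herr)
  rw [sub_self] at h
  exact (continuous_eunorm.tendsto' 0 0 eunorm_zero).comp h

lemma tendsto_scale_mul_sq :
    Tendsto (fun k => (J k).scale * eunorm ((J k).x - (J k).y) ^ 2) l (𝓝 0) :=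
  squeeze_zero (fun k => mul_nonneg (hJ k).scale_pos.le (sq_nonneg _))
    (fun k => (hJ k).scale_mul_lt.le) herr

lemma tendsto_q_sub :
    Tendsto (fun k => (J k).q - (2 * (J k).scale) • ((J k).x - (J k).y)) l (𝓝 ν) :=
  tendsto_of_tendsto_eunorm_sub <| squeeze_zero (fun _ => eunorm_nonneg _) (fun k => by
    rw [sub_sub, add_comm _ ν]
    exact (hJ k).eunorm_q_sub_lt.le) herr

lemma tendsto_q'_sub :
    Tendsto (fun k => (J k).q' - (2 * (J k).scale) • ((J k).x - (J k).y)) l (𝓝 ν') :=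
  tendsto_of_tendsto_eunorm_sub <| squeeze_zero (fun _ => eunorm_nonneg _) (fun k => by
    rw [sub_sub, add_comm _ ν']
    exact (hJ k).eunorm_q'_sub_lt.le) herr

lemma tendsto_q_sub_q' : Tendsto (fun k => (J k).q - (J k).q') l (𝓝 (ν - ν')) := by
  simpa only [sub_sub_sub_cancel_right] using (tendsto_q_sub hJ herr).sub (tendsto_q'_sub hJ herr)

lemma tendsto_eunorm_x_sub_y_add_mul_eunorm_q : Tendsto (fun k =>
    (eunorm ((J k).x - (J k).y) + (J k).scale⁻¹) * eunorm (J k).q) l (𝓝 0) := by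
  have hr := (continuous_eunorm.tendsto ν).comp (tendsto_q_sub hJ herr)
  have hxy := tendsto_eunorm_x_sub_y hJ herr
  have hlim := (((hxy.add (tendsto_inv_scale hJ herr)).mul hr).add
    ((tendsto_scale_mul_sq hJ herr).const_mul 2)).add (hxy.const_mul 2)
  simp only [add_zero, zero_mul, mul_zero] at hlim
  refine squeeze_zero (fun k => ?_) (fun k => ?_) hlim
  · exact mul_nonneg (add_nonneg (eunorm_nonneg _) (inv_pos.2 (hJ k).scale_pos).le)
      (eunorm_nonneg _)
  · have ha := (hJ k).scale_pos
    set w := (J k).x - (J k).y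
    have hq : eunorm (J k).q ≤
        eunorm ((J k).q - (2 * (J k).scale) • w) + 2 * (J k).scale * eunorm w := by
      simpa [eunorm_smul, abs_of_pos ha] using
        eunorm_add_le ((J k).q - (2 * (J k).scale) • w) ((2 * (J k).scale) • w)
    refine (mul_le_mul_of_nonneg_left hq
      (add_nonneg (eunorm_nonneg _) (inv_pos.2 ha).le)).trans_eq ?_
    simp only [Function.comp_apply]
    field_simp
    ring

lemma tendsto_mul_eunorm_q_of_le {F : ι → ℝ} {L : ℝ} (hF₀ : ∀ k, 0 ≤ F k)
    (hF : ∀ k, F k ≤ L * eunorm ((J k).x - (J k).y) + (J k).scale⁻¹) :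
    Tendsto (fun k => F k * eunorm (J k).q) l (𝓝 0) := by
  have hlim := (tendsto_eunorm_x_sub_y_add_mul_eunorm_q hJ herr).const_mul (max L 1)
  rw [mul_zero] at hlim
  refine squeeze_zero (fun k => mul_nonneg (hF₀ k) (eunorm_nonneg _)) (fun k => ?_) hlim
  rw [← mul_assoc]
  refine mul_le_mul_of_nonneg_right ((hF k).trans ?_) (eunorm_nonneg _)
  have hx := eunorm_nonneg ((J k).x - (J k).y)
  have ha := inv_pos.2 (hJ k).scale_pos
  nlinarith [le_max_left L 1, le_max_right L 1, hx, ha]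

lemma tendsto_inv_scale_mul_eunorm_q' :
    Tendsto (fun k => (J k).scale⁻¹ * eunorm (J k).q') l (𝓝 0) := by
  have hq := (continuous_eunorm.tendsto _).comp (tendsto_q_sub_q' hJ herr)
  have hlim := (tendsto_eunorm_x_sub_y_add_mul_eunorm_q hJ herr).add
    ((tendsto_inv_scale hJ herr).mul hq)
  rw [zero_mul, add_zero] at hlim
  refine squeeze_zero (fun k => ?_) (fun k => ?_) hlim
  · exact mul_nonneg (inv_pos.2 (hJ k).scale_pos).le (eunorm_nonneg _)
  · have ha := inv_pos.2 (hJ k).scale_pos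
    have hq' : eunorm (J k).q' ≤ eunorm (J k).q + eunorm ((J k).q - (J k).q') := by
      rw [← eunorm_neg ((J k).q - (J k).q')]
      simpa using eunorm_add_le (J k).q (-((J k).q - (J k).q'))
    have h₁ := mul_le_mul_of_nonneg_left hq' ha.le
    have h₂ := mul_nonneg (eunorm_nonneg ((J k).x - (J k).y)) (eunorm_nonneg (J k).q)
    simp only [Function.comp_apply]
    linarith

end IsDoublingJetPair

end DoublingLimits

section Coefficients

variable {d : ℕ}

/-- Structure conditions on the coefficients of the equation over `[0, T] × K` that enter the
comparison of two doubled jets: `α` is the one-sided Lipschitz constant of `f` in the unknown, `β`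
its Lipschitz constant in the gradient and `m` the modulus of `x ↦ f(t, x, r, z)`. -/
structure RegularCoefficients (K : Set (Fin d → ℝ)) (T : ℝ) (b : ℝ → (Fin d → ℝ) → (Fin d → ℝ))
    (σ : ℝ → (Fin d → ℝ) → Matrix (Fin d) (Fin d) ℝ)
    (f : ℝ → (Fin d → ℝ) → ℝ → (Fin d → ℝ) → ℝ) (α L β : ℝ) (m : ℝ → ℝ) : Prop where
  isCompact : IsCompact K
  continuousOn_b : ContinuousOn (fun p : ℝ × (Fin d → ℝ) => b p.1 p.2) (Set.Icc 0 T ×ˢ K)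
  continuousOn_σ : ContinuousOn (fun p : ℝ × (Fin d → ℝ) => σ p.1 p.2) (Set.Icc 0 T ×ˢ K)
  continuousOn_f : ContinuousOn
    (fun p : ℝ × (Fin d → ℝ) × ℝ × (Fin d → ℝ) => f p.1 p.2.1 p.2.2.1 p.2.2.2)
    (Set.Icc 0 T ×ˢ K ×ˢ Set.univ ×ˢ Set.univ)
  lipschitz : ∀ t ∈ Set.Icc 0 T, ∀ x ∈ K, ∀ y ∈ K,
    eunorm (b t x - b t y) + matNorm (σ t x - σ t y) ≤ L * eunorm (x - y)
  mul_f_sub_le : ∀ t ∈ Set.Icc 0 T, ∀ x ∈ K, ∀ r r' z,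
    (r - r') * (f t x r z - f t x r' z) ≤ α * (r - r') ^ 2
  nonneg_β : 0 ≤ β
  abs_f_sub_le : ∀ t ∈ Set.Icc 0 T, ∀ x ∈ K, ∀ r z z',
    |f t x r z - f t x r z'| ≤ β * eunorm (z - z')
  abs_f_sub_le_modulus : ∀ t ∈ Set.Icc 0 T, ∀ x ∈ K, ∀ y ∈ K, ∀ r z,
    |f t x r z - f t y r z| ≤ m (eunorm (x - y) * (1 + eunorm z))
  tendsto_m : Tendsto m (𝓝[≥] 0) (𝓝 0)

/-- If `|t - s| < ω a`, then the coefficients at times `t` and `s` differ by at most `a⁻¹`, for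
unknowns in `[-R, R]` and gradients of size at most `a²`. -/
structure IsTimeModulus (K : Set (Fin d → ℝ)) (T : ℝ) (b : ℝ → (Fin d → ℝ) → (Fin d → ℝ))
    (σ : ℝ → (Fin d → ℝ) → Matrix (Fin d) (Fin d) ℝ)
    (f : ℝ → (Fin d → ℝ) → ℝ → (Fin d → ℝ) → ℝ) (R : ℝ) (ω : ℝ → ℝ) : Prop where
  pos : ∀ a, 0 < ω a
  eunorm_b_sub_le : ∀ a > 0, ∀ t ∈ Set.Icc 0 T, ∀ s ∈ Set.Icc 0 T, |t - s| < ω a → ∀ x ∈ K,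
    eunorm (b t x - b s x) ≤ a⁻¹
  matNorm_σ_sub_le : ∀ a > 0, ∀ t ∈ Set.Icc 0 T, ∀ s ∈ Set.Icc 0 T, |t - s| < ω a → ∀ x ∈ K,
    matNorm (σ t x - σ s x) ≤ a⁻¹
  abs_f_sub_le : ∀ a > 0, ∀ t ∈ Set.Icc 0 T, ∀ s ∈ Set.Icc 0 T, |t - s| < ω a → ∀ x ∈ K,
    ∀ r z, |r| ≤ R → eunorm z ≤ a ^ 2 → |f t x r z - f s x r z| ≤ a⁻¹

lemma exists_pos_forall_sub_lt {α E : Type*} [PseudoMetricSpace α] [NormedAddCommGroup E]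
    {F : ℝ × α → E} {N : E → ℝ} (hN : Continuous N) (hN₀ : N 0 = 0) {I : Set ℝ} {C : Set α}
    (hI : IsCompact I) (hC : IsCompact C) (hF : ContinuousOn F (I ×ˢ C)) {η : ℝ} (hη : 0 < η) :
    ∃ δ > 0, ∀ t ∈ I, ∀ s ∈ I, |t - s| < δ → ∀ c ∈ C, N (F (t, c) - F (s, c)) < η := by
  obtain ⟨ρ, hρ, hNρ⟩ := Metric.eventually_nhds_iff.1
    ((hN.tendsto' 0 0 hN₀).eventually_lt_const hη)
  obtain ⟨δ, hδ, hFδ⟩ := Metric.uniformContinuousOn_iff.1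
    ((hI.prod hC).uniformContinuousOn_of_continuous hF) ρ hρ
  refine ⟨δ, hδ, fun t ht s hs hts c hc => hNρ ?_⟩
  rw [dist_zero_right, ← dist_eq_norm]
  exact hFδ (t, c) ⟨ht, hc⟩ (s, c) ⟨hs, hc⟩ (by simpa [Prod.dist_eq, Real.dist_eq, hδ] using hts)

variable {K : Set (Fin d → ℝ)} {T : ℝ} {b : ℝ → (Fin d → ℝ) → (Fin d → ℝ)}
  {σ : ℝ → (Fin d → ℝ) → Matrix (Fin d) (Fin d) ℝ}
  {f : ℝ → (Fin d → ℝ) → ℝ → (Fin d → ℝ) → ℝ} {α L β : ℝ} {m : ℝ → ℝ}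

namespace RegularCoefficients

attribute [local instance] Matrix.normedAddCommGroup in
lemma exists_isTimeModulus (hc : RegularCoefficients K T b σ f α L β m) (R : ℝ) :
    ∃ ω, IsTimeModulus K T b σ f R ω := by
  have hex (a : ℝ) : ∃ δ > 0, 0 < a → ∀ t ∈ Set.Icc 0 T, ∀ s ∈ Set.Icc 0 T, |t - s| < δ → ∀ x ∈ K,
      eunorm (b t x - b s x) ≤ a⁻¹ ∧ matNorm (σ t x - σ s x) ≤ a⁻¹ ∧
      ∀ r z, |r| ≤ R → eunorm z ≤ a ^ 2 → |f t x r z - f s x r z| ≤ a⁻¹ := by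
    rcases le_or_gt a 0 with ha | ha
    · exact ⟨1, one_pos, fun h => absurd h ha.not_gt⟩
    have hC : IsCompact (K ×ˢ Set.Icc (-R) R ×ˢ Metric.closedBall (0 : Fin d → ℝ) (a ^ 2)) :=
      hc.isCompact.prod (isCompact_Icc.prod (isCompact_closedBall _ _))
    obtain ⟨δb, hδb, hb⟩ := exists_pos_forall_sub_lt continuous_eunorm eunorm_zero isCompact_Icc
      hc.isCompact hc.continuousOn_b (inv_pos.2 ha)
    obtain ⟨δσ, hδσ, hσ⟩ := exists_pos_forall_sub_lt continuous_matNorm matNorm_zero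
      isCompact_Icc hc.isCompact hc.continuousOn_σ (inv_pos.2 ha)
    obtain ⟨δf, hδf, hf⟩ := exists_pos_forall_sub_lt continuous_abs abs_zero isCompact_Icc hC
      (hc.continuousOn_f.mono (Set.prod_mono_right (Set.prod_mono_right
        (Set.prod_mono (Set.subset_univ _) (Set.subset_univ _))))) (inv_pos.2 ha)
    refine ⟨min δb (min δσ δf), by positivity, fun _ t ht s hs hts x hx => ?_⟩
    simp only [lt_min_iff] at hts
    exact ⟨(hb t ht s hs hts.1 x hx).le, (hσ t ht s hs hts.2.1 x hx).le, fun r z hr hz =>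
      (hf t ht s hs hts.2.2 (x, r, z) ⟨hx, abs_le.1 hr,
        mem_closedBall_zero_iff.2 ((norm_le_eunorm z).trans hz)⟩).le⟩
  choose ω hω hmod using hex
  exact ⟨ω, hω, fun a ha t ht s hs hts x hx => (hmod a ha t ht s hs hts x hx).1,
    fun a ha t ht s hs hts x hx => (hmod a ha t ht s hs hts x hx).2.1,
    fun a ha t ht s hs hts x hx => (hmod a ha t ht s hs hts x hx).2.2⟩

end RegularCoefficients

end Coefficients

section JetPairEstimate

variable {d : ℕ} {K : Set (Fin d → ℝ)} {T τ A e α L β R : ℝ} {u v : ℝ → (Fin d → ℝ) → ℝ}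
  {b : ℝ → (Fin d → ℝ) → (Fin d → ℝ)} {σ : ℝ → (Fin d → ℝ) → Matrix (Fin d) (Fin d) ℝ}
  {f : ℝ → (Fin d → ℝ) → ℝ → (Fin d → ℝ) → ℝ} {m ω : ℝ → ℝ} {ξ ν ν' : Fin d → ℝ}

namespace IsDoublingJetPair

section Pointwise

variable {J : JetPair d} (hJ : IsDoublingJetPair K T u v τ ξ A ν ν' e ω J)
  (hc : RegularCoefficients K T b σ f α L β m) (hω : IsTimeModulus K T b σ f R ω)

include hJ hc hω

lemma eunorm_b_sub_le :
    eunorm (b J.t J.x - b J.s J.y) ≤ L * eunorm (J.x - J.y) + J.scale⁻¹ := by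
  have hx := hc.lipschitz _ hJ.t_mem _ hJ.x_mem _ hJ.y_mem
  have ht := hω.eunorm_b_sub_le _ hJ.scale_pos _ hJ.t_mem _ hJ.s_mem hJ.abs_t_sub_s_lt _ hJ.y_mem
  have htri := eunorm_add_le (b J.t J.x - b J.t J.y) (b J.t J.y - b J.s J.y)
  rw [sub_add_sub_cancel] at htri
  linarith [matNorm_nonneg (σ J.t J.x - σ J.t J.y)]

lemma matNorm_σ_sub_le :
    matNorm (σ J.t J.x - σ J.s J.y) ≤ L * eunorm (J.x - J.y) + J.scale⁻¹ := by
  have hx := hc.lipschitz _ hJ.t_mem _ hJ.x_mem _ hJ.y_mem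
  have ht := hω.matNorm_σ_sub_le _ hJ.scale_pos _ hJ.t_mem _ hJ.s_mem hJ.abs_t_sub_s_lt _ hJ.y_mem
  have htri := matNorm_add_le (σ J.t J.x - σ J.t J.y) (σ J.t J.y - σ J.s J.y)
  rw [sub_add_sub_cancel] at htri
  linarith [eunorm_nonneg (b J.t J.x - b J.t J.y)]

lemma f_sub_le (huv : v J.s J.y < u J.t J.x) (hR : |v J.s J.y| ≤ R)
    (hz' : eunorm (vecMul J.q' (σ J.s J.y)) ≤ J.scale ^ 2) :
    f J.t J.x (u J.t J.x) (vecMul J.q (σ J.t J.x)) - f J.s J.y (v J.s J.y) (vecMul J.q' (σ J.s J.y))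
      ≤ m (eunorm (J.x - J.y) * (1 + eunorm (vecMul J.q (σ J.t J.x)))) +
        α * (u J.t J.x - v J.s J.y) +
        β * eunorm (vecMul J.q (σ J.t J.x) - vecMul J.q' (σ J.s J.y)) + J.scale⁻¹ := by
  set z := vecMul J.q (σ J.t J.x)
  set z' := vecMul J.q' (σ J.s J.y)
  have hspace := (le_abs_self _).trans
    (hc.abs_f_sub_le_modulus _ hJ.t_mem _ hJ.x_mem _ hJ.y_mem (u J.t J.x) z)
  have hgrad := (le_abs_self _).trans (hc.abs_f_sub_le _ hJ.t_mem _ hJ.y_mem (v J.s J.y) z z')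
  have htime := (le_abs_self _).trans
    (hω.abs_f_sub_le _ hJ.scale_pos _ hJ.t_mem _ hJ.s_mem hJ.abs_t_sub_s_lt _ hJ.y_mem _ _ hR hz')
  have hunknown : f J.t J.y (u J.t J.x) z - f J.t J.y (v J.s J.y) z ≤
      α * (u J.t J.x - v J.s J.y) := by
    refine le_of_mul_le_mul_left ?_ (sub_pos.2 huv)
    exact (hc.mul_f_sub_le _ hJ.t_mem _ hJ.y_mem _ _ _).trans_eq (by ring)
  linarith

omit hc hω in
lemma p_sub_p'_le (hV : Vop b σ f u J.t J.x J.p J.q J.X ≤ Vop b σ f v J.s J.y J.p' J.q' J.Y) :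
    J.p - J.p' ≤ 2 * J.scale * matNorm (σ J.t J.x - σ J.s J.y) ^ 2 +
      (2 * e + J.err) * (matNorm (σ J.t J.x) ^ 2 + matNorm (σ J.s J.y) ^ 2) +
      (eunorm (b J.t J.x - b J.s J.y) * eunorm J.q + dotp (b J.s J.y) (J.q - J.q')) +
      (f J.t J.x (u J.t J.x) (vecMul J.q (σ J.t J.x)) -
        f J.s J.y (v J.s J.y) (vecMul J.q' (σ J.s J.y))) := by
  have htrace := half_trace_sub_half_trace_le (S := σ J.t J.x) (S' := σ J.s J.y) hJ.half_sub_half_le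
  have hdrift := (le_abs_self _).trans (abs_dotp_le (b J.t J.x - b J.s J.y) J.q)
  rw [dotp_sub_left] at hdrift
  rw [dotp_sub_right]
  simp only [Vop] at hV
  linarith

end Pointwise

variable {ι : Type*} {l : Filter ι} {J : ι → JetPair d}
  (hJ : ∀ k, IsDoublingJetPair K T u v τ ξ A ν ν' e ω (J k))
  (herr : Tendsto (fun k => (J k).err) l (𝓝 0))
  (hc : RegularCoefficients K T b σ f α L β m) (hω : IsTimeModulus K T b σ f R ω)
  (hτ : τ ∈ Set.Icc 0 T) (hξ : ξ ∈ K)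

include hJ herr hc hω

lemma tendsto_scale_mul_matNorm_σ_sub_sq : Tendsto (fun k =>
    (J k).scale * matNorm (σ (J k).t (J k).x - σ (J k).s (J k).y) ^ 2) l (𝓝 0) := by
  have hlim := ((tendsto_scale_mul_sq hJ herr).const_mul (2 * L ^ 2)).add
    ((tendsto_inv_scale hJ herr).const_mul 2)
  simp only [mul_zero, add_zero] at hlim
  refine squeeze_zero (fun k => mul_nonneg (hJ k).scale_pos.le (sq_nonneg _)) (fun k => ?_) hlim
  have ha := (hJ k).scale_pos
  calc (J k).scale * matNorm (σ (J k).t (J k).x - σ (J k).s (J k).y) ^ 2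
      ≤ (J k).scale * (L * eunorm ((J k).x - (J k).y) + (J k).scale⁻¹) ^ 2 := by
        gcongr
        · exact matNorm_nonneg _
        · exact (hJ k).matNorm_σ_sub_le hc hω
    _ ≤ (J k).scale * (2 * ((L * eunorm ((J k).x - (J k).y)) ^ 2 + (J k).scale⁻¹ ^ 2)) := by
        gcongr
        exact add_sq_le
    _ = _ := by field_simp

lemma tendsto_eunorm_b_sub_mul_eunorm_q : Tendsto (fun k =>
    eunorm (b (J k).t (J k).x - b (J k).s (J k).y) * eunorm (J k).q) l (𝓝 0) :=
  tendsto_mul_eunorm_q_of_le hJ herr (fun _ => eunorm_nonneg _)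
    fun k => (hJ k).eunorm_b_sub_le hc hω

lemma tendsto_matNorm_σ_sub_mul_eunorm_q : Tendsto (fun k =>
    matNorm (σ (J k).t (J k).x - σ (J k).s (J k).y) * eunorm (J k).q) l (𝓝 0) :=
  tendsto_mul_eunorm_q_of_le hJ herr (fun _ => matNorm_nonneg _)
    fun k => (hJ k).matNorm_σ_sub_le hc hω

omit hω

include hτ hξ

lemma tendsto_matNorm_σ_t_x :
    Tendsto (fun k => matNorm (σ (J k).t (J k).x)) l (𝓝 (matNorm (σ τ ξ))) :=
  (continuous_matNorm.tendsto _).comp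
    ((hc.continuousOn_σ (τ, ξ) ⟨hτ, hξ⟩).tendsto.comp (tendsto_t_x hJ herr))

lemma tendsto_matNorm_σ_s_y :
    Tendsto (fun k => matNorm (σ (J k).s (J k).y)) l (𝓝 (matNorm (σ τ ξ))) :=
  (continuous_matNorm.tendsto _).comp
    ((hc.continuousOn_σ (τ, ξ) ⟨hτ, hξ⟩).tendsto.comp (tendsto_s_y hJ herr))

lemma tendsto_modulus : Tendsto (fun k => m (eunorm ((J k).x - (J k).y) *
    (1 + eunorm (vecMul (J k).q (σ (J k).t (J k).x))))) l (𝓝 0) := by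
  have hlim := (tendsto_eunorm_x_sub_y hJ herr).add
    ((tendsto_eunorm_x_sub_y_add_mul_eunorm_q hJ herr).mul (tendsto_matNorm_σ_t_x hJ herr hc hτ hξ))
  rw [zero_mul, add_zero] at hlim
  have hpos (k : ι) : 0 ≤ eunorm ((J k).x - (J k).y) *
      (1 + eunorm (vecMul (J k).q (σ (J k).t (J k).x))) :=
    mul_nonneg (eunorm_nonneg _) (add_nonneg zero_le_one (eunorm_nonneg _))
  refine hc.tendsto_m.comp (tendsto_nhdsWithin_iff.2
    ⟨squeeze_zero hpos (fun k => ?_) hlim, .of_forall hpos⟩)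
  have hx := eunorm_nonneg ((J k).x - (J k).y)
  have hz := eunorm_vecMul_le (J k).q (σ (J k).t (J k).x)
  have hrest := mul_nonneg (mul_nonneg (inv_pos.2 (hJ k).scale_pos).le (eunorm_nonneg (J k).q))
    (matNorm_nonneg (σ (J k).t (J k).x))
  nlinarith [hx, hz, hrest]

lemma eventually_eunorm_vecMul_q'_le :
    ∀ᶠ k in l, eunorm (vecMul (J k).q' (σ (J k).s (J k).y)) ≤ (J k).scale ^ 2 := by
  have hlim := ((tendsto_inv_scale_mul_eunorm_q' hJ herr).mul (tendsto_inv_scale hJ herr)).mul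
    (tendsto_matNorm_σ_s_y hJ herr hc hτ hξ)
  rw [zero_mul, zero_mul] at hlim
  filter_upwards [hlim.eventually_le_const one_pos] with k hk
  have ha := (hJ k).scale_pos
  refine (eunorm_vecMul_le _ _).trans ?_
  field_simp at hk
  exact hk

include hω in
lemma exists_tendsto_eunorm_vecMul_sub_le :
    ∃ E : ι → ℝ, Tendsto E l (𝓝 (eunorm (ν - ν') * matNorm (σ τ ξ))) ∧ ∀ k,
      eunorm (vecMul (J k).q (σ (J k).t (J k).x) - vecMul (J k).q' (σ (J k).s (J k).y)) ≤ E k := by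
  have hlim := (tendsto_matNorm_σ_sub_mul_eunorm_q hJ herr hc hω).add
    (((continuous_eunorm.tendsto _).comp (tendsto_q_sub_q' hJ herr)).mul
      (tendsto_matNorm_σ_s_y hJ herr hc hτ hξ))
  rw [zero_add] at hlim
  refine ⟨_, hlim, fun k => ?_⟩
  have hsplit : vecMul (J k).q (σ (J k).t (J k).x) - vecMul (J k).q' (σ (J k).s (J k).y) =
      vecMul (J k).q (σ (J k).t (J k).x - σ (J k).s (J k).y) +
        vecMul ((J k).q - (J k).q') (σ (J k).s (J k).y) := by
    rw [vecMul_sub, sub_vecMul, sub_add_sub_cancel]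
  rw [hsplit, mul_comm]
  exact (eunorm_add_le _ _).trans (add_le_add (eunorm_vecMul_le _ _) (eunorm_vecMul_le _ _))

include hω in
theorem le_of_eventually_Vop_le [NeBot l]
    (hu : ContinuousOn (fun z : ℝ × (Fin d → ℝ) => u z.1 z.2) (Set.Icc 0 T ×ˢ K))
    (hv : ContinuousOn (fun z : ℝ × (Fin d → ℝ) => v z.1 z.2) (Set.Icc 0 T ×ˢ K))
    (huv : v τ ξ < u τ ξ) (hR : ∀ t ∈ Set.Icc 0 T, ∀ x ∈ K, |v t x| ≤ R)
    (hV : ∀ᶠ k in l, Vop b σ f u (J k).t (J k).x (J k).p (J k).q (J k).X ≤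
      Vop b σ f v (J k).s (J k).y (J k).p' (J k).q' (J k).Y) :
    A ≤ 4 * e * matNorm (σ τ ξ) ^ 2 + dotp (b τ ξ) (ν - ν') + α * (u τ ξ - v τ ξ) +
      β * (eunorm (ν - ν') * matNorm (σ τ ξ)) := by
  obtain ⟨E, hE, hzE⟩ := exists_tendsto_eunorm_vecMul_sub_le hJ herr hc hω hτ hξ
  have hulim := (hu (τ, ξ) ⟨hτ, hξ⟩).tendsto.comp (tendsto_t_x hJ herr)
  have hvlim := (hv (τ, ξ) ⟨hτ, hξ⟩).tendsto.comp (tendsto_s_y hJ herr)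
  have hblim := (hc.continuousOn_b (τ, ξ) ⟨hτ, hξ⟩).tendsto.comp (tendsto_s_y hJ herr)
  have htrace := ((tendsto_scale_mul_matNorm_σ_sub_sq hJ herr hc hω).const_mul 2).add
    ((herr.const_add (2 * e)).mul (((tendsto_matNorm_σ_t_x hJ herr hc hτ hξ).pow 2).add
      ((tendsto_matNorm_σ_s_y hJ herr hc hτ hξ).pow 2)))
  have hdrift := (tendsto_eunorm_b_sub_mul_eunorm_q hJ herr hc hω).add
    ((continuous_dotp.tendsto _).comp (hblim.prodMk_nhds (tendsto_q_sub_q' hJ herr)))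
  have hf := (((tendsto_modulus hJ herr hc hτ hξ).add ((hulim.sub hvlim).const_mul α)).add
    (hE.const_mul β)).add (tendsto_inv_scale hJ herr)
  have hlim := ((htrace.add hdrift).add hf).add herr
  refine (ge_of_tendsto hlim ?_).trans_eq (by ring)
  filter_upwards [hV, hvlim.eventually_lt hulim huv,
    eventually_eunorm_vecMul_q'_le hJ herr hc hτ hξ] with k hVk huvk hz'
  have hp := (hJ k).lt_p_sub
  have hp' := (hJ k).p_sub_p'_le hVk
  have hfk := (hJ k).f_sub_le hc hω huvk (hR _ (hJ k).s_mem _ (hJ k).y_mem) hz'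
  have hβ := mul_le_mul_of_nonneg_left (hzE k) hc.nonneg_β
  simp only [Function.comp_apply]
  linarith

end IsDoublingJetPair

end JetPairEstimate

section OneSidedDerivatives

variable {φ : ℝ → EReal} {r s A B c : ℝ}

lemma coe_secant_le_leftD (hsr : s < r) (hA : (A : EReal) ≤ φ r) (hB : φ s = B) :
    (((A - B) / (r - s) : ℝ) : EReal) ≤ leftD φ r := by
  have hpos : (0 : EReal) ≤ ((1 : ℝ) / (r - s : ℝ) : EReal) := by
    rw [← EReal.coe_div]
    exact EReal.coe_nonneg.2 (one_div_pos.2 (sub_pos.2 hsr)).le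
  refine le_trans ?_ (le_iSup (fun h : Set.Ioi (0 : ℝ) =>
    (((1 : ℝ) / (h : ℝ)) : EReal) * (φ r - φ (r - (h : ℝ)))) ⟨r - s, sub_pos.2 hsr⟩)
  simp only [sub_sub_cancel, hB]
  calc (((A - B) / (r - s) : ℝ) : EReal)
      = ((1 : ℝ) / (r - s : ℝ) : EReal) * ((A : EReal) - B) := by
        rw [← EReal.coe_div, ← EReal.coe_sub, ← EReal.coe_mul, one_div_mul_eq_div]
    _ ≤ _ := mul_le_mul_of_nonneg_left (EReal.sub_le_sub hA le_rfl) hpos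

lemma rightD_le_coe_secant (hsr : s < r) (hA : φ r = A) (hB : (B : EReal) ≤ φ s) :
    rightD φ s ≤ (((A - B) / (r - s) : ℝ) : EReal) := by
  have hpos : (0 : EReal) ≤ ((1 : ℝ) / (r - s : ℝ) : EReal) := by
    rw [← EReal.coe_div]
    exact EReal.coe_nonneg.2 (one_div_pos.2 (sub_pos.2 hsr)).le
  refine (iInf_le (fun h : Set.Ioi (0 : ℝ) =>
    (((1 : ℝ) / (h : ℝ)) : EReal) * (φ (s + (h : ℝ)) - φ s)) ⟨r - s, sub_pos.2 hsr⟩).trans ?_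
  simp only [add_sub_cancel, hA]
  calc ((1 : ℝ) / (r - s : ℝ) : EReal) * ((A : EReal) - φ s)
      ≤ ((1 : ℝ) / (r - s : ℝ) : EReal) * ((A : EReal) - B) :=
        mul_le_mul_of_nonneg_left (EReal.sub_le_sub le_rfl hB) hpos
    _ = _ := by rw [← EReal.coe_div, ← EReal.coe_sub, ← EReal.coe_mul, one_div_mul_eq_div]

lemma eventually_coe_lt_leftD (hφ : LowerSemicontinuousAt φ r) (hsr : s < r) (hA : φ r = A)
    (hB : φ s = B) (hc : c < (A - B) / (r - s)) : ∀ᶠ r' in 𝓝 r, (c : EReal) < leftD φ r' := by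
  obtain ⟨A', hA', hcA'⟩ : ∃ A' < A, c < (A' - B) / (r - s) := by
    rw [lt_div_iff₀ (sub_pos.2 hsr)] at hc
    obtain ⟨A', hlt, hgt⟩ := exists_between (lt_sub_iff_add_lt.1 hc)
    exact ⟨A', hgt, (lt_div_iff₀ (sub_pos.2 hsr)).2 (by linarith)⟩
  have hcont : ContinuousAt (fun r' => (A' - B) / (r' - s)) r :=
    continuousAt_const.div (by fun_prop) (sub_pos.2 hsr).ne'
  have hφA' : (A' : EReal) < φ r := hA ▸ EReal.coe_lt_coe hA'
  filter_upwards [hφ A' hφA', lt_mem_nhds hsr,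
    hcont.eventually_const_lt hcA'] with r' hφr' hsr' hcr'
  exact (EReal.coe_lt_coe hcr').trans_le (coe_secant_le_leftD hsr' hφr'.le hB)

lemma eventually_rightD_lt_coe (hφ : LowerSemicontinuousAt φ s) (hsr : s < r) (hA : φ r = A)
    (hB : φ s = B) (hc : (A - B) / (r - s) < c) : ∀ᶠ s' in 𝓝 s, rightD φ s' < (c : EReal) := by
  obtain ⟨B', hB', hcB'⟩ : ∃ B' < B, (A - B') / (r - s) < c := by
    rw [div_lt_iff₀ (sub_pos.2 hsr)] at hc
    obtain ⟨B', hlt, hgt⟩ := exists_between (sub_lt_comm.1 hc)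
    exact ⟨B', hgt, (div_lt_iff₀ (sub_pos.2 hsr)).2 (by linarith)⟩
  have hcont : ContinuousAt (fun s' => (A - B') / (r - s')) s :=
    continuousAt_const.div (by fun_prop) (sub_pos.2 hsr).ne'
  have hφB' : (B' : EReal) < φ s := hB ▸ EReal.coe_lt_coe hB'
  filter_upwards [hφ B' hφB', gt_mem_nhds hsr,
    hcont.eventually_lt_const hcB'] with s' hφs' hsr' hcs'
  exact (rightD_le_coe_secant hsr' hA hφs'.le).trans_lt (EReal.coe_lt_coe hcs')

/-- The multivalued term drops out of the difference of the two inequalities since `∂φ` is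
monotone. -/
lemma le_of_add_leftD_nonpos_of_add_rightD_nonneg {V W : ℝ} (hsr : s < r) (hA : φ r = A)
    (hB : φ s = B) (hV : (V : EReal) + leftD φ r ≤ 0) (hW : 0 ≤ (W : EReal) + rightD φ s) :
    V ≤ W := by
  have hV' : (V : EReal) + ((A - B) / (r - s) : ℝ) ≤ 0 :=
    (add_le_add_right (coe_secant_le_leftD hsr hA.ge hB) _).trans hV
  have hW' : 0 ≤ (W : EReal) + ((A - B) / (r - s) : ℝ) :=
    hW.trans (add_le_add_right (rightD_le_coe_secant hsr hA hB.ge) _)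
  norm_cast at hV' hW'
  linarith

end OneSidedDerivatives

section DefiningFunction

variable {d : ℕ} {ℓ : (Fin d → ℝ) → ℝ}

/-- `{ℓ < 0}` is a bounded domain with defining function `ℓ` of class `C²`, normalised so that
`∇ℓ` is the outward unit normal on the boundary `{ℓ = 0}`. -/
structure IsDefiningFunction (ℓ : (Fin d → ℝ) → ℝ) : Prop where
  contDiff : ContDiff ℝ 2 ℓ
  eunorm_gradVec : ∀ x, ℓ x = 0 → eunorm (gradVec ℓ x) = 1
  isBounded : Bornology.IsBounded {x | ℓ x < 0}

lemma fderiv_eq_dotp (ℓ : (Fin d → ℝ) → ℝ) (x v : Fin d → ℝ) :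
    fderiv ℝ ℓ x v = dotp (gradVec ℓ x) v := by
  conv_lhs => rw [pi_eq_sum_univ' v]
  simp only [map_sum, map_smul, smul_eq_mul]
  exact Finset.sum_congr rfl fun i _ => by rw [gradVec, mul_comm]

namespace IsDefiningFunction

lemma continuous_gradVec (hℓ : IsDefiningFunction ℓ) : Continuous (gradVec ℓ) :=
  continuous_pi fun _ =>
    (hℓ.contDiff.continuous_fderiv two_ne_zero).clm_apply continuous_const

lemma isCompact (hℓ : IsDefiningFunction ℓ) : IsCompact {x | ℓ x ≤ 0} := by
  refine Metric.isCompact_of_isClosed_isBounded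
    (isClosed_le hℓ.contDiff.continuous continuous_const)
    (hℓ.isBounded.closure.subset fun x hx => ?_)
  rcases (show ℓ x ≤ 0 from hx).lt_or_eq with hlt | heq
  · exact subset_closure hlt
  · by_contra hcl
    have hmin : IsLocalMin ℓ x := by
      rw [mem_closure_iff_frequently] at hcl
      filter_upwards [not_frequently.1 hcl] with y hy
      exact heq ▸ not_lt.1 hy
    have hgrad : gradVec ℓ x = 0 := by
      ext i
      simp [gradVec, hmin.fderiv_eq_zero]
    simpa [hgrad, eunorm_zero] using hℓ.eunorm_gradVec x heq

lemma exists_abs_sub_sub_dotp_le (hℓ : IsDefiningFunction ℓ) :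
    ∃ Λ ≥ 0, ∀ x, ℓ x ≤ 0 → ∀ y, ℓ y ≤ 0 →
      |ℓ y - ℓ x - dotp (gradVec ℓ x) (y - x)| ≤ Λ * eunorm (y - x) ^ 2 := by
  obtain ⟨R, hR⟩ := hℓ.isCompact.isBounded.subset_closedBall (0 : Fin d → ℝ)
  have hC₁ : ContDiff ℝ 1 (fderiv ℝ ℓ) := hℓ.contDiff.fderiv_right (by norm_num)
  obtain ⟨C, hC⟩ := (isCompact_closedBall (0 : Fin d → ℝ) R).exists_bound_of_continuousOn
    (hC₁.continuous_fderiv one_ne_zero).continuousOn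
  refine ⟨max C 0, le_max_right _ _, fun x hx y hy => ?_⟩
  have hball := convex_closedBall (0 : Fin d → ℝ) R
  have hsegment := hball.segment_subset (hR hx) (hR hy)
  have hgrad : ∀ z ∈ segment ℝ x y, ‖fderiv ℝ ℓ z - fderiv ℝ ℓ x‖ ≤ max C 0 * ‖y - x‖ :=
    fun z hz => (hball.norm_image_sub_le_of_norm_fderiv_le (𝕜 := ℝ)
      (fun w _ => hC₁.differentiable one_ne_zero w) hC (hR hx) (hsegment hz)).trans <|
      mul_le_mul (le_max_left _ _) (norm_sub_le_of_mem_segment hz) (norm_nonneg _)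
        (le_max_right _ _)
  have htaylor := (convex_segment x y).norm_image_sub_le_of_norm_fderiv_le' (𝕜 := ℝ)
    (fun w _ => hℓ.contDiff.differentiable two_ne_zero w) hgrad (left_mem_segment ℝ x y)
    (right_mem_segment ℝ x y)
  rw [fderiv_eq_dotp, Real.norm_eq_abs, mul_assoc, ← sq] at htaylor
  refine htaylor.trans ?_
  gcongr
  exact norm_le_eunorm _

lemma exists_dotp_gradVec_le (hℓ : IsDefiningFunction ℓ) :
    ∃ Λ, ∀ x, ℓ x = 0 → ∀ y, ℓ y ≤ 0 →
      dotp (gradVec ℓ x) (y - x) ≤ Λ * eunorm (y - x) ^ 2 := by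
  obtain ⟨Λ, -, hΛ⟩ := hℓ.exists_abs_sub_sub_dotp_le
  refine ⟨Λ, fun x hx y hy => ?_⟩
  linarith [(abs_le.1 (hΛ x hx.le y hy)).1]

end IsDefiningFunction

end DefiningFunction

section ObliqueJets

variable {d : ℕ} {ℓ : (Fin d → ℝ) → ℝ} {T τ A B C c e r : ℝ} {u v : ℝ → (Fin d → ℝ) → ℝ}
  {b : ℝ → (Fin d → ℝ) → (Fin d → ℝ)} {σ : ℝ → (Fin d → ℝ) → Matrix (Fin d) (Fin d) ℝ}
  {f : ℝ → (Fin d → ℝ) → ℝ → (Fin d → ℝ) → ℝ} {g : ℝ → (Fin d → ℝ) → ℝ → ℝ}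
  {h h' : (Fin d → ℝ) → ℝ} {φ ψ : ℝ → EReal} {ω : ℝ → ℝ} {ξ ν ν' : Fin d → ℝ}
  {ι : Type*} {l : Filter ι} {J : ι → JetPair d}

lemma eventually_mem_imp_of_tendsto {α : Type*} [TopologicalSpace α] {S : Set α} {P : α → Prop}
    {z : ι → α} {z₀ : α} (hP : ∀ᶠ w in 𝓝[S] z₀, P w) (hz : Tendsto z l (𝓝 z₀)) :
    ∀ᶠ k in l, z k ∈ S → P (z k) :=
  hz.eventually (eventually_nhdsWithin_iff.1 hP)

lemma Ici_prod_boundary_subset (ℓ : (Fin d → ℝ) → ℝ) :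
    Set.Ici (0 : ℝ) ×ˢ {x | ℓ x = 0} ⊆ Set.Ici 0 ×ˢ {x | ℓ x ≤ 0} :=
  Set.prod_mono_right fun _ hx => (show ℓ _ = 0 from hx).le

lemma continuousOn_neumannDatum
    (hg : ContinuousOn (fun p : ℝ × (Fin d → ℝ) × ℝ => g p.1 p.2.1 p.2.2)
      (Set.Ici 0 ×ˢ {x | ℓ x = 0} ×ˢ Set.univ))
    (hu : ContinuousOn (fun z : ℝ × (Fin d → ℝ) => u z.1 z.2) (Set.Ici 0 ×ˢ {x | ℓ x ≤ 0})) :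
    ContinuousOn (fun z : ℝ × (Fin d → ℝ) => g z.1 z.2 (u z.1 z.2))
      (Set.Ici 0 ×ˢ {x | ℓ x = 0}) :=
  hg.comp (f := fun z : ℝ × (Fin d → ℝ) => (z.1, z.2, u z.1 z.2))
    (continuousOn_fst.prodMk (continuousOn_snd.prodMk (hu.mono (Ici_prod_boundary_subset ℓ))))
    fun _ hz => ⟨hz.1, hz.2, Set.mem_univ _⟩

namespace IsDoublingJetPair

variable (hJ : ∀ k, IsDoublingJetPair {x | ℓ x ≤ 0} T u v τ ξ A ν ν' e ω (J k))
  (herr : Tendsto (fun k => (J k).err) l (𝓝 0))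

include hJ herr

lemma eventually_lt_dotp_gradVec_q (hℓ : IsDefiningFunction ℓ)
    (hc : c < dotp (gradVec ℓ ξ) ν) :
    ∀ᶠ k in l, ℓ (J k).x = 0 → c < dotp (gradVec ℓ (J k).x) (J k).q := by
  obtain ⟨Λ, hΛ⟩ := hℓ.exists_dotp_gradVec_le
  have hn := (hℓ.continuous_gradVec.tendsto _).comp (tendsto_x hJ herr)
  have hlim := ((continuous_dotp.tendsto _).comp (hn.prodMk_nhds (tendsto_q_sub hJ herr))).sub
    ((tendsto_scale_mul_sq hJ herr).const_mul (2 * Λ))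
  rw [mul_zero, sub_zero] at hlim
  filter_upwards [hlim.eventually_const_lt hc] with k hk hx
  have hgeom := hΛ _ hx _ (hJ k).y_mem
  rw [← eunorm_neg, neg_sub] at hgeom
  have hscaled := mul_le_mul_of_nonneg_left hgeom (hJ k).scale_pos.le
  simp only [Function.comp_apply, dotp_sub_right, dotp_smul_right] at hk hscaled
  linarith

lemma eventually_dotp_gradVec_q'_lt (hℓ : IsDefiningFunction ℓ)
    (hc : dotp (gradVec ℓ ξ) ν' < c) :
    ∀ᶠ k in l, ℓ (J k).y = 0 → dotp (gradVec ℓ (J k).y) (J k).q' < c := by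
  obtain ⟨Λ, hΛ⟩ := hℓ.exists_dotp_gradVec_le
  have hn := (hℓ.continuous_gradVec.tendsto _).comp (tendsto_y hJ herr)
  have hlim := ((continuous_dotp.tendsto _).comp (hn.prodMk_nhds (tendsto_q'_sub hJ herr))).add
    ((tendsto_scale_mul_sq hJ herr).const_mul (2 * Λ))
  rw [mul_zero, add_zero] at hlim
  filter_upwards [hlim.eventually_lt_const hc] with k hk hy
  have hgeom := hΛ _ hy _ (hJ k).x_mem
  have hscaled := mul_le_mul_of_nonneg_left hgeom (hJ k).scale_pos.le
  simp only [Function.comp_apply, dotp_sub_right, dotp_smul_right] at hk hscaled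
  linarith

lemma eventually_neumann_pos (hℓ : IsDefiningFunction ℓ)
    (hg : ContinuousOn (fun p : ℝ × (Fin d → ℝ) × ℝ => g p.1 p.2.1 p.2.2)
      (Set.Ici 0 ×ˢ {x | ℓ x = 0} ×ˢ Set.univ))
    (hu : ContinuousOn (fun z : ℝ × (Fin d → ℝ) => u z.1 z.2) (Set.Ici 0 ×ˢ {x | ℓ x ≤ 0}))
    (hψ : LowerSemicontinuous ψ) (hτ : 0 ≤ τ) (hξ : ℓ ξ = 0) (hr : r < u τ ξ)
    (hB : ψ (u τ ξ) = B) (hC : ψ r = C)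
    (hν : g τ ξ (u τ ξ) - (B - C) / (u τ ξ - r) < dotp (gradVec ℓ ξ) ν) :
    ∀ᶠ k in l, ℓ (J k).x = 0 → 0 <
      ((dotp (gradVec ℓ (J k).x) (J k).q - g (J k).t (J k).x (u (J k).t (J k).x) : ℝ) : EReal) +
        leftD ψ (u (J k).t (J k).x) := by
  obtain ⟨η, hη, hηsum⟩ : ∃ η > 0, g τ ξ (u τ ξ) + η - ((B - C) / (u τ ξ - r) - η) =
      dotp (gradVec ℓ ξ) ν - η :=
    ⟨(dotp (gradVec ℓ ξ) ν - (g τ ξ (u τ ξ) - (B - C) / (u τ ξ - r))) / 3, by linarith, by ring⟩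
  have hz := (tendsto_t_x hJ herr).mono_right inf_le_left
  have hu' := (hu (τ, ξ) ⟨hτ, hξ.le⟩).mono (Ici_prod_boundary_subset ℓ)
  filter_upwards [eventually_lt_dotp_gradVec_q hJ herr hℓ (sub_lt_self _ hη),
    eventually_mem_imp_of_tendsto ((continuousOn_neumannDatum hg hu (τ, ξ) ⟨hτ, hξ⟩).eventually
      (gt_mem_nhds (lt_add_of_pos_right _ hη))) hz,
    eventually_mem_imp_of_tendsto (hu'.eventually
      (eventually_coe_lt_leftD (hψ _) hr hB hC (sub_lt_self _ hη))) hz] with k hqk hgk hψk hx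
  have hmem : ((J k).t, (J k).x) ∈ Set.Ici (0 : ℝ) ×ˢ {x | ℓ x = 0} := ⟨(hJ k).t_mem.1, hx⟩
  refine lt_of_lt_of_le ?_ (add_le_add_right (hψk hmem).le _)
  rw [← EReal.coe_add, EReal.coe_pos]
  linarith [hqk hx, hgk hmem]

lemma eventually_neumann_neg (hℓ : IsDefiningFunction ℓ)
    (hg : ContinuousOn (fun p : ℝ × (Fin d → ℝ) × ℝ => g p.1 p.2.1 p.2.2)
      (Set.Ici 0 ×ˢ {x | ℓ x = 0} ×ˢ Set.univ))
    (hv : ContinuousOn (fun z : ℝ × (Fin d → ℝ) => v z.1 z.2) (Set.Ici 0 ×ˢ {x | ℓ x ≤ 0}))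
    (hψ : LowerSemicontinuous ψ) (hτ : 0 ≤ τ) (hξ : ℓ ξ = 0) (hr : v τ ξ < r)
    (hB : ψ r = B) (hC : ψ (v τ ξ) = C)
    (hν' : dotp (gradVec ℓ ξ) ν' < g τ ξ (v τ ξ) - (B - C) / (r - v τ ξ)) :
    ∀ᶠ k in l, ℓ (J k).y = 0 →
      ((dotp (gradVec ℓ (J k).y) (J k).q' - g (J k).s (J k).y (v (J k).s (J k).y) : ℝ) : EReal) +
        rightD ψ (v (J k).s (J k).y) < 0 := by
  obtain ⟨η, hη, hηsum⟩ : ∃ η > 0, g τ ξ (v τ ξ) - η - ((B - C) / (r - v τ ξ) + η) =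
      dotp (gradVec ℓ ξ) ν' + η :=
    ⟨(g τ ξ (v τ ξ) - (B - C) / (r - v τ ξ) - dotp (gradVec ℓ ξ) ν') / 3, by linarith, by ring⟩
  have hz := (tendsto_s_y hJ herr).mono_right inf_le_left
  have hv' := (hv (τ, ξ) ⟨hτ, hξ.le⟩).mono (Ici_prod_boundary_subset ℓ)
  filter_upwards [eventually_dotp_gradVec_q'_lt hJ herr hℓ (lt_add_of_pos_right _ hη),
    eventually_mem_imp_of_tendsto ((continuousOn_neumannDatum hg hv (τ, ξ) ⟨hτ, hξ⟩).eventually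
      (lt_mem_nhds (sub_lt_self _ hη))) hz,
    eventually_mem_imp_of_tendsto (hv'.eventually
      (eventually_rightD_lt_coe (hψ _) hr hB hC (lt_add_of_pos_right _ hη))) hz]
    with k hqk hgk hψk hy
  have hmem : ((J k).s, (J k).y) ∈ Set.Ici (0 : ℝ) ×ˢ {x | ℓ x = 0} := ⟨(hJ k).s_mem.1, hy⟩
  refine (add_le_add_right (hψk hmem).le _).trans_lt ?_
  rw [← EReal.coe_add, EReal.coe_neg']
  linarith [hqk hy, hgk hmem]

/-- With the Neumann alternatives excluded, the two equations are compared through the monotonicity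
of `∂φ`. -/
lemma eventually_Vop_le_of_neumann (hu : IsViscSubsolution ℓ b σ f g h φ ψ u)
    (hv : IsViscSupersolution ℓ b σ f g h' φ ψ v) (hφ : ∀ r, φ r ≠ ⊥) (hτ : 0 < τ) (hξ : ℓ ξ ≤ 0)
    (huv : v τ ξ < u τ ξ)
    (hpos : ∀ᶠ k in l, ℓ (J k).x = 0 → 0 <
      ((dotp (gradVec ℓ (J k).x) (J k).q - g (J k).t (J k).x (u (J k).t (J k).x) : ℝ) : EReal) +
        leftD ψ (u (J k).t (J k).x))
    (hneg : ∀ᶠ k in l, ℓ (J k).y = 0 →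
      ((dotp (gradVec ℓ (J k).y) (J k).q' - g (J k).s (J k).y (v (J k).s (J k).y) : ℝ) : EReal) +
        rightD ψ (v (J k).s (J k).y) < 0) :
    ∀ᶠ k in l, Vop b σ f u (J k).t (J k).x (J k).p (J k).q (J k).X ≤
      Vop b σ f v (J k).s (J k).y (J k).p' (J k).q' (J k).Y := by
  obtain ⟨hucont, -, huφ, -, hujet⟩ := hu
  obtain ⟨hvcont, -, hvφ, -, hvjet⟩ := hv
  have hsub : Set.Icc 0 T ×ˢ {x | ℓ x ≤ 0} ⊆ Set.Ici (0 : ℝ) ×ˢ {x | ℓ x ≤ 0} :=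
    Set.prod_mono_left Set.Icc_subset_Ici_self
  have hulim := ((hucont (τ, ξ) ⟨hτ.le, hξ⟩).mono hsub).tendsto.comp (tendsto_t_x hJ herr)
  have hvlim := ((hvcont (τ, ξ) ⟨hτ.le, hξ⟩).mono hsub).tendsto.comp (tendsto_s_y hJ herr)
  filter_upwards [hpos, hneg, hvlim.eventually_lt hulim huv,
    (tendsto_t hJ herr).eventually_const_lt hτ, (tendsto_s hJ herr).eventually_const_lt hτ]
    with k hposk hnegk hlt ht hs
  have hV : (Vop b σ f u (J k).t (J k).x (J k).p (J k).q (J k).X : EReal) +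
      leftD φ (u (J k).t (J k).x) ≤ 0 := by
    obtain ⟨hinterior, hboundary⟩ := hujet _ ht _ (hJ k).x_mem _ _ _ (hJ k).superjet
    rcases (show ℓ (J k).x ≤ 0 from (hJ k).x_mem).lt_or_eq with hx | hx
    · exact hinterior hx
    · exact (hboundary hx).resolve_right (hposk hx).not_ge
  have hW : 0 ≤ (Vop b σ f v (J k).s (J k).y (J k).p' (J k).q' (J k).Y : EReal) +
      rightD φ (v (J k).s (J k).y) := by
    obtain ⟨hinterior, hboundary⟩ := hvjet _ hs _ (hJ k).y_mem _ _ _ (hJ k).subjet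
    rcases (show ℓ (J k).y ≤ 0 from (hJ k).y_mem).lt_or_eq with hy | hy
    · exact hinterior hy
    · exact (hboundary hy).resolve_right (hnegk hy).not_ge
  exact le_of_add_leftD_nonpos_of_add_rightD_nonneg hlt
    (EReal.coe_toReal (huφ _ ht _ (hJ k).x_mem) (hφ _)).symm
    (EReal.coe_toReal (hvφ _ hs _ (hJ k).y_mem) (hφ _)).symm hV hW

end IsDoublingJetPair

/-- The spatial slopes `(κ ± ε) ∇ℓ(ξ)` lie on either side of the critical slope `κ` at which the
Neumann condition is met by a secant slope of `ψ`. -/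
lemma exists_slope_forall_eventually_Vop_le (hℓ : IsDefiningFunction ℓ)
    (hg : ContinuousOn (fun p : ℝ × (Fin d → ℝ) × ℝ => g p.1 p.2.1 p.2.2)
      (Set.Ici 0 ×ˢ {x | ℓ x = 0} ×ˢ Set.univ))
    (hgdec : ∀ t ≥ (0 : ℝ), ∀ x, ℓ x = 0 → Antitone (g t x)) (hφ : ∀ r, φ r ≠ ⊥)
    (hψ : LowerSemicontinuous ψ) (hψbot : ∀ r, ψ r ≠ ⊥)
    (hu : IsViscSubsolution ℓ b σ f g h φ ψ u) (hv : IsViscSupersolution ℓ b σ f g h' φ ψ v)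
    (hτ : 0 < τ) (hξ : ℓ ξ ≤ 0) (huv : v τ ξ < u τ ξ) :
    ∃ κ : ℝ, ∀ ε > 0, ∀ J : ℕ → JetPair d, (∀ k, IsDoublingJetPair {x | ℓ x ≤ 0} T u v τ ξ A
      ((κ + ε) • gradVec ℓ ξ) ((κ - ε) • gradVec ℓ ξ) e ω (J k)) →
      Tendsto (fun k => (J k).err) atTop (𝓝 0) →
      ∀ᶠ k in atTop, Vop b σ f u (J k).t (J k).x (J k).p (J k).q (J k).X ≤
        Vop b σ f v (J k).s (J k).y (J k).p' (J k).q' (J k).Y := by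
  rcases hξ.lt_or_eq with hlt | hξ₀
  · refine ⟨0, fun ε _ J hJ herr => ?_⟩
    have hinside {z : ℕ → Fin d → ℝ} (hz : Tendsto z atTop (𝓝 ξ)) : ∀ᶠ k in atTop, ℓ (z k) < 0 :=
      ((hℓ.contDiff.continuous.tendsto ξ).comp hz).eventually_lt_const hlt
    exact IsDoublingJetPair.eventually_Vop_le_of_neumann hJ herr hu hv hφ hτ hξ huv
      ((hinside (IsDoublingJetPair.tendsto_x hJ herr)).mono fun k hk h₀ => absurd h₀ hk.ne)
      ((hinside (IsDoublingJetPair.tendsto_y hJ herr)).mono fun k hk h₀ => absurd h₀ hk.ne)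
  · have hB := (EReal.coe_toReal (hu.2.2.2.1 τ hτ ξ hξ₀) (hψbot _)).symm
    have hC := (EReal.coe_toReal (hv.2.2.2.1 τ hτ ξ hξ₀) (hψbot _)).symm
    have hn (c : ℝ) : dotp (gradVec ℓ ξ) (c • gradVec ℓ ξ) = c := by
      rw [dotp_smul_right, dotp_self, hℓ.eunorm_gradVec ξ hξ₀, one_pow, mul_one]
    refine ⟨_, fun ε hε J hJ herr => IsDoublingJetPair.eventually_Vop_le_of_neumann hJ herr hu hv
      hφ hτ hξ huv
      (IsDoublingJetPair.eventually_neumann_pos hJ herr hℓ hg hu.1 hψ hτ.le hξ₀ huv hB hC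
        ((lt_add_of_pos_right _ hε).trans_eq (hn _).symm))
      (IsDoublingJetPair.eventually_neumann_neg hJ herr hℓ hg hv.1 hψ hτ.le hξ₀ huv hB hC ?_)⟩
    rw [hn]
    linarith [hgdec τ hτ.le ξ hξ₀ huv.le]

end ObliqueJets

section MaximumPrinciple

lemma max_add_zero_sq_le (a h : ℝ) :
    max (a + h) 0 ^ 2 ≤ max a 0 ^ 2 + 2 * max a 0 * h + h ^ 2 := by
  rcases le_total (a + h) 0 with hah | hah
  · rw [max_eq_right hah]
    linarith [sq_nonneg (max a 0 + h), add_sq (max a 0) h]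
  · rw [max_eq_left hah, ← add_sq]
    gcongr
    exact le_max_left a 0

lemma abs_exp_sub_one_add_le_sq_mul (h : ℝ) : |Real.exp h - (1 + h)| ≤ h ^ 2 * Real.exp |h| := by
  have hC := Complex.norm_exp_sub_sum_le_norm_mul_exp h 2
  simp only [Finset.sum_range_succ, Finset.sum_range_zero, pow_zero, pow_one, Nat.factorial,
    Nat.cast_one, mul_one, div_one, zero_add] at hC
  rw [Complex.norm_real, Real.norm_eq_abs, sq_abs] at hC
  exact_mod_cast hC

lemma exists_exp_mul_le_add_sq (r T : ℝ) :
    ∃ N ≥ 0, ∀ t ∈ Set.Icc 0 T, ∀ τ ∈ Set.Icc 0 T, Real.exp (r * t) ≤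
      Real.exp (r * τ) + r * Real.exp (r * τ) * (t - τ) + N * (t - τ) ^ 2 := by
  refine ⟨Real.exp (|r| * T) * (r ^ 2 * Real.exp (|r| * T)), by positivity,
    fun t ht τ hτ => ?_⟩
  have hle : |t - τ| ≤ T := by
    rw [abs_le]
    constructor <;> linarith [ht.1, ht.2, hτ.1, hτ.2]
  have hsplit : r * t = r * τ + r * (t - τ) := by ring
  have htaylor : Real.exp (r * (t - τ)) ≤
      1 + r * (t - τ) + (r * (t - τ)) ^ 2 * Real.exp (|r| * T) := by
    have h := abs_exp_sub_one_add_le_sq_mul (r * (t - τ))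
    have hexp : Real.exp |r * (t - τ)| ≤ Real.exp (|r| * T) := by
      rw [abs_mul]
      gcongr
    linarith [(abs_le.1 h).2, mul_le_mul_of_nonneg_left hexp (sq_nonneg (r * (t - τ)))]
  have hbd : Real.exp (r * τ) ≤ Real.exp (|r| * T) :=
    Real.exp_le_exp.2 (mul_le_mul (le_abs_self r) hτ.2 hτ.1 (abs_nonneg r))
  rw [hsplit, Real.exp_add]
  calc Real.exp (r * τ) * Real.exp (r * (t - τ))
      ≤ Real.exp (r * τ) * (1 + r * (t - τ) + (r * (t - τ)) ^ 2 * Real.exp (|r| * T)) := by gcongr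
    _ = Real.exp (r * τ) + r * Real.exp (r * τ) * (t - τ) +
        Real.exp (r * τ) * (r ^ 2 * Real.exp (|r| * T)) * (t - τ) ^ 2 := by ring
    _ ≤ _ := by gcongr

lemma exists_exp_penalty {c T t₀ : ℝ} (hc : 0 ≤ c) (r : ℝ) (ht₀ : t₀ < T) :
    ∃ P : ℝ → ℝ, Continuous P ∧ (∀ t, c * Real.exp (r * t) ≤ P t) ∧
      P t₀ = c * Real.exp (r * t₀) ∧ P T = c * Real.exp (r * T) + c ∧
      ∀ τ ∈ Set.Icc 0 T, ∃ A ≥ r * (c * Real.exp (r * τ)), ∃ N ≥ 0, ∀ t ∈ Set.Icc 0 T,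
        P t ≤ P τ + (A * (t - τ) + N * (t - τ) ^ 2) := by
  obtain ⟨N₀, hN₀, hexp⟩ := exists_exp_mul_le_add_sq r T
  set N := c / (T - t₀) ^ 2
  have hN : 0 ≤ N := by positivity
  refine ⟨fun t => c * Real.exp (r * t) + N * max (t - t₀) 0 ^ 2, by fun_prop,
    fun t => le_add_of_nonneg_right (by positivity), by simp, ?_,
    fun τ hτ => ⟨c * (r * Real.exp (r * τ)) + N * (2 * max (τ - t₀) 0), ?_, c * N₀ + N,
      by positivity, fun t ht => ?_⟩⟩
  · have hne : T - t₀ ≠ 0 := (sub_pos.2 ht₀).ne'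
    simp only [max_eq_left (sub_pos.2 ht₀).le, N]
    field_simp
  · have : 0 ≤ N * (2 * max (τ - t₀) 0) := by positivity
    linarith
  · have h₁ := mul_le_mul_of_nonneg_left (hexp t ht τ hτ) hc
    have h₂ := mul_le_mul_of_nonneg_left (max_add_zero_sq_le (τ - t₀) (t - τ)) hN
    rw [show τ - t₀ + (t - τ) = t - t₀ by ring] at h₂
    linarith

variable {E : Type*} [TopologicalSpace E] {K : Set E} {T α C : ℝ} {w : ℝ → E → ℝ} {ρ : E → ℝ}

lemma exists_le_mul_exp_of_pos (hK : IsCompact K)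
    (hw : ContinuousOn (fun z : ℝ × E => w z.1 z.2) (Set.Icc 0 T ×ˢ K))
    (hpos : ∃ t ∈ Set.Ico 0 T, ∃ x ∈ K, 0 < w t x) (r : ℝ) :
    ∃ c > 0, (∀ t ∈ Set.Icc 0 T, ∀ x ∈ K, w t x ≤ c * Real.exp (r * t)) ∧
      ∃ t ∈ Set.Ico 0 T, ∃ x ∈ K, c * Real.exp (r * t) - c / 4 < w t x := by
  obtain ⟨t₀, ht₀, x₀, hx₀, hw₀⟩ := hpos
  have hcont : ContinuousOn (fun z : ℝ × E => w z.1 z.2 * Real.exp (-(r * z.1)))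
      (Set.Icc 0 T ×ˢ K) := hw.mul (by fun_prop)
  obtain ⟨⟨t₁, x₁⟩, ⟨ht₁, hx₁⟩, hmax⟩ := (isCompact_Icc.prod hK).exists_isMaxOn
    ⟨(t₀, x₀), Set.Ico_subset_Icc_self ht₀, hx₀⟩ hcont
  set c := w t₁ x₁ * Real.exp (-(r * t₁)) with hc_def
  have hle (t : ℝ) (ht : t ∈ Set.Icc 0 T) (x : E) (hx : x ∈ K) :
      w t x * Real.exp (-(r * t)) ≤ c :=
    hmax (show (t, x) ∈ Set.Icc 0 T ×ˢ K from ⟨ht, hx⟩)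
  have hc : 0 < c := (mul_pos hw₀ (Real.exp_pos _)).trans_le
    (hle t₀ (Set.Ico_subset_Icc_self ht₀) x₀ hx₀)
  refine ⟨c, hc, fun t ht x hx => ?_, ?_⟩
  · have h := hle t ht x hx
    rwa [Real.exp_neg, ← div_eq_mul_inv, div_le_iff₀ (Real.exp_pos _)] at h
  have hcont₁ : ContinuousWithinAt (fun t => w t x₁ - c * Real.exp (r * t)) (Set.Icc 0 T) t₁ :=
    ((hw.comp (f := fun t => (t, x₁)) (by fun_prop) fun t ht => ⟨ht, hx₁⟩).sub
      (by fun_prop)) t₁ ht₁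
  have hzero : -(c / 4) < w t₁ x₁ - c * Real.exp (r * t₁) := by
    rw [hc_def, mul_assoc, ← Real.exp_add, neg_add_cancel, Real.exp_zero, mul_one, sub_self,
      ← hc_def]
    linarith
  have : (𝓝[Set.Ico 0 T] t₁).NeBot := mem_closure_iff_nhdsWithin_neBot.1 <| by
    rwa [closure_Ico (ht₀.1.trans_lt ht₀.2).ne]
  obtain ⟨t, hlt, ht⟩ := (((hcont₁.mono Set.Ico_subset_Icc_self).eventually
    (lt_mem_nhds hzero)).and self_mem_nhdsWithin).exists
  exact ⟨t, ht, x₁, hx₁, by linarith⟩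

/-- The factor `exp (r * t)` produces the large slope `A`, and a quadratic penalty that starts at
some `t₀ < T` keeps the touching point away from the final time. -/
lemma exists_touching_of_pos (hK : IsCompact K)
    (hw : ContinuousOn (fun z : ℝ × E => w z.1 z.2) (Set.Icc 0 T ×ˢ K))
    (hw₀ : ∀ x ∈ K, w 0 x ≤ 0) (hρ : ContinuousOn ρ K)
    (hpos : ∃ t ∈ Set.Ico 0 T, ∃ x ∈ K, 0 < w t x) {r : ℝ} (hr : 0 ≤ r) :
    ∃ c > 0, ∀ᶠ ε in 𝓝[>] 0, ∃ τ ∈ Set.Ioo 0 T, ∃ ξ ∈ K, c ≤ w τ ξ ∧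
      ∃ A ≥ r * w τ ξ, ∃ N ≥ 0, ∀ t ∈ Set.Icc 0 T, ∀ x ∈ K,
        w t x ≤ w τ ξ + (A * (t - τ) + N * (t - τ) ^ 2 + ε * (ρ x - ρ ξ)) := by
  obtain ⟨c, hc, hle, t₀, ht₀, x₀, hx₀, hlt⟩ := exists_le_mul_exp_of_pos hK hw hpos r
  obtain ⟨P, hPcont, hP, hP₀, hPT, hPτ⟩ := exists_exp_penalty hc.le r ht₀.2
  obtain ⟨R, hR⟩ := hK.exists_bound_of_continuousOn hρ
  have hε_small : ∀ᶠ ε in 𝓝[>] (0 : ℝ), ε * (2 * R) < c / 4 :=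
    ((continuous_mul_const (2 * R)).tendsto' 0 0 (zero_mul _)).mono_left nhdsWithin_le_nhds
      |>.eventually_lt_const (by positivity)
  refine ⟨c / 2, by positivity, ?_⟩
  filter_upwards [hε_small, self_mem_nhdsWithin] with ε hεR (hε : 0 < ε)
  have hcont : ContinuousOn (fun z : ℝ × E => w z.1 z.2 - (P z.1 + ε * ρ z.2))
      (Set.Icc 0 T ×ˢ K) :=
    hw.sub ((hPcont.comp continuous_fst).continuousOn.add (continuousOn_const.mul
      (hρ.comp continuousOn_snd fun z hz => hz.2)))
  obtain ⟨⟨τ, ξ⟩, ⟨hτ, hξ⟩, hmax⟩ := (isCompact_Icc.prod hK).exists_isMaxOn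
    ⟨(t₀, x₀), Set.Ico_subset_Icc_self ht₀, hx₀⟩ hcont
  replace hmax (t : ℝ) (ht : t ∈ Set.Icc 0 T) (x : E) (hx : x ∈ K) :
      w t x - (P t + ε * ρ x) ≤ w τ ξ - (P τ + ε * ρ ξ) :=
    hmax (show (t, x) ∈ Set.Icc 0 T ×ˢ K from ⟨ht, hx⟩)
  have hosc : ε * (ρ x₀ - ρ ξ) ≤ ε * (2 * R) := mul_le_mul_of_nonneg_left
    (by linarith [(abs_le.1 (hR x₀ hx₀)).2, (abs_le.1 (hR ξ hξ)).1]) hε.le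
  have hwP : P τ - c / 2 ≤ w τ ξ := by
    linarith [hmax t₀ (Set.Ico_subset_Icc_self ht₀) x₀ hx₀]
  have hcexp : c ≤ c * Real.exp (r * τ) :=
    le_mul_of_one_le_right hc.le (Real.one_le_exp (mul_nonneg hr hτ.1))
  have hcw : c / 2 ≤ w τ ξ := by linarith [hP τ]
  have hτ₀ : τ ≠ 0 := fun h => by linarith [h ▸ hcw, hw₀ ξ hξ]
  have hτT : τ ≠ T := fun h => by
    subst h
    linarith [hle τ hτ ξ hξ]
  obtain ⟨A, hA, N, hN, hA_touch⟩ := hPτ τ hτ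
  exact ⟨τ, ⟨hτ.1.lt_of_ne' hτ₀, hτ.2.lt_of_ne hτT⟩, ξ, hξ, hcw, A,
    (mul_le_mul_of_nonneg_left (hle τ hτ ξ hξ) hr).trans hA, N, hN,
    fun t ht x hx => by linarith [hmax t ht x hx, hA_touch t ht]⟩

theorem nonpos_of_forall_touching_le (hK : IsCompact K)
    (hw : ContinuousOn (fun z : ℝ × E => w z.1 z.2) (Set.Icc 0 T ×ˢ K))
    (hw₀ : ∀ x ∈ K, w 0 x ≤ 0) (hρ : ContinuousOn ρ K)
    (htouch : ∀ τ ∈ Set.Ioo 0 T, ∀ ξ ∈ K, 0 < w τ ξ → ∀ A N ε, 0 ≤ N → 0 < ε →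
      (∀ t ∈ Set.Icc 0 T, ∀ x ∈ K, w t x ≤
        w τ ξ + (A * (t - τ) + N * (t - τ) ^ 2 + ε * (ρ x - ρ ξ))) →
      A ≤ α * w τ ξ + C * ε) :
    ∀ t ∈ Set.Ico 0 T, ∀ x ∈ K, w t x ≤ 0 := by
  by_contra! hpos
  obtain ⟨c, hc, hev⟩ := exists_touching_of_pos hK hw hw₀ hρ hpos
    (show 0 ≤ |α| + 1 by positivity)
  have hle : ∀ᶠ ε in 𝓝[>] (0 : ℝ), c ≤ C * ε := by
    filter_upwards [hev, self_mem_nhdsWithin] with ε ⟨τ, hτ, ξ, hξ, hcw, A, hA, N, hN, hmax⟩ hε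
    have h₁ := htouch τ hτ ξ hξ (hc.trans_le hcw) A N ε hN hε hmax
    have h₂ := mul_le_mul_of_nonneg_right (le_abs_self α) (hc.le.trans hcw)
    linarith
  exact hc.not_ge (ge_of_tendsto (((continuous_const_mul C).tendsto' 0 0 (mul_zero _)).mono_left
    nhdsWithin_le_nhds) hle)

end MaximumPrinciple

section Comparison

variable {d : ℕ} {ℓ : (Fin d → ℝ) → ℝ} {T τ A N ε e α L β : ℝ} {u v : ℝ → (Fin d → ℝ) → ℝ}
  {b : ℝ → (Fin d → ℝ) → (Fin d → ℝ)} {σ : ℝ → (Fin d → ℝ) → Matrix (Fin d) (Fin d) ℝ}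
  {f : ℝ → (Fin d → ℝ) → ℝ → (Fin d → ℝ) → ℝ} {g : ℝ → (Fin d → ℝ) → ℝ → ℝ}
  {h h' : (Fin d → ℝ) → ℝ} {φ ψ : ℝ → EReal} {m : ℝ → ℝ} {ξ : Fin d → ℝ}

section TouchingPoint

variable (hℓ : IsDefiningFunction ℓ)
  (hc : RegularCoefficients {x | ℓ x ≤ 0} T b σ f α L β m)
  (hg : ContinuousOn (fun p : ℝ × (Fin d → ℝ) × ℝ => g p.1 p.2.1 p.2.2)
    (Set.Ici 0 ×ˢ {x | ℓ x = 0} ×ˢ Set.univ))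
  (hgdec : ∀ t ≥ (0 : ℝ), ∀ x, ℓ x = 0 → Antitone (g t x)) (hφ : ∀ r, φ r ≠ ⊥)
  (hψ : LowerSemicontinuous ψ) (hψbot : ∀ r, ψ r ≠ ⊥)
  (hu : IsViscSubsolution ℓ b σ f g h φ ψ u) (hv : IsViscSupersolution ℓ b σ f g h' φ ψ v)

include hℓ hc hg hgdec hφ hψ hψbot hu hv

lemma le_of_sub_le_dotp_gradVec (hτ : τ ∈ Set.Ioo 0 T) (hξ : ℓ ξ ≤ 0) (huv : v τ ξ < u τ ξ)
    (hN : 0 ≤ N) (hε : 0 < ε) (he : 0 < e)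
    (hmax : ∀ t ∈ Set.Icc 0 T, ∀ x, ℓ x ≤ 0 → u t x - v t x ≤ u τ ξ - v τ ξ +
      (A * (t - τ) + N * (t - τ) ^ 2 + ε * dotp (gradVec ℓ ξ) (x - ξ) +
        e * eunorm (x - ξ) ^ 2)) :
    A ≤ 4 * e * matNorm (σ τ ξ) ^ 2 + ε * dotp (b τ ξ) (gradVec ℓ ξ) +
      α * (u τ ξ - v τ ξ) + β * (ε * (eunorm (gradVec ℓ ξ) * matNorm (σ τ ξ))) := by
  have hsub : Set.Icc 0 T ×ˢ {x | ℓ x ≤ 0} ⊆ Set.Ici (0 : ℝ) ×ˢ {x | ℓ x ≤ 0} :=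
    Set.prod_mono_left Set.Icc_subset_Ici_self
  have hucont := hu.1.mono hsub
  have hvcont := hv.1.mono hsub
  obtain ⟨R, hR⟩ := (isCompact_Icc.prod hℓ.isCompact).exists_bound_of_continuousOn hvcont
  obtain ⟨ω, hω⟩ := hc.exists_isTimeModulus R
  obtain ⟨κ, hκ⟩ := exists_slope_forall_eventually_Vop_le (T := T) (A := A) (e := e) (ω := ω) hℓ hg
    hgdec hφ hψ hψbot hu hv hτ.1 hξ huv
  have hslope : (κ + ε / 2) • gradVec ℓ ξ - (κ - ε / 2) • gradVec ℓ ξ = ε • gradVec ℓ ξ := by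
    rw [← sub_smul]
    ring_nf
  have hex (k : ℕ) := exists_isDoublingJetPair (A := A) (N := N) (e := e) (ω := ω)
    (ν := (κ + ε / 2) • gradVec ℓ ξ) (ν' := (κ - ε / 2) • gradVec ℓ ξ)
    (δ := min (1 / ((k : ℝ) + 1)) (T - τ)) hℓ.isCompact hucont hvcont
    (Set.Ioo_subset_Ico_self hτ) hξ hN he
    (by simpa only [hslope, dotp_smul_left] using! hmax) hω.pos
    (lt_min Nat.one_div_pos_of_nat (sub_pos.2 hτ.2)) (min_le_right _ _)
  choose J herr hJ using hex
  have herr₀ : Tendsto (fun k => (J k).err) atTop (𝓝 0) := by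
    simpa [herr, (sub_pos.2 hτ.2).le] using
      tendsto_one_div_add_atTop_nhds_zero_nat.min (tendsto_const_nhds (x := T - τ))
  have h := IsDoublingJetPair.le_of_eventually_Vop_le hJ herr₀ hc hω
    (Set.Ioo_subset_Icc_self hτ) hξ hucont hvcont huv (fun t ht x hx => hR (t, x) ⟨ht, hx⟩)
    (hκ (ε / 2) (half_pos hε) J hJ herr₀)
  rwa [hslope, dotp_smul_right, eunorm_smul, abs_of_pos hε, mul_assoc ε] at h

lemma exists_forall_touching_le : ∃ C, ∀ τ ∈ Set.Ioo 0 T, ∀ ξ ∈ {x | ℓ x ≤ 0},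
    0 < u τ ξ - v τ ξ → ∀ A N ε, 0 ≤ N → 0 < ε →
    (∀ t ∈ Set.Icc 0 T, ∀ x ∈ {x | ℓ x ≤ 0}, u t x - v t x ≤
      u τ ξ - v τ ξ + (A * (t - τ) + N * (t - τ) ^ 2 + ε * (ℓ x - ℓ ξ))) →
    A ≤ α * (u τ ξ - v τ ξ) + C * ε := by
  obtain ⟨Λ, hΛ, htaylor⟩ := hℓ.exists_abs_sub_sub_dotp_le
  have hn : ContinuousOn (fun z : ℝ × (Fin d → ℝ) => gradVec ℓ z.2)
      (Set.Icc 0 T ×ˢ {x | ℓ x ≤ 0}) := (hℓ.continuous_gradVec.comp continuous_snd).continuousOn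
  have hσ := continuous_matNorm.comp_continuousOn hc.continuousOn_σ
  obtain ⟨C, hC⟩ := (isCompact_Icc.prod hℓ.isCompact).bddAbove_image
    ((((hσ.pow 2).const_mul (4 * (Λ + 1))).add
      (continuous_dotp.comp_continuousOn (hc.continuousOn_b.prodMk hn))).add
      (((continuous_eunorm.comp_continuousOn hn).mul hσ).const_mul β))
  refine ⟨C, fun τ hτ ξ hξ huv A N ε hN hε hmax => ?_⟩
  have hle := le_of_sub_le_dotp_gradVec (A := A) hℓ hc hg hgdec hφ hψ hψbot hu hv hτ hξ
    (sub_pos.1 huv) hN hε (show 0 < ε * (Λ + 1) by positivity) fun t ht x hx => ?_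
  · have hbound : 4 * (Λ + 1) * matNorm (σ τ ξ) ^ 2 + dotp (b τ ξ) (gradVec ℓ ξ) +
        β * (eunorm (gradVec ℓ ξ) * matNorm (σ τ ξ)) ≤ C :=
      hC ⟨(τ, ξ), ⟨Set.Ioo_subset_Icc_self hτ, hξ⟩, rfl⟩
    linarith [mul_le_mul_of_nonneg_right hbound hε.le]
  · have h₁ := mul_le_mul_of_nonneg_left (abs_le.1 (htaylor ξ hξ x hx)).2 hε.le
    have h₂ : 0 ≤ ε * eunorm (x - ξ) ^ 2 := by positivity
    linarith [hmax t ht x hx]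

end TouchingPoint

namespace IsViscSubsolution

theorem le_of_isViscSupersolution (hu : IsViscSubsolution ℓ b σ f g h φ ψ u)
    (hv : IsViscSupersolution ℓ b σ f g h' φ ψ v) (hh : ∀ x, ℓ x ≤ 0 → h x ≤ h' x)
    (hℓ : IsDefiningFunction ℓ)
    (hc : ∀ T > 0, ∃ α L β m, RegularCoefficients {x | ℓ x ≤ 0} T b σ f α L β m)
    (hg : ContinuousOn (fun p : ℝ × (Fin d → ℝ) × ℝ => g p.1 p.2.1 p.2.2)
      (Set.Ici 0 ×ˢ {x | ℓ x = 0} ×ˢ Set.univ))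
    (hgdec : ∀ t ≥ (0 : ℝ), ∀ x, ℓ x = 0 → Antitone (g t x)) (hφ : ∀ r, φ r ≠ ⊥)
    (hψ : LowerSemicontinuous ψ) (hψbot : ∀ r, ψ r ≠ ⊥) {t : ℝ} (ht : 0 ≤ t)
    {x : Fin d → ℝ} (hx : ℓ x ≤ 0) : u t x ≤ v t x := by
  obtain ⟨α, L, β, m, hc⟩ := hc (t + 1) (by linarith)
  obtain ⟨C, htouch⟩ := exists_forall_touching_le hℓ hc hg hgdec hφ hψ hψbot hu hv
  have hsub : Set.Icc 0 (t + 1) ×ˢ {x | ℓ x ≤ 0} ⊆ Set.Ici (0 : ℝ) ×ˢ {x | ℓ x ≤ 0} :=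
    Set.prod_mono_left Set.Icc_subset_Ici_self
  refine sub_nonpos.1 (nonpos_of_forall_touching_le (w := fun t x => u t x - v t x) hℓ.isCompact
    ((hu.1.mono hsub).sub (hv.1.mono hsub)) (fun y hy => ?_)
    hℓ.contDiff.continuous.continuousOn htouch t ⟨ht, lt_add_one t⟩ x hx)
  rw [hu.2.1 y hy, hv.2.1 y hy]
  exact sub_nonpos.2 (hh y hy)

end IsViscSubsolution

theorem pvi_uniqueness_general (hℓ : IsDefiningFunction ℓ)
    (hc : ∀ T > 0, ∃ α L β m, RegularCoefficients {x | ℓ x ≤ 0} T b σ f α L β m)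
    (hg : ContinuousOn (fun p : ℝ × (Fin d → ℝ) × ℝ => g p.1 p.2.1 p.2.2)
      (Set.Ici 0 ×ˢ {x | ℓ x = 0} ×ˢ Set.univ))
    (hgdec : ∀ t ≥ (0 : ℝ), ∀ x, ℓ x = 0 → Antitone (g t x)) (hφ : ∀ r, φ r ≠ ⊥)
    (hψ : LowerSemicontinuous ψ) (hψbot : ∀ r, ψ r ≠ ⊥) (u v : ℝ → (Fin d → ℝ) → ℝ)
    (hu : IsViscSubsolution ℓ b σ f g h φ ψ u) (hu' : IsViscSupersolution ℓ b σ f g h φ ψ u)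
    (hv : IsViscSubsolution ℓ b σ f g h φ ψ v) (hv' : IsViscSupersolution ℓ b σ f g h φ ψ v)
    (t : ℝ) (ht : 0 ≤ t) (x : Fin d → ℝ) (hx : ℓ x ≤ 0) : u t x = v t x :=
  le_antisymm
    (hu.le_of_isViscSupersolution hv' (fun _ _ => le_rfl) hℓ hc hg hgdec hφ hψ hψbot ht hx)
    (hv.le_of_isViscSupersolution hu' (fun _ _ => le_rfl) hℓ hc hg hgdec hφ hψ hψbot ht hx)

end Comparison

/-- **Uniqueness of the viscosity solution** (Theorem 3 of Maticiuc–Răşcanu):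
under the standing assumptions, if moreover `r ↦ g(t,x,r)` is decreasing on the
boundary and `f` admits a modulus of continuity in the space variable, then the
viscosity solution of the parabolic variational inequality is unique. -/
theorem pvi_uniqueness
    {d : ℕ}
    (ℓ : (Fin d → ℝ) → ℝ)
    (b : ℝ → (Fin d → ℝ) → (Fin d → ℝ))
    (σ : ℝ → (Fin d → ℝ) → Matrix (Fin d) (Fin d) ℝ)
    (f : ℝ → (Fin d → ℝ) → ℝ → (Fin d → ℝ) → ℝ)
    (g : ℝ → (Fin d → ℝ) → ℝ → ℝ)
    (h : (Fin d → ℝ) → ℝ)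
    (φ ψ : ℝ → EReal)
    -- the domain `D = {ℓ < 0}`, with boundary `Bd(D) = {ℓ = 0}`
    (hℓreg : ContDiff ℝ 3 ℓ) (hℓbdd : ∃ C : ℝ, ∀ x, |ℓ x| ≤ C)
    (hℓnorm : ∀ x, ℓ x = 0 → eunorm (gradVec ℓ x) = 1)
    (hDconn : IsConnected {x : Fin d → ℝ | ℓ x < 0})
    (hDbdd : Bornology.IsBounded {x : Fin d → ℝ | ℓ x < 0})
    -- continuity of the data
    (hb : ContinuousOn (fun p : ℝ × (Fin d → ℝ) => b p.1 p.2)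
      (Set.Ici 0 ×ˢ Set.univ))
    (hσ : ContinuousOn (fun p : ℝ × (Fin d → ℝ) => σ p.1 p.2)
      (Set.Ici 0 ×ˢ Set.univ))
    (hf : ContinuousOn
      (fun p : ℝ × (Fin d → ℝ) × ℝ × (Fin d → ℝ) => f p.1 p.2.1 p.2.2.1 p.2.2.2)
      (Set.Ici 0 ×ˢ {x | ℓ x ≤ 0} ×ˢ Set.univ ×ˢ Set.univ))
    (hg : ContinuousOn (fun p : ℝ × (Fin d → ℝ) × ℝ => g p.1 p.2.1 p.2.2)
      (Set.Ici 0 ×ˢ {x | ℓ x = 0} ×ˢ Set.univ))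
    (hh : ContinuousOn h {x | ℓ x ≤ 0})
    -- quantitative assumptions on `b, σ, f, g`
    (hq : ∀ T > (0:ℝ), ∃ α L β γ : ℝ, 0 ≤ L ∧ 0 ≤ β ∧ 0 ≤ γ ∧
      (∀ t ∈ Set.Icc (0:ℝ) T, ∀ x x' : Fin d → ℝ,
        eunorm (b t x - b t x') + matNorm (σ t x - σ t x') ≤ L * eunorm (x - x')) ∧
      (∀ t ∈ Set.Icc (0:ℝ) T, ∀ x, ℓ x ≤ 0 → ∀ y y' : ℝ, ∀ z : Fin d → ℝ,
        (y - y') * (f t x y z - f t x y' z) ≤ α * (y - y')^2) ∧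
      (∀ t ∈ Set.Icc (0:ℝ) T, ∀ x, ℓ x ≤ 0 → ∀ y : ℝ, ∀ z z' : Fin d → ℝ,
        |f t x y z - f t x y z'| ≤ β * eunorm (z - z')) ∧
      (∀ t ∈ Set.Icc (0:ℝ) T, ∀ x, ℓ x ≤ 0 → ∀ y : ℝ,
        |f t x y 0| ≤ γ * (1 + |y|)) ∧
      (∀ t ∈ Set.Icc (0:ℝ) T, ∀ x, ℓ x = 0 → ∀ y y' : ℝ,
        (y - y') * (g t x y - g t x y') ≤ α * (y - y')^2) ∧
      (∀ t ∈ Set.Icc (0:ℝ) T, ∀ x, ℓ x = 0 → ∀ y : ℝ,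
        |g t x y| ≤ γ * (1 + |y|)))
    -- assumptions on `φ, ψ`
    (hφ : ProperConvexLsc φ) (hψ : ProperConvexLsc ψ)
    (hφ0 : φ 0 = 0) (hψ0 : ψ 0 = 0)
    (hφpos : ∀ y : ℝ, 0 ≤ φ y) (hψpos : ∀ y : ℝ, 0 ≤ ψ y)
    (hM : ∃ M : ℝ, 0 < M ∧ (∀ x, ℓ x ≤ 0 → φ (h x) ≤ (M : EReal)) ∧
      (∀ x, ℓ x = 0 → ψ (h x) ≤ (M : EReal)))
    -- compatibility assumptions, expressed through the Yosida approximations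
    -- `U = ∇φ_ε(y)`, `V = ∇ψ_ε(y)` (the unique solutions of `U ∈ ∂φ(y−εU)`,
    -- `V ∈ ∂ψ(y−εV)`)
    (hcompat : ∀ ε > (0:ℝ), ∀ t ≥ (0:ℝ), ∀ x, ℓ x = 0 → ∀ x', ℓ x' ≤ 0 →
      ∀ y : ℝ, ∀ zv : Fin d → ℝ, ∀ U V : ℝ,
        U ∈ subd φ (y - ε * U) → V ∈ subd ψ (y - ε * V) →
        U * g t x y ≤ max 0 (V * g t x y) ∧
        V * f t x' y zv ≤ max 0 (U * f t x' y zv))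
    -- additional assumptions for uniqueness
    (hgdec : ∀ t ≥ (0:ℝ), ∀ x, ℓ x = 0 → ∀ r r' : ℝ, r ≤ r' → g t x r' ≤ g t x r)
    (m : ℝ → ℝ)
    (hmcont : ContinuousOn m (Set.Ici 0)) (hm0 : m 0 = 0)
    (hmpos : ∀ r : ℝ, 0 ≤ r → 0 ≤ m r)
    (hfm : ∀ t ≥ (0:ℝ), ∀ x y : Fin d → ℝ, ℓ x ≤ 0 → ℓ y ≤ 0 →
      ∀ r : ℝ, ∀ p : Fin d → ℝ,
        |f t x r p - f t y r p| ≤ m (eunorm (x - y) * (1 + eunorm p))) :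
    ∀ u v : ℝ → (Fin d → ℝ) → ℝ,
      IsViscSubsolution ℓ b σ f g h φ ψ u → IsViscSupersolution ℓ b σ f g h φ ψ u →
      IsViscSubsolution ℓ b σ f g h φ ψ v → IsViscSupersolution ℓ b σ f g h φ ψ v →
      ∀ t : ℝ, 0 ≤ t → ∀ x : Fin d → ℝ, ℓ x ≤ 0 → u t x = v t x := by
  have hℓ : IsDefiningFunction ℓ := ⟨hℓreg.of_le (by norm_num), hℓnorm, hDbdd⟩
  refine pvi_uniqueness_general hℓ (fun T hT => ?_) hg hgdec hφ.2.1 hψ.2.2.1 hψ.2.1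
  obtain ⟨α, L, β, -, -, hβ, -, hLip, hfα, hfβ, -⟩ := hq T hT
  have hIci : Set.Icc 0 T ⊆ Set.Ici 0 := Set.Icc_subset_Ici_self
  have hm : Tendsto m (𝓝[≥] 0) (𝓝 0) := by
    simpa only [hm0] using (hmcont 0 Set.self_mem_Ici).tendsto
  exact ⟨α, L, β, m,
    { isCompact := hℓ.isCompact
      continuousOn_b := hb.mono (Set.prod_mono hIci (Set.subset_univ _))
      continuousOn_σ := hσ.mono (Set.prod_mono hIci (Set.subset_univ _))
      continuousOn_f := hf.mono (Set.prod_mono_left hIci)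
      lipschitz := fun t ht x _ y _ => hLip t ht x y
      mul_f_sub_le := hfα
      nonneg_β := hβ
      abs_f_sub_le := hfβ
      abs_f_sub_le_modulus := fun t ht x hx y hy => hfm t ht.1 x y hx hy
      tendsto_m := hm }⟩
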